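/- For every integer K > 1 there exists a C^K diffeomorphism T of the torus 𝕋² preserving the Haar–Lebesgue probability measure λ such that T is weakly mixing with respect to λ and the upper topological slow entropy of T with respect to the polynomial scaling family a^{pol}_m(t) = m^t satisfies 1/K⁵ ≤ ent̄^top_{a^{pol}}(T) < 1/(K⁵−2). -/

import Mathlib

open MeasureTheory Filter Set
open scoped Topology ENNReal NNReal

noncomputable section

/-- The Bowen metric `d_n^T(x,y) = max_{0 ≤ i ≤ n-1} d(T^i x, T^i y)`. -/
def bowenDist {X : Type*} [PseudoMetricSpace X] (T : X → X) (n : ℕ) (x y : X) : ℝ :=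
  (((Finset.range n).sup fun i => nndist (T^[i] x) (T^[i] y)) : ℝ≥0)

/-- `N_{d_n^T}(ε)`: the minimal number of `(ε,n)`-Bowen balls of `T` needed to cover the
whole space. -/
def bowenCoverNum {X : Type*} [PseudoMetricSpace X] (T : X → X) (n : ℕ) (ε : ℝ) : ℕ :=
  sInf {N : ℕ | ∃ F : Finset X, F.card = N ∧ ∀ y : X, ∃ x ∈ F, bowenDist T n x y < ε}

/-- `N(ε)`: the supremum (`0` if the set is empty, by the `Real.sSup` convention) of all
`t > 0` such that `limsup_n N_{d_n^T}(ε) / a_n(t) > 0`. -/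
def topSlowEntFun {X : Type*} [PseudoMetricSpace X] (T : X → X) (a : ℕ → ℝ → ℝ) (ε : ℝ) : ℝ :=
  sSup {t : ℝ | 0 < t ∧
    0 < Filter.atTop.limsup fun n => (bowenCoverNum T n ε : ℝ≥0∞) / ENNReal.ofReal (a n t)}

/-- The upper topological slow entropy of `T` with respect to the scaling family `a`
equals `E`, i.e. `N(ε) → E` as `ε → 0⁺`. -/
def HasUpperTopSlowEntropy {X : Type*} [PseudoMetricSpace X] (T : X → X)
    (a : ℕ → ℝ → ℝ) (E : ℝ) : Prop :=
  Filter.Tendsto (topSlowEntFun T a) (𝓝[>] (0 : ℝ)) (𝓝 E)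

/-- The circle `𝕋¹ = ℝ/ℤ` with its quotient metric and Haar–Lebesgue probability
measure `volume`. -/
abbrev Torus1 : Type := AddCircle (1 : ℝ)

/-- The 2-torus `𝕋² = ℝ²/ℤ²`, with its quotient (flat) metric, its Borel σ-algebra and
its Haar–Lebesgue probability measure `volume`. -/
abbrev Torus2 : Type := AddCircle (1 : ℝ) × AddCircle (1 : ℝ)

/-- Canonical projection `ℝ² → 𝕋²`. -/
def torusProj : ℝ × ℝ → Torus2 := fun p => ((p.1 : Torus1), (p.2 : Torus1))

/-- `F : ℝ² → ℝ²` is a lift of `T : 𝕋² → 𝕋²`. -/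
def IsLiftOf (F : ℝ × ℝ → ℝ × ℝ) (T : Torus2 → Torus2) : Prop :=
  ∀ p, torusProj (F p) = T (torusProj p)

/-- `T` is a `C^k` diffeomorphism of the torus: it is a bijection and both `T` and `T⁻¹`
admit `C^k` lifts to the universal cover `ℝ²`. -/
def IsCkTorusDiffeo (k : ℕ∞) (T : Torus2 → Torus2) : Prop :=
  Function.Bijective T ∧
  (∃ F : ℝ × ℝ → ℝ × ℝ, ContDiff ℝ k F ∧ IsLiftOf F T) ∧
  (∃ G : ℝ × ℝ → ℝ × ℝ, ContDiff ℝ k G ∧ IsLiftOf G (Function.invFun T))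

/-- `T` is weakly mixing w.r.t. the measure `μ`: `T × T` is ergodic for `μ × μ`. -/
def WeaklyMixing {X : Type*} [MeasurableSpace X] (T : X → X) (μ : Measure X) : Prop :=
  Ergodic (fun p : X × X => (T p.1, T p.2)) (μ.prod μ)

/-- `T` is uniquely ergodic with the Haar–Lebesgue measure `volume` as its unique
invariant Borel probability measure. -/
def UniquelyErgodicWithVolume (T : Torus2 → Torus2) : Prop :=
  MeasurePreserving T volume volume ∧
  ∀ μ : Measure Torus2, IsProbabilityMeasure μ → MeasurePreserving T μ μ → μ = volume

/-- `T` (preserving the Haar measure `volume` on `𝕋²`) is measure-theoretically isomorphic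
to the rotation of the circle `𝕋¹ = ℝ/ℤ` by some irrational number `α`. -/
def IsoToIrrationalRotation (T : Torus2 → Torus2) : Prop :=
  ∃ α : ℝ, Irrational α ∧
    ∃ (A : Set Torus2) (B : Set Torus1) (ψ : Torus2 → Torus1) (φ : Torus1 → Torus2),
      MeasurableSet A ∧ MeasurableSet B ∧
      volume Aᶜ = 0 ∧ volume Bᶜ = 0 ∧
      Set.MapsTo T A A ∧ Set.MapsTo (fun y : Torus1 => y + (α : Torus1)) B B ∧
      Measurable ψ ∧ Measurable φ ∧
      Set.MapsTo ψ A B ∧ Set.MapsTo φ B A ∧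
      (∀ x ∈ A, φ (ψ x) = x) ∧ (∀ y ∈ B, ψ (φ y) = y) ∧
      Measure.map ψ volume = volume ∧
      (∀ x ∈ A, ψ (T x) = ψ x + (α : Torus1))

/-- A finite measurable partition of `X`. -/
structure FinMeasPartition (X : Type*) [MeasurableSpace X] where
  card : ℕ
  piece : Fin card → Set X
  measurable : ∀ i, MeasurableSet (piece i)
  disjoint : Pairwise fun i j => Disjoint (piece i) (piece j)
  cover : (⋃ i, piece i) = Set.univ

open Classical in
/-- The normalized Hamming distance between the length-`n` `P`-codings of the `T`-orbits
of `x` and `y` (the codings differ at time `k` iff `T^k x` and `T^k y` lie in different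
pieces of `P`). -/
def codeHammingDist {X : Type*} [MeasurableSpace X] (T : X → X) (P : FinMeasPartition X)
    (n : ℕ) (x y : X) : ℝ :=
  (((Finset.range n).filter fun k =>
      ¬ ∃ i, T^[k] x ∈ P.piece i ∧ T^[k] y ∈ P.piece i).card : ℝ) / n

/-- `S^H_P(T,n,ε)`: the minimal number of `(ε,n)`-Hamming balls whose union has
`μ`-measure greater than `1 - ε`. -/
def hammingCoverNum {X : Type*} [MeasurableSpace X] (μ : Measure X) (T : X → X)
    (P : FinMeasPartition X) (n : ℕ) (ε : ℝ) : ℕ :=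
  sInf {N : ℕ | ∃ F : Finset X, F.card = N ∧
    ENNReal.ofReal (1 - ε) < μ (⋃ x ∈ F, {y | codeHammingDist T P n x y < ε})}

/-- For a fixed partition `P` and `ε > 0`: the supremum (with the `Real.sSup` convention,
`0` if the set is empty) of all `t > 0` with `limsup_n S^H_P(T,n,ε)/a_n(t) > 0`. -/
def measSlowEntFun {X : Type*} [MeasurableSpace X] (μ : Measure X) (T : X → X)
    (a : ℕ → ℝ → ℝ) (P : FinMeasPartition X) (ε : ℝ) : ℝ :=
  sSup {t : ℝ | 0 < t ∧
    0 < Filter.atTop.limsup fun n =>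
      (hammingCoverNum μ T P n ε : ℝ≥0∞) / ENNReal.ofReal (a n t)}

/-- The upper measure-theoretic slow entropy of `(T,μ)` w.r.t. the scaling family `a`
equals `E`: for every finite measurable partition the limit as `ε → 0⁺` exists, and the
least upper bound over all partitions of these limits is `E`. -/
def HasUpperMeasSlowEntropy {X : Type*} [MeasurableSpace X] (μ : Measure X) (T : X → X)
    (a : ℕ → ℝ → ℝ) (E : ℝ) : Prop :=
  (∀ P : FinMeasPartition X, ∃ e : ℝ,
      Filter.Tendsto (measSlowEntFun μ T a P) (𝓝[>] (0 : ℝ)) (𝓝 e)) ∧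
  IsLUB {e : ℝ | ∃ P : FinMeasPartition X,
      Filter.Tendsto (measSlowEntFun μ T a P) (𝓝[>] (0 : ℝ)) (𝓝 e)} E

/-- `Γ_r(x) = (Γ(x^{1/r} + 1))^r`, where `Γ` is the Euler Gamma function. -/
def GammaR (r : ℕ) (x : ℝ) : ℝ := (Real.Gamma (x ^ ((r : ℝ)⁻¹) + 1)) ^ r

/-- The inverse of `Γ_r` on `[1,∞)` (where `Γ_r` is strictly increasing with `Γ_r 1 = 1`). -/
def GammaRInv (r : ℕ) (y : ℝ) : ℝ := sSup {x : ℝ | 1 ≤ x ∧ GammaR r x ≤ y}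

/-- The intermediate scaling family `a^{int1,r}_m(t) = m^(t / Γ_r⁻¹(ln m / ln q₁))`. -/
def intScale1 (r q₁ : ℕ) (m : ℕ) (t : ℝ) : ℝ :=
  (m : ℝ) ^ (t / GammaRInv r (Real.log m / Real.log q₁))

/-- The intermediate scaling family
`a^{int2,r}_m(t) = m^(t / (Γ_r⁻¹(ln m / ln q₁))^((r-2)/r))`. -/
def intScale2 (r q₁ : ℕ) (m : ℕ) (t : ℝ) : ℝ :=
  (m : ℝ) ^ (t / GammaRInv r (Real.log m / Real.log q₁) ^ (((r : ℝ) - 2) / (r : ℝ)))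

/-- The logarithmic scaling family `a^{ln}_m(t) = (ln m)^t`. -/
def logScale (m : ℕ) (t : ℝ) : ℝ := Real.log m ^ t

/-- The polynomial scaling family `a^{pol}_m(t) = m^t`. -/
def polScale (m : ℕ) (t : ℝ) : ℝ := (m : ℝ) ^ t

end

/-!
Let `α` be a Liouville number with small divisors `β k = q k * α - r k`. Reparametrise the linear
flow of slope `α` by the smooth density `1 + ∑ β k ^ (1 - t) * cos (2π (q k x - r k y))`; the time
needed to follow an orbit for length `τ` is then
`τ + ∑ β k ^ (-t) / (2π) * (sin (2π (θ k + β k τ)) - sin (2π θ k))`, where `θ k` is the phase of the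
starting point. A shear in the vertical direction turns the invariant measure of this flow into
the Haar measure, and `T` is the time-one map of the conjugated flow.

Translating a point horizontally by `1 / (2 q k)` changes the sign of the `k`-th term of the
cocycle and hardly affects the others.

* Weak mixing: at a time of order `1 / amp k`, where `amp k = β k ^ (1 - t)`, the two orbits through
  a point and its translate are displaced along the flow by an amount depending only on the phase
  `θ k`, which equidistributes. A `T × T`-invariant set is therefore invariant under moving the
  first coordinate alone along its orbit, hence under a dense group of translations.
* Slow entropy: at time `m ≈ 1 / (4 β k)` the horizontal circle has been stretched along the flow to
  length of order `β k ^ (-t) ≈ m ^ t`, so that order `m ^ t` Bowen balls are necessary. Conversely,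
  a horizontal translation by `z` changes the `k`-th term by at most a constant times
  `q k * β k ^ (1 - t) * min m (1 / β k) * |z| ≤ q k * β k ^ (u - t) * m ^ u * |z|`, so that the
  stretching up to time `m` is `O(m ^ u)` for every `u > t`.
-/

noncomputable section

open scoped Real

/-! ### Perturbations of the identity of the line -/

/-- `g` is a perturbation of the identity of `ℝ` with constant `c`: the difference `g - id` is
`c`-Lipschitz. Both the cocycle of a time change and the vertical shift that straightens its
invariant measure are of this form. -/
def NearId (c : ℝ) (g : ℝ → ℝ) : Prop := ∀ a b, |(g a - g b) - (a - b)| ≤ c * |a - b|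

namespace NearId

variable {c : ℝ} {g : ℝ → ℝ}

theorem mul_abs_sub_le (hg : NearId c g) (a b : ℝ) : (1 - c) * |a - b| ≤ |g a - g b| := by
  have h := abs_sub_abs_le_abs_sub (a - b) (g a - g b)
  rw [abs_sub_comm (a - b)] at h
  linarith [hg a b]

theorem abs_sub_le (hg : NearId c g) (a b : ℝ) : |g a - g b| ≤ (1 + c) * |a - b| := by
  have h := abs_sub_abs_le_abs_sub (g a - g b) (a - b)
  linarith [hg a b]

theorem mul_sub_le (hg : NearId c g) {a b : ℝ} (hab : a ≤ b) : (1 - c) * (b - a) ≤ g b - g a := by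
  have h := (abs_le.1 (hg b a)).1
  rw [abs_of_nonneg (sub_nonneg.2 hab)] at h
  linarith

theorem continuous (hg : NearId c g) : Continuous g :=
  LipschitzWith.continuous (K := (1 + c).toNNReal) <| LipschitzWith.of_dist_le_mul fun a b =>
    (hg.abs_sub_le a b).trans <|
      mul_le_mul_of_nonneg_right (Real.le_coe_toNNReal _) (abs_nonneg _)

theorem strictMono (hg : NearId c g) (hc : c < 1) : StrictMono g := fun _ _ hab =>
  sub_pos.1 <| (mul_pos (sub_pos.2 hc) (sub_pos.2 hab)).trans_le (hg.mul_sub_le hab.le)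

theorem surjective (hg : NearId c g) (hc : c < 1) : Function.Surjective g := by
  have hc' : 0 < 1 - c := sub_pos.2 hc
  refine hg.continuous.surjective ?_ ?_
  · refine tendsto_atTop_mono' atTop ?_
      (tendsto_atTop_add_const_left atTop (g 0) (tendsto_id.const_mul_atTop hc'))
    filter_upwards [eventually_ge_atTop (0 : ℝ)] with a ha
    have := hg.mul_sub_le ha
    simp only [id_eq]
    linarith
  · refine tendsto_atBot_mono' atBot ?_
      (tendsto_atBot_add_const_left atBot (g 0) (tendsto_id.const_mul_atBot hc'))
    filter_upwards [eventually_le_atBot (0 : ℝ)] with a ha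
    have := hg.mul_sub_le ha
    simp only [id_eq]
    linarith

theorem bijective (hg : NearId c g) (hc : c < 1) : Function.Bijective g :=
  ⟨(hg.strictMono hc).injective, hg.surjective hc⟩

end NearId

/-! ### Sine and cosine on the circle -/

/-- The function `x ↦ sin (2πx)` on `ℝ/ℤ`. -/
def circleSin (θ : Torus1) : ℝ := (AddCircle.toCircle θ : ℂ).im

/-- The function `x ↦ cos (2πx)` on `ℝ/ℤ`. -/
def circleCos (θ : Torus1) : ℝ := (AddCircle.toCircle θ : ℂ).re

theorem circleSin_coe (x : ℝ) : circleSin x = Real.sin (2 * π * x) := by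
  simp only [circleSin, AddCircle.toCircle_apply_mk, Circle.coe_exp, div_one,
    Complex.exp_ofReal_mul_I_im]

theorem circleCos_coe (x : ℝ) : circleCos x = Real.cos (2 * π * x) := by
  simp only [circleCos, AddCircle.toCircle_apply_mk, Circle.coe_exp, div_one,
    Complex.exp_ofReal_mul_I_re]

@[fun_prop]
theorem continuous_circleSin : Continuous circleSin :=
  Complex.continuous_im.comp (continuous_subtype_val.comp AddCircle.continuous_toCircle)

@[fun_prop]
theorem continuous_circleCos : Continuous circleCos :=
  Complex.continuous_re.comp (continuous_subtype_val.comp AddCircle.continuous_toCircle)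

theorem abs_circleSin_le_one (θ : Torus1) : |circleSin θ| ≤ 1 :=
  (Complex.abs_im_le_norm _).trans_eq (Circle.norm_coe _)

theorem abs_circleCos_le_one (θ : Torus1) : |circleCos θ| ≤ 1 :=
  (Complex.abs_re_le_norm _).trans_eq (Circle.norm_coe _)

theorem circleSin_add_half (θ : Torus1) :
    circleSin (θ + ((1 / 2 : ℝ) : Torus1)) = -circleSin θ := by
  obtain ⟨x, rfl⟩ := QuotientAddGroup.mk_surjective θ
  rw [← AddCircle.coe_add, circleSin_coe, circleSin_coe, ← Real.sin_add_pi]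
  ring_nf

theorem norm_coe_circle_le (x : ℝ) : ‖(x : Torus1)‖ ≤ |x| := QuotientAddGroup.norm_mk_le_norm

theorem exists_coe_eq_abs_eq_norm (θ : Torus1) : ∃ x : ℝ, (x : Torus1) = θ ∧ |x| = ‖θ‖ := by
  obtain ⟨x, rfl⟩ := QuotientAddGroup.mk_surjective θ
  refine ⟨x - round x, ?_, UnitAddCircle.norm_eq.symm⟩
  rw [AddCircle.coe_sub, sub_eq_self, AddCircle.coe_eq_zero_iff]
  exact ⟨round x, by simp⟩

theorem abs_circleSin_sub_le (θ θ' : Torus1) :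
    |circleSin θ - circleSin θ'| ≤ 2 * π * ‖θ - θ'‖ := by
  obtain ⟨x, rfl⟩ := QuotientAddGroup.mk_surjective θ'
  obtain ⟨y, hy, hy'⟩ := exists_coe_eq_abs_eq_norm (θ - x)
  obtain rfl : θ = ((x + y : ℝ) : Torus1) := by rw [AddCircle.coe_add, hy]; abel
  rw [← hy', circleSin_coe, circleSin_coe]
  refine (Real.abs_sin_sub_sin_le _ _).trans_eq ?_
  rw [← mul_sub, abs_mul, abs_of_pos Real.two_pi_pos, add_sub_cancel_left]

theorem abs_circleSin_add_sub_le (θ : Torus1) (u v : ℝ) :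
    |circleSin (θ + u) - circleSin (θ + v)| ≤ 2 * π * |u - v| := by
  refine (abs_circleSin_sub_le _ _).trans ?_
  rw [add_sub_add_left_eq_sub, ← AddCircle.coe_sub]
  gcongr
  exact norm_coe_circle_le _

theorem abs_sin_add_sub_sin_sub_mul_cos_le (a x : ℝ) :
    |Real.sin (a + x) - Real.sin a - x * Real.cos a| ≤ x ^ 2 := by
  have hderiv : ∀ y ∈ uIcc 0 x, HasDerivWithinAt (fun y => Real.sin (a + y) - y * Real.cos a)
      (Real.cos (a + y) - Real.cos a) (uIcc 0 x) y := fun y _ =>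
    (((hasDerivAt_id' y).const_add a).sin.sub
      ((hasDerivAt_id' y).mul_const (Real.cos a))).hasDerivWithinAt.congr_deriv (by simp)
  have hbound : ∀ y ∈ uIcc 0 x, ‖Real.cos (a + y) - Real.cos a‖ ≤ |x| := fun y hy => by
    refine (Real.abs_cos_sub_cos_le _ _).trans ?_
    simpa using abs_sub_left_of_mem_uIcc hy
  have key := (convex_uIcc (0 : ℝ) x).norm_image_sub_le_of_norm_hasDerivWithin_le hderiv hbound
    left_mem_uIcc right_mem_uIcc
  rw [Real.norm_eq_abs, Real.norm_eq_abs, sub_zero, add_zero, zero_mul, sub_zero,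
    abs_mul_abs_self] at key
  rw [sub_right_comm, sq]
  exact key

theorem abs_circleSin_add_sub_sub_mul_circleCos_le (θ : Torus1) (u : ℝ) :
    |circleSin (θ + u) - circleSin θ - 2 * π * u * circleCos θ| ≤ (2 * π * u) ^ 2 := by
  obtain ⟨x, rfl⟩ := QuotientAddGroup.mk_surjective θ
  rw [← AddCircle.coe_add, circleSin_coe, circleSin_coe, circleCos_coe, mul_add]
  exact abs_sin_add_sub_sin_sub_mul_cos_le _ _

theorem abs_circleSin_second_diff_le (θ : Torus1) (u h : ℝ) :
    |circleSin (θ + h + u) - circleSin (θ + h) - (circleSin (θ + u) - circleSin θ)| ≤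
      (2 * π) ^ 2 * |u| * |h| := by
  obtain ⟨x, rfl⟩ := QuotientAddGroup.mk_surjective θ
  simp only [← AddCircle.coe_add, circleSin_coe]
  have hsin_sub (y : ℝ) : Real.sin (2 * π * (y + u)) - Real.sin (2 * π * y) =
      2 * Real.sin (π * u) * Real.cos (2 * π * y + π * u) := by
    rw [Real.sin_sub_sin]; ring_nf
  rw [hsin_sub, hsin_sub, ← mul_sub, abs_mul, abs_mul, abs_two]
  have hsin : |Real.sin (π * u)| ≤ π * |u| := by
    simpa [abs_mul, abs_of_pos Real.pi_pos] using Real.abs_sin_le_abs (x := π * u)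
  have hcos : |Real.cos (2 * π * (x + h) + π * u) -
      Real.cos (2 * π * x + π * u)| ≤ 2 * π * |h| := by
    refine (Real.abs_cos_sub_cos_le _ _).trans_eq ?_
    rw [← abs_of_pos Real.two_pi_pos, ← abs_mul, abs_of_pos Real.two_pi_pos]
    ring_nf
  calc _ ≤ 2 * (π * |u|) * (2 * π * |h|) := by gcongr
    _ = _ := by ring

/-! ### Arithmetic data -/

/-- The arithmetic input of the construction with exponent `t`: a Liouville slope together with
fractions `r k / q k` approximating it from below, the error of each being squeezed between
powers of the denominators `q k` and `q (k + 1)`. -/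
structure LiouvilleData (t : ℝ) where
  slope : ℝ
  q : ℕ → ℕ
  r : ℕ → ℕ
  order : ℕ
  exponent_pos : 0 < t
  one_le_slope : 1 ≤ slope
  slope_le_two : slope ≤ 2
  irrational_slope : Irrational slope
  four_le_mul_order : 4 ≤ (1 - t) * order
  two_pow_le_q : ∀ k, 2 ^ (k + 2) ≤ q k
  inv_q_succ_le : ∀ k, (q (k + 1) : ℝ)⁻¹ ≤ q k * slope - r k
  le_inv_q_pow : ∀ k, q k * slope - r k ≤ ((q k : ℝ) ^ (k + order))⁻¹

namespace LiouvilleData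

variable {t : ℝ} (D : LiouvilleData t)

/-- The `k`-th small divisor `q k * α - r k`: the frequency of the character `(q k, -r k)` of the
torus along the linear flow of slope `α`. -/
def freq (k : ℕ) : ℝ := D.q k * D.slope - D.r k

/-- The amplitude `β ^ (1 - t)`, with `β = D.freq k`, of the `k`-th term of the time change. With
this choice the drift accumulated over a time `1 / β` is of order `β ^ (-t)`. -/
def amp (k : ℕ) : ℝ := D.freq k ^ (1 - t)

theorem exponent_lt_one {t : ℝ} (D : LiouvilleData t) : t < 1 := by
  have h : 0 < (1 - t) * D.order := zero_lt_four.trans_le D.four_le_mul_order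
  linarith [pos_of_mul_pos_left h (Nat.cast_nonneg _)]

theorem q_pos (k : ℕ) : (0 : ℝ) < D.q k :=
  Nat.cast_pos.2 <| (Nat.two_pow_pos _).trans_le (D.two_pow_le_q k)

theorem two_pow_le_cast_q (k : ℕ) : (2 : ℝ) ^ (k + 2) ≤ D.q k := by exact_mod_cast D.two_pow_le_q k

theorem inv_q_le (k : ℕ) : (D.q k : ℝ)⁻¹ ≤ (1 / 2) ^ (k + 2) := by
  rw [one_div, inv_pow]
  exact inv_anti₀ (by positivity) (D.two_pow_le_cast_q k)

theorem one_le_q (k : ℕ) : (1 : ℝ) ≤ D.q k :=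
  (one_le_pow₀ one_le_two).trans (D.two_pow_le_cast_q k)

theorem succ_le_q (k : ℕ) : ((k + 1 : ℕ) : ℝ) ≤ D.q k := by
  exact_mod_cast (Nat.lt_two_pow_self.le.trans (Nat.pow_le_pow_right two_pos (by omega))).trans
    (D.two_pow_le_q k)

theorem tendsto_q : Tendsto (fun k => (D.q k : ℝ)) atTop atTop :=
  tendsto_atTop_mono (fun k => (by simp : (k : ℝ) ≤ (k + 1 : ℕ)).trans (D.succ_le_q k))
    tendsto_natCast_atTop_atTop

theorem freq_pos (k : ℕ) : 0 < D.freq k :=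
  (inv_pos.2 (D.q_pos (k + 1))).trans_le (D.inv_q_succ_le k)

theorem freq_le_one (k : ℕ) : D.freq k ≤ 1 :=
  (D.le_inv_q_pow k).trans (inv_le_one_of_one_le₀ (one_le_pow₀ (D.one_le_q k)))

theorem inv_freq_le (k : ℕ) : (D.freq k)⁻¹ ≤ D.q (k + 1) :=
  inv_le_of_inv_le₀ (D.q_pos _) (D.inv_q_succ_le k)

theorem q_pow_le (k : ℕ) : (D.q k : ℝ) ^ (k + D.order) ≤ D.q (k + 1) :=
  (le_inv_of_le_inv₀ (D.freq_pos k) (D.le_inv_q_pow k)).trans (D.inv_freq_le k)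

theorem four_le_order : 4 ≤ D.order := by
  have h : (4 : ℝ) ≤ D.order := D.four_le_mul_order.trans <|
    mul_le_of_le_one_left (Nat.cast_nonneg _) (by linarith [D.exponent_pos])
  exact_mod_cast h

theorem q_mono : Monotone D.q := monotone_nat_of_le_succ fun k => by
  have h := (le_self_pow₀ (D.one_le_q k) (by have := D.four_le_order; omega)).trans (D.q_pow_le k)
  exact_mod_cast h

theorem freq_le_one_div_hundred (k : ℕ) : D.freq k ≤ 1 / 100 := by
  have hq : (4 : ℝ) ≤ D.q k := by
    exact_mod_cast (Nat.pow_le_pow_right two_pos (Nat.le_add_left 2 k)).trans (D.two_pow_le_q k)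
  calc D.freq k ≤ ((D.q k : ℝ) ^ (k + D.order))⁻¹ := D.le_inv_q_pow k
    _ ≤ ((4 : ℝ) ^ 4)⁻¹ := by
        gcongr
        exact (pow_le_pow_left₀ (by norm_num) hq 4).trans
          (pow_le_pow_right₀ (D.one_le_q k) (D.four_le_order.trans (Nat.le_add_left _ _)))
    _ ≤ 1 / 100 := by norm_num

theorem q_le_rpow {j k : ℕ} (hjk : j < k) : (D.q j : ℝ) ≤ (D.q k : ℝ) ^ ((1 - t) / 4) := by
  induction k, hjk using Nat.le_induction with
  | base =>
    calc (D.q j : ℝ) = (D.q j : ℝ) ^ (1 : ℝ) := (Real.rpow_one _).symm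
      _ ≤ (D.q j : ℝ) ^ (((j + D.order : ℕ) : ℝ) * ((1 - t) / 4)) := by
          refine Real.rpow_le_rpow_of_exponent_le (D.one_le_q j) ?_
          have := mul_nonneg j.cast_nonneg (sub_nonneg.2 D.exponent_lt_one.le)
          push_cast
          linarith [D.four_le_mul_order]
      _ = ((D.q j : ℝ) ^ (j + D.order)) ^ ((1 - t) / 4) := by
          rw [Real.rpow_mul (D.q_pos j).le, Real.rpow_natCast]
      _ ≤ _ := Real.rpow_le_rpow (pow_nonneg (D.q_pos j).le _) (D.q_pow_le j)
          (by linarith [D.exponent_lt_one])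
  | succ k _ ih =>
    have hq : (D.q k : ℝ) ≤ D.q (k + 1) := by exact_mod_cast D.q_mono k.le_succ
    exact ih.trans <| Real.rpow_le_rpow (D.q_pos k).le hq (by linarith [D.exponent_lt_one])

theorem cast_r (k : ℕ) : (D.r k : ℝ) = D.q k * D.slope - D.freq k := by
  rw [freq, sub_sub_cancel]

theorem r_le (k : ℕ) : (D.r k : ℝ) ≤ 2 * D.q k := by
  rw [cast_r]
  nlinarith [D.freq_pos k, D.slope_le_two, D.q_pos k]

theorem one_le_r (k : ℕ) : (1 : ℝ) ≤ D.r k := by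
  have h : (0 : ℝ) < D.r k := by
    have hq : (2 : ℝ) ^ 2 ≤ D.q k :=
      (pow_le_pow_right₀ one_le_two (Nat.le_add_left 2 k)).trans (D.two_pow_le_cast_q k)
    rw [cast_r]
    nlinarith [D.freq_le_one k, D.one_le_slope]
  exact_mod_cast h

theorem amp_pos (k : ℕ) : 0 < D.amp k := Real.rpow_pos_of_pos (D.freq_pos k) _

theorem amp_div_freq (k : ℕ) : D.amp k / D.freq k = D.freq k ^ (-t) := by
  rw [amp, sub_eq_add_neg, Real.rpow_add (D.freq_pos k), Real.rpow_one,
    mul_div_cancel_left₀ _ (D.freq_pos k).ne']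

theorem freq_div_amp (k : ℕ) : D.freq k / D.amp k = D.freq k ^ t := by
  rw [← inv_div, amp_div_freq, Real.rpow_neg (D.freq_pos k).le, inv_inv]

theorem freq_rpow_le (k : ℕ) {δ : ℝ} (hδ : 0 ≤ δ) :
    D.freq k ^ δ ≤ (D.q k : ℝ) ^ (-(δ * (k + D.order))) := by
  refine (Real.rpow_le_rpow (D.freq_pos k).le (D.le_inv_q_pow k) hδ).trans_eq ?_
  have hq := (D.q_pos k).le
  rw [← Real.rpow_natCast, ← Real.rpow_neg hq, ← Real.rpow_mul hq]
  push_cast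
  ring_nf

theorem amp_le (k : ℕ) : D.amp k ≤ ((D.q k : ℝ) ^ 4)⁻¹ := by
  have ht := sub_nonneg.2 D.exponent_lt_one.le
  refine (D.freq_rpow_le k ht).trans ?_
  rw [← Real.rpow_natCast, ← Real.rpow_neg (D.q_pos k).le]
  refine Real.rpow_le_rpow_of_exponent_le (D.one_le_q k) (neg_le_neg ?_)
  have := mul_nonneg k.cast_nonneg ht
  push_cast
  linarith [D.four_le_mul_order]

theorem summable_q_pow_mul_freq_rpow (M : ℕ) {δ : ℝ} (hδ : 0 < δ) :
    Summable fun k => (D.q k : ℝ) ^ M * D.freq k ^ δ := by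
  refine Summable.of_norm_bounded_eventually_nat (g := fun k => (1 / 2 : ℝ) ^ (k + 2))
    ((summable_nat_add_iff 2).2 summable_geometric_two) ?_
  obtain ⟨N, hN⟩ := exists_nat_ge ((M + 1) / δ)
  filter_upwards [eventually_ge_atTop N] with k hk
  have hq := D.q_pos k
  have hexp : (M : ℝ) - δ * (k + D.order) ≤ -1 := by
    have hNk : (N : ℝ) ≤ k := by exact_mod_cast hk
    have h := (div_le_iff₀ hδ).1 (hN.trans hNk)
    nlinarith [mul_nonneg hδ.le (D.order.cast_nonneg (α := ℝ))]
  rw [Real.norm_of_nonneg (mul_nonneg (pow_nonneg hq.le _) (Real.rpow_nonneg (D.freq_pos k).le _))]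
  calc (D.q k : ℝ) ^ M * D.freq k ^ δ
      ≤ (D.q k : ℝ) ^ (M : ℝ) * (D.q k : ℝ) ^ (-(δ * (k + D.order))) := by
        rw [Real.rpow_natCast]
        gcongr
        exact D.freq_rpow_le k hδ.le
    _ = (D.q k : ℝ) ^ ((M : ℝ) - δ * (k + D.order)) := by rw [← Real.rpow_add hq, sub_eq_add_neg]
    _ ≤ (D.q k : ℝ) ^ (-1 : ℝ) := Real.rpow_le_rpow_of_exponent_le (D.one_le_q k) hexp
    _ = (D.q k : ℝ)⁻¹ := Real.rpow_neg_one _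
    _ ≤ _ := D.inv_q_le k

theorem summable_q_pow_mul_amp (M : ℕ) : Summable fun k => (D.q k : ℝ) ^ M * D.amp k :=
  D.summable_q_pow_mul_freq_rpow M (sub_pos.2 D.exponent_lt_one)

theorem summable_amp : Summable D.amp := by simpa using D.summable_q_pow_mul_amp 0

theorem tendsto_amp : Tendsto D.amp atTop (𝓝 0) := D.summable_amp.tendsto_atTop_zero

theorem tendsto_freq : Tendsto D.freq atTop (𝓝 0) := by
  simpa using (D.summable_q_pow_mul_freq_rpow 0 one_pos).tendsto_atTop_zero

theorem tendsto_freq_div_amp : Tendsto (fun k => D.freq k / D.amp k) atTop (𝓝 0) := by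
  simpa [freq_div_amp] using
    (D.summable_q_pow_mul_freq_rpow 0 D.exponent_pos).tendsto_atTop_zero

theorem tsum_amp_add_le (k : ℕ) : ∑' j, D.amp (j + k) ≤ ((D.q k : ℝ) ^ 2)⁻¹ / 8 := by
  have hterm (j : ℕ) : D.amp (j + k) ≤ ((D.q k : ℝ) ^ 2)⁻¹ / 16 * (1 / 2) ^ j := by
    have hq : ((D.q (j + k) : ℝ) ^ 2)⁻¹ ≤ ((D.q k : ℝ) ^ 2)⁻¹ := by
      have := D.q_pos k
      have : (D.q k : ℝ) ≤ D.q (j + k) := by exact_mod_cast D.q_mono (Nat.le_add_left k j)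
      gcongr
    have hpow : ((D.q (j + k) : ℝ) ^ 2)⁻¹ ≤ (1 / 2) ^ j / 16 := by
      calc ((D.q (j + k) : ℝ) ^ 2)⁻¹ ≤ ((1 / 2) ^ (j + k + 2)) ^ 2 := by
            rw [← inv_pow]
            have := D.q_pos (j + k)
            gcongr
            exact D.inv_q_le _
        _ ≤ (1 / 2) ^ (j + 4) := by
            rw [← pow_mul]
            exact pow_le_pow_of_le_one (by norm_num) (by norm_num) (by omega)
        _ = (1 / 2) ^ j / 16 := by rw [pow_add]; norm_num; ring
    calc D.amp (j + k) ≤ ((D.q (j + k) : ℝ) ^ 4)⁻¹ := D.amp_le _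
      _ = ((D.q (j + k) : ℝ) ^ 2)⁻¹ * ((D.q (j + k) : ℝ) ^ 2)⁻¹ := by rw [← mul_inv]; ring_nf
      _ ≤ ((D.q k : ℝ) ^ 2)⁻¹ * ((1 / 2) ^ j / 16) := by gcongr
      _ = _ := by ring
  refine (((summable_nat_add_iff k).2 D.summable_amp).tsum_le_tsum hterm
    (summable_geometric_two.mul_left _)).trans_eq ?_
  rw [tsum_mul_left, tsum_geometric_two]
  ring

theorem tsum_amp_le : ∑' k, D.amp k ≤ 1 / 10 := by
  have hq : ((D.q 0 : ℝ) ^ 2)⁻¹ ≤ (1 / 4) ^ 2 := by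
    rw [← inv_pow]
    have := D.q_pos 0
    gcongr
    exact (D.inv_q_le 0).trans_eq (by norm_num)
  exact (D.tsum_amp_add_le 0).trans (by linarith)

theorem tsum_amp_tail_le (k : ℕ) : ∑' j, D.amp (j + (k + 1)) ≤ D.freq k ^ 2 := by
  have h : ((D.q (k + 1) : ℝ) ^ 2)⁻¹ ≤ D.freq k ^ 2 := by
    rw [← inv_pow]
    exact pow_le_pow_left₀ (inv_nonneg.2 (Nat.cast_nonneg _)) (D.inv_q_succ_le k) 2
  have := inv_nonneg.2 (sq_nonneg (D.q (k + 1) : ℝ))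
  linarith [D.tsum_amp_add_le (k + 1)]

theorem amp_div_freq_mul_q_le {j k : ℕ} (hjk : j < k) :
    D.amp j / D.freq j * D.q j ≤ (D.q k : ℝ) ^ (t + (1 - t) / 4) := by
  rw [Real.rpow_add (D.q_pos k), amp_div_freq, Real.rpow_neg (D.freq_pos j).le,
    ← Real.inv_rpow (D.freq_pos j).le]
  have hinv : (D.freq j)⁻¹ ≤ D.q k :=
    (D.inv_freq_le j).trans (by exact_mod_cast D.q_mono hjk)
  have := D.exponent_pos.le
  have := inv_nonneg.2 (D.freq_pos j).le
  gcongr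
  exact D.q_le_rpow hjk

theorem sum_amp_div_freq_mul_q_le (k : ℕ) :
    ∑ j ∈ Finset.range k, D.amp j / D.freq j * D.q j ≤ (D.q k : ℝ) ^ ((1 + t) / 2) := by
  rcases k with - | k
  · simpa using Real.rpow_nonneg (D.q_pos 0).le _
  have hq := D.q_pos (k + 1)
  calc _ ≤ ((k + 1 : ℕ) : ℝ) * (D.q (k + 1) : ℝ) ^ (t + (1 - t) / 4) := by
        refine (Finset.sum_le_card_nsmul _ _ _ fun j hj =>
          D.amp_div_freq_mul_q_le (Finset.mem_range.1 hj)).trans_eq ?_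
        rw [Finset.card_range, nsmul_eq_mul]
    _ ≤ (D.q (k + 1) : ℝ) ^ ((1 - t) / 4) * (D.q (k + 1) : ℝ) ^ (t + (1 - t) / 4) := by
        gcongr
        exact (D.succ_le_q k).trans (D.q_le_rpow k.lt_succ_self)
    _ = _ := by rw [← Real.rpow_add hq]; ring_nf

theorem sum_amp_div_freq_mul_q_nonneg (k : ℕ) :
    0 ≤ ∑ j ∈ Finset.range k, D.amp j / D.freq j * D.q j :=
  Finset.sum_nonneg fun j _ =>
    mul_nonneg (div_pos (D.amp_pos j) (D.freq_pos j)).le (D.q_pos j).le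

theorem tendsto_sum_amp_div_freq_mul_q_div :
    Tendsto (fun k => (∑ j ∈ Finset.range k, D.amp j / D.freq j * D.q j) / D.q k)
      atTop (𝓝 0) := by
  have hlim := (tendsto_rpow_neg_atTop (y := (1 - t) / 2)
    (by linarith [D.exponent_lt_one])).comp D.tendsto_q
  refine squeeze_zero (fun k => div_nonneg (D.sum_amp_div_freq_mul_q_nonneg k) (D.q_pos k).le)
    (fun k => ?_) hlim
  rw [div_le_iff₀ (D.q_pos k), Function.comp_apply]
  refine (D.sum_amp_div_freq_mul_q_le k).trans_eq ?_
  rw [← Real.rpow_add_one (D.q_pos k).ne']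
  ring_nf

theorem sum_amp_div_freq_nonneg (k : ℕ) : 0 ≤ ∑ j ∈ Finset.range k, D.amp j / D.freq j :=
  Finset.sum_nonneg fun j _ => (div_pos (D.amp_pos j) (D.freq_pos j)).le

theorem sum_amp_div_freq_le (k : ℕ) : ∑ j ∈ Finset.range k, D.amp j / D.freq j ≤ D.q k := by
  calc _ ≤ ∑ j ∈ Finset.range k, D.amp j / D.freq j * D.q j :=
        Finset.sum_le_sum fun j _ =>
          le_mul_of_one_le_right (div_pos (D.amp_pos j) (D.freq_pos j)).le (D.one_le_q j)
    _ ≤ (D.q k : ℝ) ^ ((1 + t) / 2) := D.sum_amp_div_freq_mul_q_le k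
    _ ≤ (D.q k : ℝ) ^ (1 : ℝ) :=
        Real.rpow_le_rpow_of_exponent_le (D.one_le_q k) (by linarith [D.exponent_lt_one])
    _ = _ := Real.rpow_one _

theorem tendsto_sum_amp_div_freq_div :
    Tendsto (fun k => (∑ j ∈ Finset.range k, D.amp j / D.freq j) / (D.amp k / D.freq k))
      atTop (𝓝 0) := by
  refine squeeze_zero (fun k => div_nonneg (D.sum_amp_div_freq_nonneg k)
    (div_pos (D.amp_pos k) (D.freq_pos k)).le) (fun k => ?_)
    (D.summable_q_pow_mul_freq_rpow 1 D.exponent_pos).tendsto_atTop_zero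
  rw [div_eq_mul_inv, inv_div, freq_div_amp, pow_one]
  exact mul_le_mul_of_nonneg_right (D.sum_amp_div_freq_le k)
    (Real.rpow_nonneg (D.freq_pos k).le _)

theorem tendsto_amp_mul_sum_amp_div_freq :
    Tendsto (fun k => D.amp k * ∑ j ∈ Finset.range k, D.amp j / D.freq j) atTop (𝓝 0) := by
  refine squeeze_zero (fun k => mul_nonneg (D.amp_pos k).le (D.sum_amp_div_freq_nonneg k))
    (fun k => ?_) (D.summable_q_pow_mul_amp 1).tendsto_atTop_zero
  rw [pow_one, mul_comm]
  exact mul_le_mul_of_nonneg_right (D.sum_amp_div_freq_le k) (D.amp_pos k).le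

end LiouvilleData

theorem one_div_pow_factorial_le_liouvilleNumber_remainder {m : ℝ} (hm : 1 < m) (n : ℕ) :
    1 / m ^ (n + 1).factorial ≤ LiouvilleNumber.remainder m n := by
  simpa [LiouvilleNumber.remainder] using
    (LiouvilleNumber.remainder_summable hm n).le_tsum 0 fun j _ => by positivity

theorem exists_pow_factorial_mul_liouvilleNumber_sub_eq {m : ℕ} (hm : 1 < m) (n : ℕ) :
    ∃ r : ℕ, (m : ℝ) ^ n.factorial * liouvilleNumber m - r =
      (m : ℝ) ^ n.factorial * LiouvilleNumber.remainder m n := by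
  have hm' : (1 : ℝ) < m := by exact_mod_cast hm
  obtain ⟨r, hr⟩ := LiouvilleNumber.partialSum_eq_rat (zero_lt_one.trans hm) n
  rw [Nat.cast_pow] at hr
  refine ⟨r, ?_⟩
  rw [← LiouvilleNumber.partialSum_add_remainder hm' n, mul_add, hr,
    mul_div_cancel₀ _ (by positivity), add_sub_cancel_left]

theorem pow_factorial_mul_liouvilleNumber_remainder_le {m : ℝ} (hm : 2 ≤ m) (n : ℕ) :
    m ^ (n + 1).factorial * LiouvilleNumber.remainder m (n + 1) ≤
      ((m ^ (n + 1).factorial) ^ n)⁻¹ := by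
  have : 0 < m ^ (n + 1).factorial := by positivity
  calc _ ≤ m ^ (n + 1).factorial * (1 / (m ^ (n + 1).factorial) ^ (n + 1)) := by
        gcongr
        exact (LiouvilleNumber.remainder_lt _ hm).le
    _ = _ := by
        rw [pow_succ]
        field_simp

theorem liouvilleNumber_two_mem_Icc : liouvilleNumber 2 ∈ Icc (1 : ℝ) 2 := by
  have hsum := LiouvilleNumber.partialSum_add_remainder (m := 2) one_lt_two 2
  have hlt := LiouvilleNumber.remainder_lt' 2 (m := 2) one_lt_two
  have hpos := LiouvilleNumber.remainder_pos (m := 2) one_lt_two 2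
  have hpartial : LiouvilleNumber.partialSum 2 2 = 5 / 4 := by
    norm_num [LiouvilleNumber.partialSum, Finset.sum_range_succ, Nat.factorial]
  norm_num [Nat.factorial] at hlt
  constructor <;> linarith

theorem nonempty_liouvilleData {t : ℝ} (ht0 : 0 < t) (ht1 : t < 1) :
    Nonempty (LiouvilleData t) := by
  set N := ⌈4 / (1 - t)⌉₊
  choose r hr using fun k =>
    exists_pow_factorial_mul_liouvilleNumber_sub_eq one_lt_two (k + N + 1)
  push_cast at hr
  have hN : 1 ≤ N := Nat.one_le_ceil_iff.2 (div_pos four_pos (sub_pos.2 ht1))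
  refine ⟨{
    slope := liouvilleNumber 2
    q k := 2 ^ (k + N + 1).factorial
    r := r
    order := N
    exponent_pos := ht0
    one_le_slope := liouvilleNumber_two_mem_Icc.1
    slope_le_two := liouvilleNumber_two_mem_Icc.2
    irrational_slope := by simpa using (liouville_liouvilleNumber le_rfl).irrational
    four_le_mul_order := (div_le_iff₀' (sub_pos.2 ht1)).1 (Nat.le_ceil _)
    two_pow_le_q k := Nat.pow_le_pow_right two_pos (le_trans (by lia) (Nat.self_le_factorial _))
    inv_q_succ_le k := ?_
    le_inv_q_pow k := ?_ }⟩ <;>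
    push_cast <;> rw [hr]
  · have hrem := one_div_pow_factorial_le_liouvilleNumber_remainder one_lt_two (k + N + 1)
    rw [← one_div, show k + 1 + N + 1 = k + N + 1 + 1 by lia]
    exact hrem.trans (le_mul_of_one_le_left (le_trans (by positivity) hrem)
      (one_le_pow₀ one_le_two))
  · exact pow_factorial_mul_liouvilleNumber_remainder_le le_rfl (k + N)

/-! ### The reparametrised linear flow -/

namespace LiouvilleData

variable {t : ℝ} (D : LiouvilleData t)

/-- The character `(x, y) ↦ q k * x - r k * y` of the torus, which turns at the slow rate
`D.freq k` along the linear flow. -/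
def phase (k : ℕ) : Torus2 →+ Torus1 where
  toFun p := D.q k • p.1 - D.r k • p.2
  map_zero' := by simp
  map_add' a b := by
    simp only [Prod.fst_add, Prod.snd_add, smul_add]
    abel

theorem phase_apply (k : ℕ) (p : Torus2) : D.phase k p = D.q k • p.1 - D.r k • p.2 := rfl

@[fun_prop]
theorem continuous_phase (k : ℕ) : Continuous (D.phase k) := by
  change Continuous fun p : Torus2 => D.q k • p.1 - D.r k • p.2
  fun_prop

/-- The one-parameter subgroup `τ ↦ (α τ, τ)` of the torus, whose translates are the orbits of
the linear flow of slope `α`. -/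
def line : ℝ →+ Torus2 where
  toFun τ := (((D.slope * τ : ℝ) : Torus1), (τ : Torus1))
  map_zero' := by simp
  map_add' a b := by simp only [mul_add, AddCircle.coe_add, Prod.mk_add_mk]

theorem line_apply (τ : ℝ) : D.line τ = (((D.slope * τ : ℝ) : Torus1), (τ : Torus1)) := rfl

@[fun_prop]
theorem continuous_line : Continuous D.line :=
  ((AddCircle.continuous_mk' 1).comp (continuous_const_mul D.slope)).prodMk
    (AddCircle.continuous_mk' 1)

theorem norm_line_le (τ : ℝ) : ‖D.line τ‖ ≤ 2 * |τ| := by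
  refine max_le ((norm_coe_circle_le _).trans ?_) ((norm_coe_circle_le τ).trans ?_)
  · rw [abs_mul, abs_of_nonneg (zero_le_one.trans D.one_le_slope)]
    exact mul_le_mul_of_nonneg_right D.slope_le_two (abs_nonneg τ)
  · linarith [abs_nonneg τ]

theorem phase_line (k : ℕ) (τ : ℝ) : D.phase k (D.line τ) = ((D.freq k * τ : ℝ) : Torus1) := by
  rw [phase_apply, line_apply, ← AddCircle.coe_nsmul, ← AddCircle.coe_nsmul, ← AddCircle.coe_sub,
    freq]
  congr 1
  simp only [nsmul_eq_mul]
  ring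

/-- The `k`-th term of the cocycle: the integral of `D.amp k * cos (2π D.phase k)` over a
segment of length `τ` of the orbit of `p` under the linear flow. -/
def cocycleTerm (k : ℕ) (p : Torus2) (τ : ℝ) : ℝ :=
  D.amp k / (2 * π * D.freq k) *
    (circleSin (D.phase k p + (D.freq k * τ : ℝ)) - circleSin (D.phase k p))

theorem amp_div_two_pi_mul_freq_pos (k : ℕ) : 0 < D.amp k / (2 * π * D.freq k) :=
  div_pos (D.amp_pos k) (mul_pos Real.two_pi_pos (D.freq_pos k))

@[fun_prop]
theorem continuous_cocycleTerm (k : ℕ) (τ : ℝ) : Continuous fun p => D.cocycleTerm k p τ := by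
  unfold cocycleTerm
  fun_prop

@[simp]
theorem cocycleTerm_zero (k : ℕ) (p : Torus2) : D.cocycleTerm k p 0 = 0 := by simp [cocycleTerm]

theorem cocycleTerm_add (k : ℕ) (p : Torus2) (τ σ : ℝ) :
    D.cocycleTerm k p (τ + σ) = D.cocycleTerm k p τ + D.cocycleTerm k (p + D.line τ) σ := by
  simp only [cocycleTerm, map_add, phase_line, mul_add, AddCircle.coe_add, add_assoc]
  ring

theorem abs_cocycleTerm_sub_le (k : ℕ) (p : Torus2) (τ σ : ℝ) :
    |D.cocycleTerm k p τ - D.cocycleTerm k p σ| ≤ D.amp k * |τ - σ| := by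
  have hcoef := D.amp_div_two_pi_mul_freq_pos k
  have hfreq := D.freq_pos k
  rw [cocycleTerm, cocycleTerm, ← mul_sub, sub_sub_sub_cancel_right, abs_mul, abs_of_pos hcoef]
  calc _ ≤ D.amp k / (2 * π * D.freq k) * (2 * π * |D.freq k * τ - D.freq k * σ|) := by
        gcongr
        exact abs_circleSin_add_sub_le _ _ _
    _ = _ := by
        rw [← mul_sub, abs_mul, abs_of_pos hfreq]
        field_simp

theorem abs_cocycleTerm_le (k : ℕ) (p : Torus2) (τ : ℝ) :
    |D.cocycleTerm k p τ| ≤ D.amp k * |τ| := by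
  simpa using D.abs_cocycleTerm_sub_le k p τ 0

theorem abs_cocycleTerm_le_amp_div_freq (k : ℕ) (p : Torus2) (τ : ℝ) :
    |D.cocycleTerm k p τ| ≤ D.amp k / D.freq k := by
  have hcoef := D.amp_div_two_pi_mul_freq_pos k
  have hfreq := D.freq_pos k
  have hsin (θ : Torus1) := abs_le.1 (abs_circleSin_le_one θ)
  rw [cocycleTerm, abs_mul, abs_of_pos hcoef]
  calc _ ≤ D.amp k / (2 * π * D.freq k) * 2 := by
        gcongr
        rw [abs_le]
        constructor <;>
          linarith [hsin (D.phase k p), hsin (D.phase k p + (D.freq k * τ : ℝ))]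
    _ = D.amp k / D.freq k / π := by field_simp
    _ ≤ _ := div_le_self (div_pos (D.amp_pos k) hfreq).le (by linarith [Real.pi_gt_three])

theorem summable_cocycleTerm (p : Torus2) (τ : ℝ) : Summable fun k => D.cocycleTerm k p τ :=
  Summable.of_norm_bounded (D.summable_amp.mul_right |τ|) fun k => D.abs_cocycleTerm_le k p τ

/-- The additive cocycle of the time change: the time which the reparametrised flow needs to
follow the linear orbit of `p` up to parameter `τ`. -/
def cocycle (p : Torus2) (τ : ℝ) : ℝ := τ + ∑' k, D.cocycleTerm k p τ

@[simp]
theorem cocycle_zero (p : Torus2) : D.cocycle p 0 = 0 := by simp [cocycle]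

theorem cocycle_add (p : Torus2) (τ σ : ℝ) :
    D.cocycle p (τ + σ) = D.cocycle p τ + D.cocycle (p + D.line τ) σ := by
  simp only [cocycle, cocycleTerm_add]
  rw [(D.summable_cocycleTerm p τ).tsum_add (D.summable_cocycleTerm _ σ)]
  ring

theorem nearId_cocycle (p : Torus2) : NearId (1 / 10) (D.cocycle p) := fun τ σ => by
  have h : D.cocycle p τ - D.cocycle p σ - (τ - σ) =
      ∑' k, (D.cocycleTerm k p τ - D.cocycleTerm k p σ) := by
    rw [(D.summable_cocycleTerm p τ).tsum_sub (D.summable_cocycleTerm p σ), cocycle, cocycle]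
    ring
  rw [h, ← Real.norm_eq_abs]
  refine (tsum_of_norm_bounded (D.summable_amp.mul_right |τ - σ|).hasSum
    fun k => D.abs_cocycleTerm_sub_le k p τ σ).trans ?_
  rw [tsum_mul_right]
  exact mul_le_mul_of_nonneg_right D.tsum_amp_le (abs_nonneg _)

@[fun_prop]
theorem continuous_cocycle (τ : ℝ) : Continuous fun p => D.cocycle p τ :=
  continuous_const.add <| continuous_tsum (fun k => D.continuous_cocycleTerm k τ)
    (D.summable_amp.mul_right |τ|) fun k p => D.abs_cocycleTerm_le k p τ

theorem cocycle_bijective (p : Torus2) : Function.Bijective (D.cocycle p) :=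
  (D.nearId_cocycle p).bijective (by norm_num)

/-- The inverse of the cocycle: the parameter on the linear orbit of `p` which the reparametrised
flow has reached at time `s`. -/
def time (p : Torus2) (s : ℝ) : ℝ := (Equiv.ofBijective _ (D.cocycle_bijective p)).symm s

@[simp]
theorem cocycle_time (p : Torus2) (s : ℝ) : D.cocycle p (D.time p s) = s :=
  (Equiv.ofBijective _ (D.cocycle_bijective p)).apply_symm_apply s

@[simp]
theorem time_cocycle (p : Torus2) (τ : ℝ) : D.time p (D.cocycle p τ) = τ :=
  (Equiv.ofBijective _ (D.cocycle_bijective p)).symm_apply_apply τ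

@[simp]
theorem time_zero (p : Torus2) : D.time p 0 = 0 := by
  simpa only [cocycle_zero] using D.time_cocycle p 0

theorem abs_time_sub_le (p p' : Torus2) (s s' : ℝ) :
    |D.time p s - D.time p' s'| ≤ 10 / 9 *
      (|s - s'| + |D.cocycle p (D.time p' s') - D.cocycle p' (D.time p' s')|) := by
  have h := (D.nearId_cocycle p).mul_abs_sub_le (D.time p s) (D.time p' s')
  have htri := abs_sub_le s s' (D.cocycle p (D.time p' s'))
  rw [cocycle_time] at h
  rw [cocycle_time, abs_sub_comm (D.cocycle p _)]
  linarith

@[fun_prop]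
theorem continuous_time : Continuous fun x : Torus2 × ℝ => D.time x.1 x.2 := by
  refine continuous_iff_continuousAt.2 fun x' => tendsto_iff_dist_tendsto_zero.2 <|
    squeeze_zero (fun _ => dist_nonneg) (fun x => D.abs_time_sub_le x.1 x'.1 x.2 x'.2) ?_
  refine Continuous.tendsto' ?_ x' _ (by simp)
  have := (D.continuous_cocycle (D.time x'.1 x'.2)).comp (continuous_fst (Y := ℝ))
  fun_prop

theorem time_mem_Icc (p : Torus2) {s : ℝ} (hs : 0 ≤ s) :
    D.time p s ∈ Icc (10 / 11 * s) (10 / 9 * s) := by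
  have hpos : 0 ≤ D.time p s := by
    rw [← ((D.nearId_cocycle p).strictMono (by norm_num)).le_iff_le]
    simpa using hs
  have h := D.nearId_cocycle p (D.time p s) 0
  rw [cocycle_time, cocycle_zero, sub_zero, sub_zero, abs_of_nonneg hpos, abs_le] at h
  constructor <;> linarith

theorem time_add (p : Torus2) (s u : ℝ) :
    D.time p (s + u) = D.time p s + D.time (p + D.line (D.time p s)) u := by
  apply (D.cocycle_bijective p).injective
  rw [cocycle_time, cocycle_add, cocycle_time, cocycle_time]

/-- The linear flow reparametrised by the cocycle. -/
def flow : Flow ℝ Torus2 where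
  toFun s p := p + D.line (D.time p s)
  cont' := by
    have htime := D.continuous_time.comp (continuous_swap (X := ℝ))
    exact continuous_snd.add (D.continuous_line.comp htime)
  map_add' s u p := by
    rw [add_comm s u, time_add, map_add, add_assoc]
  map_zero' p := by simp

theorem flow_apply (s : ℝ) (p : Torus2) : D.flow s p = p + D.line (D.time p s) := rfl

theorem flow_cocycle (p : Torus2) (τ : ℝ) : D.flow (D.cocycle p τ) p = p + D.line τ := by
  rw [flow_apply, time_cocycle]

end LiouvilleData

/-! ### Smoothness of series, integrals and implicit functions -/

/-- Differentiation under the integral sign, obtained by writing the integral as the value at `0`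
of a convolution with the indicator function of `(0, 1]`. -/
theorem contDiff_intervalIntegral_zero_one {P E : Type*} [NormedAddCommGroup P] [NormedSpace ℝ P]
    [NormedAddCommGroup E] [NormedSpace ℝ E] {n : ℕ∞} {F : P × ℝ → E} (hF : ContDiff ℝ n F) :
    ContDiff ℝ n fun p => ∫ u in (0 : ℝ)..1, F (p, u) := by
  let χ : ContDiffBump (0 : ℝ) := ⟨1, 2, one_pos, one_lt_two⟩
  have hind : LocallyIntegrable ((Ioc (0 : ℝ) 1).indicator fun _ => (1 : ℝ)) volume :=
    ((integrable_indicator_iff measurableSet_Ioc).2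
      (integrableOn_const (by simp))).locallyIntegrable
  have hG : ContDiff ℝ n fun x : P × ℝ => χ x.2 • F (x.1, -x.2) :=
    (χ.contDiff.comp contDiff_snd).smul (hF.comp (contDiff_fst.prodMk contDiff_snd.neg))
  have hconv := contDiffOn_convolution_right_with_param_comp (μ := volume)
    (ContinuousLinearMap.lsmul ℝ ℝ : ℝ →L[ℝ] E →L[ℝ] E) (contDiffOn_const (c := (0 : ℝ)))
    isOpen_univ (isCompact_closedBall (0 : ℝ) 2) (g := fun (p : P) y => χ y • F (p, -y))
    (fun p x _ hx => by rw [χ.zero_of_le_dist (not_le.1 hx).le, zero_smul]) hind hG.contDiffOn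
  rw [contDiffOn_univ] at hconv
  convert hconv using 2 with p
  rw [intervalIntegral.integral_of_le zero_le_one, convolution_def,
    ← integral_indicator measurableSet_Ioc]
  congr 1
  ext u
  by_cases hu : u ∈ Ioc (0 : ℝ) 1
  · have hχ : χ (-u) = 1 := χ.one_of_mem_closedBall (by simp [abs_of_pos hu.1, hu.2, χ])
    simp [hu, hχ]
  · simp [hu]

theorem contDiff_tsum_mul_comp {V : Type*} [NormedAddCommGroup V] [NormedSpace ℝ V] {g : ℝ → ℝ}
    (hg : ContDiff ℝ (⊤ : ℕ∞) g) (hbound : ∀ m x, |iteratedDeriv m g x| ≤ 1) {a : ℕ → ℝ}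
    {L : ℕ → V →L[ℝ] ℝ} (hsum : ∀ m : ℕ, Summable fun k => |a k| * ‖L k‖ ^ m) :
    ContDiff ℝ (⊤ : ℕ∞) fun v => ∑' k, a k * g (L k v) := by
  refine contDiff_tsum (v := fun m k => |a k| * ‖L k‖ ^ m)
    (fun k => contDiff_const.mul (hg.comp (L k).contDiff)) (fun m _ => hsum m) fun m k v _ => ?_
  have hm : ((m : ℕ∞) : WithTop ℕ∞) ≤ (⊤ : ℕ∞) := mod_cast le_top
  have hcomp : ContDiffAt ℝ m (g ∘ L k) v := ((hg.comp (L k).contDiff).of_le hm).contDiffAt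
  change ‖iteratedFDeriv ℝ m (a k • (g ∘ L k)) v‖ ≤ _
  rw [iteratedFDeriv_const_smul_apply hcomp, norm_smul, Real.norm_eq_abs,
    (L k).iteratedFDeriv_comp_right hg v hm]
  gcongr
  refine (ContinuousMultilinearMap.norm_compContinuousLinearMap_le _ _).trans ?_
  rw [Finset.prod_const, Finset.card_univ, Fintype.card_fin]
  refine mul_le_of_le_one_left (by positivity) ?_
  rw [norm_iteratedFDeriv_eq_norm_iteratedDeriv]
  exact hbound m _

theorem continuous_of_nearId {V : Type*} [TopologicalSpace V] {c : ℝ} {G T : V × ℝ → ℝ}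
    (hc : c < 1) (hG : Continuous G) (hnear : ∀ v, NearId c fun a => G (v, a))
    (hT : ∀ v s, G (v, T (v, s)) = s) : Continuous T := by
  have hc' : 0 < 1 - c := sub_pos.2 hc
  refine continuous_iff_continuousAt.2 fun ⟨v', s'⟩ => tendsto_iff_dist_tendsto_zero.2 <|
    squeeze_zero (g := fun x : V × ℝ => (1 - c)⁻¹ * |x.2 - G (x.1, T (v', s'))|)
      (fun _ => dist_nonneg) (fun ⟨v, s⟩ => ?_)
      (Continuous.tendsto' (by fun_prop) _ _ (by simp [hT]))
  rw [inv_mul_eq_div, le_div_iff₀' hc', Real.dist_eq]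
  simpa only [hT] using (hnear v).mul_abs_sub_le (T (v, s)) (T (v', s'))

section ImplicitFunction

variable {V : Type*} [NormedAddCommGroup V] [NormedSpace ℝ V] {c : ℝ} {G T : V × ℝ → ℝ}

theorem abs_fderiv_apply_sub_one_le_of_nearId {v : V} {a : ℝ}
    (hG : DifferentiableAt ℝ G (v, a)) (hnear : NearId c fun a => G (v, a)) :
    |fderiv ℝ G (v, a) (0, 1) - 1| ≤ c := by
  have hc : 0 ≤ c := by simpa using (abs_nonneg _).trans (hnear 1 0)
  have hline : HasDerivAt (fun u => (v, u)) ((0 : V), (1 : ℝ)) a :=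
    (hasDerivAt_const a v).prodMk (hasDerivAt_id a)
  have hderiv := (hG.hasFDerivAt.comp_hasDerivAt a hline).sub (hasDerivAt_id a)
  have hlip : LipschitzWith c.toNNReal ((G ∘ fun u => (v, u)) - id) :=
    LipschitzWith.of_dist_le_mul fun a b => by
      rw [Real.dist_eq, Real.dist_eq, Pi.sub_apply, Pi.sub_apply, id, id, sub_sub_sub_comm,
        Real.coe_toNNReal c hc]
      exact hnear a b
  simpa [hc] using hderiv.hasFDerivAt.le_of_lipschitz hlip

theorem bijective_fst_prod {L : V × ℝ →L[ℝ] ℝ} (hL : L (0, 1) ≠ 0) :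
    Function.Bijective ((ContinuousLinearMap.fst ℝ V ℝ).prod L) := by
  have hL_apply (v : V) (a : ℝ) : L (v, a) = L (v, 0) + a * L (0, 1) := by
    rw [← smul_eq_mul, ← map_smul, ← map_add]
    simp
  constructor
  · rw [injective_iff_map_eq_zero]
    rintro ⟨v, a⟩ h
    obtain ⟨rfl, h⟩ : v = 0 ∧ L (v, a) = 0 := by simpa using h
    rw [hL_apply, Prod.mk_zero_zero, map_zero, zero_add] at h
    rw [(mul_eq_zero_iff_right hL).1 h, Prod.mk_zero_zero]
  · rintro ⟨v, b⟩
    refine ⟨(v, (b - L (v, 0)) / L (0, 1)), Prod.ext rfl ?_⟩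
    change L _ = b
    rw [hL_apply, div_mul_cancel₀ _ hL, add_sub_cancel]

theorem contDiff_of_nearId [CompleteSpace V] {n : WithTop ℕ∞} (hn : n ≠ 0) (hc : c < 1)
    (hG : ContDiff ℝ n G) (hnear : ∀ v, NearId c fun a => G (v, a))
    (hT : ∀ v s, G (v, T (v, s)) = s) : ContDiff ℝ n T := by
  have hTG (v : V) (a : ℝ) : T (v, G (v, a)) = a :=
    ((hnear v).strictMono hc).injective (hT v _)
  have hTcont := continuous_of_nearId hc hG.continuous hnear hT
  let Φ : V × ℝ ≃ₜ V × ℝ :=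
    { toFun := fun x => (x.1, G x)
      invFun := fun x => (x.1, T x)
      left_inv := fun x => by simp [hTG]
      right_inv := fun x => by simp [hT]
      continuous_toFun := continuous_fst.prodMk hG.continuous
      continuous_invFun := continuous_fst.prodMk hTcont }
  have hdiff := hG.differentiable hn
  have hne (x : V × ℝ) : fderiv ℝ G x (0, 1) ≠ 0 := fun h => by
    have h1 := abs_fderiv_apply_sub_one_le_of_nearId (hdiff x) (hnear x.1)
    rw [h, zero_sub, abs_neg, abs_one] at h1
    exact hc.not_ge h1
  let Φ' (x : V × ℝ) : (V × ℝ) ≃L[ℝ] (V × ℝ) := ContinuousLinearEquiv.ofBijective _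
    (LinearMap.ker_eq_bot.2 (bijective_fst_prod (hne x)).injective)
    (LinearMap.range_eq_top.2 (bijective_fst_prod (hne x)).surjective)
  exact contDiff_snd.comp <| Φ.contDiff_symm (f₀' := Φ')
    (fun x => hasFDerivAt_fst.prodMk (hdiff x).hasFDerivAt) (contDiff_fst.prodMk hG)

end ImplicitFunction

/-! ### The density and the vertical shift -/

namespace LiouvilleData

variable {t : ℝ} (D : LiouvilleData t)

/-- The derivative of the cocycle along the linear flow, which is also the density with respect to
Haar measure of the invariant measure of the reparametrised flow. -/
def density (p : Torus2) : ℝ := 1 + ∑' k, D.amp k * circleCos (D.phase k p)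

/-- The vertical displacement carrying the measure of density `D.density` to Haar measure: the
derivative of `a ↦ a + D.shift (x, y + a)` is `D.density (x, y + a)`. -/
def shift (p : Torus2) : ℝ := ∑' k, -(D.amp k / (2 * π * D.r k)) * circleSin (D.phase k p)

theorem abs_amp_mul_circleCos_le (k : ℕ) (θ : Torus1) : |D.amp k * circleCos θ| ≤ D.amp k := by
  rw [abs_mul, abs_of_pos (D.amp_pos k)]
  exact mul_le_of_le_one_right (D.amp_pos k).le (abs_circleCos_le_one θ)

theorem abs_density_sub_one_le (p : Torus2) : |D.density p - 1| ≤ 1 / 10 := by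
  rw [density, add_sub_cancel_left, ← Real.norm_eq_abs]
  exact (tsum_of_norm_bounded D.summable_amp.hasSum
    fun k => D.abs_amp_mul_circleCos_le k _).trans D.tsum_amp_le

@[fun_prop]
theorem continuous_density : Continuous D.density :=
  continuous_const.add <| continuous_tsum (fun k => by fun_prop) D.summable_amp
    fun k p => D.abs_amp_mul_circleCos_le k _

theorem hasDerivAt_cocycleTerm (k : ℕ) (p : Torus2) (τ : ℝ) :
    HasDerivAt (D.cocycleTerm k p) (D.amp k * circleCos (D.phase k (p + D.line τ))) τ := by
  obtain ⟨x, hx⟩ := QuotientAddGroup.mk_surjective (D.phase k p)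
  have hfreq := (D.freq_pos k).ne'
  have hterm : D.cocycleTerm k p = fun σ => D.amp k / (2 * π * D.freq k) *
      (Real.sin (2 * π * (x + D.freq k * σ)) - Real.sin (2 * π * x)) := by
    ext σ
    rw [cocycleTerm, ← hx, ← AddCircle.coe_add, circleSin_coe, circleSin_coe]
  rw [map_add, phase_line, ← hx, ← AddCircle.coe_add, circleCos_coe, hterm]
  have hinner : HasDerivAt (fun τ => 2 * π * (x + D.freq k * τ)) (2 * π * D.freq k) τ := by
    simpa using (((hasDerivAt_id τ).const_mul (D.freq k)).const_add x).const_mul (2 * π)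
  refine ((hinner.sin.sub_const _).const_mul _).congr_deriv ?_
  field_simp

theorem hasDerivAt_cocycle (p : Torus2) (τ : ℝ) :
    HasDerivAt (D.cocycle p) (D.density (p + D.line τ)) τ :=
  (hasDerivAt_id τ).add <| hasDerivAt_tsum D.summable_amp (fun k => D.hasDerivAt_cocycleTerm k p)
    (fun k _ => D.abs_amp_mul_circleCos_le k _) (D.summable_cocycleTerm p 0) τ

theorem cocycle_eq_mul_integral (p : Torus2) (τ : ℝ) :
    D.cocycle p τ = τ * ∫ u in (0 : ℝ)..1, D.density (p + D.line (u * τ)) := by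
  have hcont : Continuous fun u => D.density (p + D.line u) := by fun_prop
  rw [intervalIntegral.mul_integral_comp_mul_right (f := fun u => D.density (p + D.line u)),
    zero_mul, one_mul, intervalIntegral.integral_eq_sub_of_hasDerivAt
      (fun u _ => D.hasDerivAt_cocycle p u) (hcont.intervalIntegrable _ _), cocycle_zero, sub_zero]

/-- The linear form `(x, y) ↦ 2π (q k * x - r k * y)` on the plane lifting `D.phase k`. -/
def phaseLift (k : ℕ) : ℝ × ℝ →L[ℝ] ℝ :=
  (2 * π * D.q k) • ContinuousLinearMap.fst ℝ ℝ ℝ - (2 * π * D.r k) • ContinuousLinearMap.snd ℝ ℝ ℝ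

theorem phase_torusProj (k : ℕ) (z : ℝ × ℝ) :
    D.phase k (torusProj z) = ((D.q k * z.1 - D.r k * z.2 : ℝ) : Torus1) := by
  rw [phase_apply, torusProj, ← AddCircle.coe_nsmul, ← AddCircle.coe_nsmul, ← AddCircle.coe_sub,
    nsmul_eq_mul, nsmul_eq_mul]

theorem phaseLift_apply (k : ℕ) (z : ℝ × ℝ) :
    D.phaseLift k z = 2 * π * (D.q k * z.1 - D.r k * z.2) := by
  simp only [phaseLift, sub_apply, smul_apply, ContinuousLinearMap.coe_fst',
    ContinuousLinearMap.coe_snd', smul_eq_mul]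
  ring

theorem norm_phaseLift_le (k : ℕ) : ‖D.phaseLift k‖ ≤ 6 * π * D.q k := by
  refine ContinuousLinearMap.opNorm_le_bound _ (by positivity) fun z => ?_
  have hr := D.r_le k
  have hz : |D.q k * z.1 - D.r k * z.2| ≤ D.q k * |z.1| + D.r k * |z.2| := by
    simpa [abs_mul] using abs_sub (D.q k * z.1) (D.r k * z.2)
  rw [phaseLift_apply, Real.norm_eq_abs, abs_mul, abs_of_pos Real.two_pi_pos]
  calc _ ≤ 2 * π * (D.q k * ‖z‖ + 2 * D.q k * ‖z‖) := by
        refine mul_le_mul_of_nonneg_left (hz.trans ?_) Real.two_pi_pos.le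
        gcongr
        exacts [norm_fst_le z, norm_snd_le z]
    _ = _ := by ring

theorem contDiff_tsum_mul_comp_phaseLift {g : ℝ → ℝ} (hg : ContDiff ℝ (⊤ : ℕ∞) g)
    (hbound : ∀ m x, |iteratedDeriv m g x| ≤ 1) {a : ℕ → ℝ} (ha : ∀ k, |a k| ≤ D.amp k) :
    ContDiff ℝ (⊤ : ℕ∞) fun z => ∑' k, a k * g (D.phaseLift k z) := by
  refine contDiff_tsum_mul_comp hg hbound fun m => Summable.of_nonneg_of_le
    (fun k => by positivity) (fun k => ?_) ((D.summable_q_pow_mul_amp m).mul_left ((6 * π) ^ m))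
  calc |a k| * ‖D.phaseLift k‖ ^ m ≤ D.amp k * (6 * π * D.q k) ^ m := by
        gcongr
        exacts [(D.amp_pos k).le, ha k, D.norm_phaseLift_le k]
    _ = _ := by rw [mul_pow]; ring

theorem contDiff_density_comp_torusProj :
    ContDiff ℝ (⊤ : ℕ∞) fun z => D.density (torusProj z) := by
  simp only [density, phase_torusProj, circleCos_coe, ← phaseLift_apply]
  exact contDiff_const.add <| D.contDiff_tsum_mul_comp_phaseLift Real.contDiff_cos
    Real.abs_iteratedDeriv_cos_le_one fun k => (abs_of_pos (D.amp_pos k)).le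

theorem abs_neg_amp_div_two_pi_mul_r_le (k : ℕ) : |-(D.amp k / (2 * π * D.r k))| ≤ D.amp k := by
  rw [abs_neg, abs_of_nonneg (div_nonneg (D.amp_pos k).le (by positivity))]
  refine div_le_self (D.amp_pos k).le ?_
  nlinarith [Real.pi_gt_three, D.one_le_r k]

theorem contDiff_shift_comp_torusProj : ContDiff ℝ (⊤ : ℕ∞) fun z => D.shift (torusProj z) := by
  simp only [shift, phase_torusProj, circleSin_coe, ← phaseLift_apply]
  exact D.contDiff_tsum_mul_comp_phaseLift Real.contDiff_sin Real.abs_iteratedDeriv_sin_le_one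
    D.abs_neg_amp_div_two_pi_mul_r_le

theorem summable_shift (p : Torus2) :
    Summable fun k => -(D.amp k / (2 * π * D.r k)) * circleSin (D.phase k p) :=
  Summable.of_norm_bounded D.summable_amp fun k => by
    rw [norm_mul]
    exact (mul_le_of_le_one_right (norm_nonneg _) (abs_circleSin_le_one _)).trans
      (D.abs_neg_amp_div_two_pi_mul_r_le k)

theorem torusProj_add_line (z : ℝ × ℝ) (τ : ℝ) :
    torusProj z + D.line τ = torusProj (z + (D.slope * τ, τ)) := by
  simp only [torusProj, line_apply, Prod.mk_add_mk, Prod.fst_add, Prod.snd_add, AddCircle.coe_add]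

theorem contDiff_cocycle_comp_torusProj :
    ContDiff ℝ (⊤ : ℕ∞) fun x : (ℝ × ℝ) × ℝ => D.cocycle (torusProj x.1) x.2 := by
  have hpath : ContDiff ℝ (⊤ : ℕ∞) fun y : ((ℝ × ℝ) × ℝ) × ℝ =>
      y.1.1 + (D.slope * (y.2 * y.1.2), y.2 * y.1.2) := by fun_prop
  have hdensity : ContDiff ℝ (⊤ : ℕ∞) fun y : ((ℝ × ℝ) × ℝ) × ℝ =>
      D.density (torusProj (y.1.1 + (D.slope * (y.2 * y.1.2), y.2 * y.1.2))) :=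
    D.contDiff_density_comp_torusProj.comp hpath
  simpa only [cocycle_eq_mul_integral, torusProj_add_line] using
    contDiff_snd.mul (contDiff_intervalIntegral_zero_one hdensity)

theorem contDiff_time_comp_torusProj :
    ContDiff ℝ (⊤ : ℕ∞) fun x : (ℝ × ℝ) × ℝ => D.time (torusProj x.1) x.2 :=
  contDiff_of_nearId (G := fun x => D.cocycle (torusProj x.1) x.2)
    (T := fun x => D.time (torusProj x.1) x.2) (by simp) (by norm_num)
    D.contDiff_cocycle_comp_torusProj (fun z => D.nearId_cocycle (torusProj z))
    fun z s => D.cocycle_time (torusProj z) s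

end LiouvilleData

/-! ### The conjugating shear -/

/-- The horizontal one-parameter subgroup of the torus. -/
def horiz : ℝ →+ Torus2 where
  toFun a := ((a : Torus1), 0)
  map_zero' := by simp
  map_add' a b := by simp

theorem horiz_apply (a : ℝ) : horiz a = ((a : Torus1), 0) := rfl

@[fun_prop]
theorem continuous_horiz : Continuous horiz :=
  (AddCircle.continuous_mk' 1).prodMk continuous_const

theorem norm_horiz_le (a : ℝ) : ‖horiz a‖ ≤ |a| := by
  simpa [horiz_apply, Prod.norm_def] using norm_coe_circle_le a

/-- The vertical one-parameter subgroup of the torus. -/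
def vert : ℝ →+ Torus2 where
  toFun a := (0, (a : Torus1))
  map_zero' := by simp
  map_add' a b := by simp

theorem vert_apply (a : ℝ) : vert a = (0, (a : Torus1)) := rfl

theorem lipschitzWith_vert : LipschitzWith 1 vert := by
  simpa using AddMonoidHomClass.lipschitz_of_bound vert 1 fun a => by
    simpa [vert_apply, Prod.norm_def] using norm_coe_circle_le a

theorem torusProj_add_vert (z : ℝ × ℝ) (a : ℝ) :
    torusProj z + vert a = torusProj (z + (0, a)) := by
  simp only [torusProj, vert_apply, Prod.mk_add_mk, Prod.fst_add, Prod.snd_add, AddCircle.coe_add,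
    AddCircle.coe_zero]

theorem iterate_flow {α : Type*} [TopologicalSpace α] (φ : Flow ℝ α) (s : ℝ) (n : ℕ) :
    (φ s)^[n] = φ (n * s) := by
  induction n with
  | zero => rw [Nat.cast_zero, zero_mul, Function.iterate_zero, φ.map_zero]
  | succ n ih =>
    ext1 p
    rw [Function.iterate_succ_apply', ih, Nat.cast_succ, add_one_mul, add_comm, Flow.map_add]

theorem isCkTorusDiffeo_flow {φ : Flow ℝ Torus2} {n : ℕ∞}
    (hlift : ∀ s, ∃ F : ℝ × ℝ → ℝ × ℝ, ContDiff ℝ n F ∧ IsLiftOf F (φ s)) (s : ℝ) :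
    IsCkTorusDiffeo n (φ s) := by
  have hinj := (φ.toHomeomorph s).injective
  have hinv : Function.invFun (φ s) = φ (-s) := by
    ext1 p
    apply hinj
    exact (Function.invFun_eq ((φ.toHomeomorph s).surjective p)).trans
      ((φ.toHomeomorph s).apply_symm_apply p).symm
  exact ⟨(φ.toHomeomorph s).bijective, hlift s, hinv ▸ hlift (-s)⟩

namespace LiouvilleData

variable {t : ℝ} (D : LiouvilleData t)

theorem phase_horiz (k : ℕ) (a : ℝ) : D.phase k (horiz a) = ((D.q k * a : ℝ) : Torus1) := by
  simp [phase_apply, horiz_apply]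

theorem phase_vert (k : ℕ) (a : ℝ) : D.phase k (vert a) = ((-(D.r k * a) : ℝ) : Torus1) := by
  simp [phase_apply, vert_apply]

theorem norm_phase_le (k : ℕ) (p : Torus2) : ‖D.phase k p‖ ≤ 3 * D.q k * ‖p‖ := by
  have hr := D.r_le k
  rw [phase_apply]
  calc _ ≤ ‖D.q k • p.1‖ + ‖D.r k • p.2‖ := norm_sub_le _ _
    _ ≤ D.q k * ‖p.1‖ + D.r k * ‖p.2‖ := add_le_add norm_nsmul_le norm_nsmul_le
    _ ≤ D.q k * ‖p‖ + 2 * D.q k * ‖p‖ := by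
        gcongr
        exacts [norm_fst_le p, norm_snd_le p]
    _ = _ := by ring

theorem abs_shift_sub_le {p p' : Torus2} {b : ℕ → ℝ} (hb : Summable fun k => D.amp k * b k)
    (hsin : ∀ k, |circleSin (D.phase k p) - circleSin (D.phase k p')| ≤ 2 * π * D.r k * b k) :
    |D.shift p - D.shift p'| ≤ ∑' k, D.amp k * b k := by
  rw [shift, shift, ← (D.summable_shift p).tsum_sub (D.summable_shift p'), ← Real.norm_eq_abs]
  refine tsum_of_norm_bounded hb.hasSum fun k => ?_
  have hr : (0 : ℝ) < D.r k := one_pos.trans_le (D.one_le_r k)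
  have hcoef : 0 ≤ D.amp k / (2 * π * D.r k) := div_nonneg (D.amp_pos k).le (by positivity)
  rw [← mul_sub, norm_mul, norm_neg, Real.norm_eq_abs, Real.norm_eq_abs, abs_of_nonneg hcoef]
  calc _ ≤ D.amp k / (2 * π * D.r k) * (2 * π * D.r k * b k) := by gcongr; exact hsin k
    _ = _ := by field_simp

theorem exists_lipschitzWith_shift : ∃ K, LipschitzWith K D.shift := by
  have hsum : Summable fun k => D.amp k * (3 * D.q k) :=
    (D.summable_q_pow_mul_amp 1).mul_left 3 |>.congr fun k => by ring
  refine ⟨_, LipschitzWith.of_dist_le' (K := ∑' k, D.amp k * (3 * D.q k)) fun p p' => ?_⟩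
  rw [Real.dist_eq, dist_eq_norm, ← tsum_mul_right]
  simp only [mul_assoc (D.amp _)]
  refine D.abs_shift_sub_le ((hsum.mul_right ‖p - p'‖).congr fun k => mul_assoc _ _ _) fun k => ?_
  have hr := D.one_le_r k
  calc _ ≤ 2 * π * ‖D.phase k (p - p')‖ := (abs_circleSin_sub_le _ _).trans_eq (by rw [map_sub])
    _ ≤ 2 * π * 1 * (3 * D.q k * ‖p - p'‖) := by
        rw [mul_one]
        gcongr
        exact D.norm_phase_le k _
    _ ≤ _ := by gcongr

@[fun_prop]
theorem continuous_shift : Continuous D.shift := D.exists_lipschitzWith_shift.choose_spec.continuous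

/-- The action of the shear on the vertical circle through `p`, in the coordinate `a ↦ p + vert a`
of its universal cover. -/
def fibreMap (p : Torus2) (a : ℝ) : ℝ := a + D.shift (p + vert a)

theorem nearId_fibreMap (p : Torus2) : NearId (1 / 10) (D.fibreMap p) := fun a b => by
  rw [fibreMap, fibreMap, show a + D.shift (p + vert a) - (b + D.shift (p + vert b)) - (a - b) =
    D.shift (p + vert a) - D.shift (p + vert b) by ring]
  refine (D.abs_shift_sub_le (b := fun _ => |a - b|) (D.summable_amp.mul_right _)
    fun k => ?_).trans ?_
  · rw [map_add, map_add, phase_vert, phase_vert]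
    refine (abs_circleSin_add_sub_le _ _ _).trans_eq ?_
    rw [neg_sub_neg, ← mul_sub, abs_mul, Nat.abs_cast, abs_sub_comm]
    ring
  · rw [tsum_mul_right]
    exact mul_le_mul_of_nonneg_right D.tsum_amp_le (abs_nonneg _)

theorem fibreMap_bijective (p : Torus2) : Function.Bijective (D.fibreMap p) :=
  (D.nearId_fibreMap p).bijective (by norm_num)

/-- The inverse of `D.fibreMap p`. -/
def fibreInv (p : Torus2) (s : ℝ) : ℝ := (Equiv.ofBijective _ (D.fibreMap_bijective p)).symm s

@[simp]
theorem fibreMap_fibreInv (p : Torus2) (s : ℝ) : D.fibreMap p (D.fibreInv p s) = s :=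
  (Equiv.ofBijective _ (D.fibreMap_bijective p)).apply_symm_apply s

theorem fibreInv_add_vert_shift (p : Torus2) :
    D.fibreInv (p + vert (D.shift p)) 0 = -D.shift p := by
  apply (D.fibreMap_bijective (p + vert (D.shift p))).injective
  rw [fibreMap_fibreInv, fibreMap, map_neg, add_neg_cancel_right, neg_add_cancel]

theorem exists_lipschitzWith_fibreInv (s : ℝ) :
    ∃ K, LipschitzWith K fun p => D.fibreInv p s := by
  obtain ⟨K, hK⟩ := D.exists_lipschitzWith_shift
  refine ⟨_, LipschitzWith.of_dist_le' (K := 10 / 9 * K) fun p p' => ?_⟩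
  set a := D.fibreInv p s
  set a' := D.fibreInv p' s
  have hnear := (D.nearId_fibreMap p).mul_abs_sub_le a a'
  have hshift := hK.dist_le_mul (p' + vert a') (p + vert a')
  have heq : D.fibreMap p a - D.fibreMap p a' = D.shift (p' + vert a') - D.shift (p + vert a') := by
    rw [D.fibreMap_fibreInv p s, ← D.fibreMap_fibreInv p' s, fibreMap, fibreMap]
    exact add_sub_add_left_eq_sub _ _ _
  rw [Real.dist_eq, dist_add_right, dist_comm] at hshift
  rw [heq] at hnear
  rw [Real.dist_eq]
  linarith

/-- The vertical shear `p ↦ p + vert (D.shift p)`. -/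
def shear : Torus2 ≃ₜ Torus2 where
  toFun p := p + vert (D.shift p)
  invFun p := p + vert (D.fibreInv p 0)
  left_inv p := by
    beta_reduce
    rw [fibreInv_add_vert_shift, map_neg, add_neg_cancel_right]
  right_inv p := by
    have h : D.shift (p + vert (D.fibreInv p 0)) = -D.fibreInv p 0 := by
      rw [eq_neg_iff_add_eq_zero, add_comm]
      exact D.fibreMap_fibreInv p 0
    beta_reduce
    rw [h, map_neg, add_neg_cancel_right]
  continuous_toFun := continuous_id.add (lipschitzWith_vert.continuous.comp D.continuous_shift)
  continuous_invFun := by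
    obtain ⟨K, hK⟩ := D.exists_lipschitzWith_fibreInv 0
    exact continuous_id.add (lipschitzWith_vert.continuous.comp hK.continuous)

theorem exists_lipschitzWith_shear : ∃ K, LipschitzWith K D.shear := by
  obtain ⟨K, hK⟩ := D.exists_lipschitzWith_shift
  exact ⟨_, LipschitzWith.id.add (lipschitzWith_vert.comp hK)⟩

theorem exists_lipschitzWith_shear_symm : ∃ K, LipschitzWith K D.shear.symm := by
  obtain ⟨K, hK⟩ := D.exists_lipschitzWith_fibreInv 0
  exact ⟨_, LipschitzWith.id.add (lipschitzWith_vert.comp hK)⟩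

/-- The reparametrised flow in the coordinates in which its invariant measure is Haar measure. -/
def haarFlow : Flow ℝ Torus2 where
  toFun s p := D.shear (D.flow s (D.shear.symm p))
  cont' := by
    have hflow := D.flow.continuous continuous_fst (D.shear.symm.continuous.comp
      (continuous_snd (X := ℝ)))
    exact D.shear.continuous.comp hflow
  map_add' s u p := by rw [Homeomorph.symm_apply_apply, Flow.map_add]
  map_zero' p := by rw [Flow.map_zero_apply, Homeomorph.apply_symm_apply]

theorem haarFlow_apply (s : ℝ) (p : Torus2) :
    D.haarFlow s p = D.shear (D.flow s (D.shear.symm p)) := rfl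

theorem exists_contDiff_lift_flow (s : ℝ) :
    ∃ F : ℝ × ℝ → ℝ × ℝ, ContDiff ℝ (⊤ : ℕ∞) F ∧ IsLiftOf F (D.flow s) := by
  have htime : ContDiff ℝ (⊤ : ℕ∞) fun z : ℝ × ℝ => D.time (torusProj z) s :=
    ContDiff.comp (g := fun x : (ℝ × ℝ) × ℝ => D.time (torusProj x.1) x.2) (f := fun z => (z, s))
      D.contDiff_time_comp_torusProj (contDiff_id.prodMk contDiff_const)
  exact ⟨fun z => z + (D.slope * D.time (torusProj z) s, D.time (torusProj z) s),
    contDiff_id.add ((contDiff_const.mul htime).prodMk htime),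
    fun z => (D.torusProj_add_line z _).symm⟩

theorem exists_contDiff_lift_shear :
    ∃ F : ℝ × ℝ → ℝ × ℝ, ContDiff ℝ (⊤ : ℕ∞) F ∧ IsLiftOf F D.shear :=
  ⟨fun z => z + (0, D.shift (torusProj z)),
    contDiff_id.add (contDiff_const.prodMk D.contDiff_shift_comp_torusProj),
    fun z => (torusProj_add_vert z _).symm⟩

theorem exists_contDiff_lift_shear_symm :
    ∃ F : ℝ × ℝ → ℝ × ℝ, ContDiff ℝ (⊤ : ℕ∞) F ∧ IsLiftOf F D.shear.symm := by
  have hpath : ContDiff ℝ (⊤ : ℕ∞) fun x : (ℝ × ℝ) × ℝ => x.1 + (0, x.2) := by fun_prop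
  have hmap : ContDiff ℝ (⊤ : ℕ∞) fun x : (ℝ × ℝ) × ℝ => D.fibreMap (torusProj x.1) x.2 := by
    simp only [fibreMap, torusProj_add_vert]
    exact contDiff_snd.add (D.contDiff_shift_comp_torusProj.comp hpath)
  have hinv : ContDiff ℝ (⊤ : ℕ∞) fun x : (ℝ × ℝ) × ℝ => D.fibreInv (torusProj x.1) x.2 :=
    contDiff_of_nearId (G := fun x => D.fibreMap (torusProj x.1) x.2)
      (T := fun x => D.fibreInv (torusProj x.1) x.2) (by simp) (by norm_num) hmap
      (fun z => D.nearId_fibreMap (torusProj z)) fun z s => D.fibreMap_fibreInv (torusProj z) s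
  have hinv_zero : ContDiff ℝ (⊤ : ℕ∞) fun z : ℝ × ℝ => D.fibreInv (torusProj z) 0 :=
    ContDiff.comp (f := fun z => (z, (0 : ℝ))) hinv (contDiff_id.prodMk contDiff_const)
  exact ⟨fun z => z + (0, D.fibreInv (torusProj z) 0),
    contDiff_id.add (contDiff_const.prodMk hinv_zero), fun z => (torusProj_add_vert z _).symm⟩

theorem isCkTorusDiffeo_haarFlow (s : ℝ) : IsCkTorusDiffeo ⊤ (D.haarFlow s) := by
  refine isCkTorusDiffeo_flow (fun s => ?_) s
  obtain ⟨F, hF, hFlift⟩ := D.exists_contDiff_lift_flow s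
  obtain ⟨G, hG, hGlift⟩ := D.exists_contDiff_lift_shear
  obtain ⟨H, hH, hHlift⟩ := D.exists_contDiff_lift_shear_symm
  exact ⟨fun z => G (F (H z)), hG.comp (hF.comp hH),
    fun z => by rw [hGlift, hFlift, hHlift, haarFlow_apply]⟩

end LiouvilleData

/-! ### Invariant measures -/

theorem exists_forall_abs_le_of_continuous {X : Type*} [TopologicalSpace X] [CompactSpace X]
    {g : X → ℝ} (hg : Continuous g) : ∃ M, ∀ p, |g p| ≤ M := by
  obtain ⟨M, hM⟩ := isCompact_univ.exists_bound_of_continuousOn hg.continuousOn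
  exact ⟨M, fun p => hM p (mem_univ p)⟩

theorem abs_intervalIntegral_add_sub_le {g : ℝ → ℝ} (hg : Continuous g) {M : ℝ}
    (hM : ∀ σ, |g σ| ≤ M) (b s : ℝ) :
    |(∫ σ in s..b + s, g σ) - ∫ σ in (0 : ℝ)..b, g σ| ≤ 2 * M * |s| := by
  have hint (a b : ℝ) : IntervalIntegrable g volume a b := hg.intervalIntegrable a b
  have hb := intervalIntegral.norm_integral_le_of_norm_le_const (f := g) (a := b) (b := b + s)
    fun σ _ => hM σ
  have h0 := intervalIntegral.norm_integral_le_of_norm_le_const (f := g) (a := 0) (b := s)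
    fun σ _ => hM σ
  rw [add_sub_cancel_left, Real.norm_eq_abs] at hb
  rw [sub_zero, Real.norm_eq_abs] at h0
  have hcomm := intervalIntegral.integral_interval_sub_interval_comm (hint s (b + s)) (hint 0 b)
    (hint s 0)
  rw [hcomm, intervalIntegral.integral_symm 0 s, intervalIntegral.integral_symm b (b + s)]
  rw [abs_le] at *
  constructor <;> linarith [hb.1, hb.2, h0.1, h0.2]

theorem eq_of_forall_mul_abs_sub_le {a b C : ℝ} (h : ∀ N : ℝ, 0 ≤ N → N * |a - b| ≤ C) :
    a = b := by
  by_contra hne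
  have hpos : 0 < |a - b| := abs_pos.2 (sub_ne_zero.2 hne)
  have hC : 0 ≤ C := by simpa using h 0 le_rfl
  have := h ((C + 1) / |a - b|) (by positivity)
  rw [div_mul_cancel₀ _ hpos.ne'] at this
  linarith

theorem measurePreserving_of_forall_integral_comp_eq {X Y : Type*} [TopologicalSpace X]
    [MeasurableSpace X] [OpensMeasurableSpace X] [TopologicalSpace Y] [MeasurableSpace Y]
    [HasOuterApproxClosed Y] [BorelSpace Y] {μ : Measure X} {ν : Measure Y} [IsFiniteMeasure μ]
    [IsFiniteMeasure ν] {T : X → Y} (hT : Continuous T)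
    (h : ∀ g : Y → ℝ, Continuous g → ∫ x, g (T x) ∂μ = ∫ y, g y ∂ν) : MeasurePreserving T μ ν := by
  refine ⟨hT.measurable, ext_of_forall_integral_eq_of_IsFiniteMeasure fun g => ?_⟩
  rw [integral_map hT.measurable.aemeasurable g.continuous.aestronglyMeasurable]
  exact h g g.continuous

instance : IsProbabilityMeasure (volume : Measure Torus1) :=
  ⟨by rw [AddCircle.measure_univ, ENNReal.ofReal_one]⟩

instance : IsProbabilityMeasure (volume : Measure Torus2) :=
  inferInstanceAs (IsProbabilityMeasure ((volume : Measure Torus1).prod volume))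

instance : (volume : Measure Torus2).IsAddLeftInvariant :=
  inferInstanceAs ((volume : Measure Torus1).prod volume).IsAddLeftInvariant

namespace LiouvilleData

variable {t : ℝ} (D : LiouvilleData t)

theorem intervalIntegral_flow_line {g : Torus2 → ℝ} (hg : Continuous g) (s N : ℝ) (p : Torus2) :
    ∫ u in (0 : ℝ)..N, g (D.flow s (p + D.line u)) * D.density (p + D.line u) =
      ∫ σ in s..D.cocycle p N + s, g (D.flow σ p) := by
  have horbit : Continuous fun σ => g (D.flow (σ + s) p) :=
    hg.comp (D.flow.continuous (by fun_prop) continuous_const)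
  have hsubst := intervalIntegral.integral_comp_mul_deriv (a := 0) (b := N)
    (fun u _ => D.hasDerivAt_cocycle p u) (by fun_prop) horbit
  rw [cocycle_zero, intervalIntegral.integral_comp_add_right (fun σ => g (D.flow σ p)),
    zero_add] at hsubst
  rw [← hsubst]
  congr 1 with u
  rw [Function.comp_apply, add_comm (D.cocycle p u), Flow.map_add, flow_cocycle]

theorem mul_integral_eq_integral_intervalIntegral_line {g : Torus2 → ℝ} (hg : Continuous g) {N : ℝ}
    (hN : 0 ≤ N) : N * ∫ p, g p = ∫ p, ∫ u in (0 : ℝ)..N, g (p + D.line u) := by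
  obtain ⟨M, hM⟩ := exists_forall_abs_le_of_continuous hg
  have hline : Continuous fun x : Torus2 × ℝ => g (x.1 + D.line x.2) := by fun_prop
  simp only [intervalIntegral.integral_of_le hN]
  rw [integral_integral_swap]
  · simp only [integral_add_right_eq_self]
    simp [hN]
  · exact Integrable.of_bound hline.aestronglyMeasurable M (Eventually.of_forall fun x => hM _)

theorem continuous_intervalIntegral_line {g : Torus2 → ℝ} (hg : Continuous g) (N : ℝ) :
    Continuous fun p => ∫ u in (0 : ℝ)..N, g (p + D.line u) :=
  intervalIntegral.continuous_parametric_intervalIntegral_of_continuous' (by fun_prop) _ _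

theorem integral_flow_mul_density {g : Torus2 → ℝ} (hg : Continuous g) (s : ℝ) :
    ∫ p, g (D.flow s p) * D.density p = ∫ p, g p * D.density p := by
  obtain ⟨M, hM⟩ := exists_forall_abs_le_of_continuous hg
  have hflow : Continuous fun p => g (D.flow s p) * D.density p :=
    (hg.comp (D.flow.continuous continuous_const continuous_id)).mul D.continuous_density
  have hdensity : Continuous fun p => g p * D.density p := hg.mul D.continuous_density
  have hintegrable {h : Torus2 → ℝ} (hh : Continuous h) : Integrable h :=
    hh.integrable_of_hasCompactSupport (HasCompactSupport.of_compactSpace _)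
  refine eq_of_forall_mul_abs_sub_le (C := 2 * M * |s|) fun N hN => ?_
  rw [← abs_of_nonneg (mul_nonneg hN (abs_nonneg _)), abs_mul, abs_abs, ← abs_mul, mul_sub,
    D.mul_integral_eq_integral_intervalIntegral_line hflow hN,
    D.mul_integral_eq_integral_intervalIntegral_line hdensity hN,
    ← integral_sub (hintegrable (D.continuous_intervalIntegral_line hflow N))
      (hintegrable (D.continuous_intervalIntegral_line hdensity N)), ← Real.norm_eq_abs]
  refine (norm_integral_le_of_norm_le_const (Eventually.of_forall fun p => ?_)).trans_eq
    (by rw [probReal_univ, mul_one])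
  have h0 := D.intervalIntegral_flow_line hg 0 N p
  simp only [Flow.map_zero_apply, add_zero] at h0
  rw [D.intervalIntegral_flow_line hg s N p, h0]
  exact abs_intervalIntegral_add_sub_le
    (hg.comp (D.flow.continuous continuous_id continuous_const)) (fun σ => hM _) _ s

/-- The invariant measure of the reparametrised flow: its density is `D.density`. -/
def flowMeasure : Measure Torus2 := volume.withDensity fun p => ((D.density p).toNNReal : ℝ≥0∞)

theorem density_pos (p : Torus2) : 0 < D.density p := by
  linarith [(abs_le.1 (D.abs_density_sub_one_le p)).1]

theorem integral_flowMeasure (g : Torus2 → ℝ) :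
    ∫ p, g p ∂D.flowMeasure = ∫ p, g p * D.density p := by
  rw [flowMeasure, integral_withDensity_eq_integral_smul (by fun_prop)]
  congr 1 with p
  rw [NNReal.smul_def, Real.coe_toNNReal _ (D.density_pos p).le, smul_eq_mul, mul_comm]

theorem measurable_coe_toNNReal_density :
    Measurable fun p => ((D.density p).toNNReal : ℝ≥0∞) := by
  have := D.continuous_density
  fun_prop

instance : IsFiniteMeasure D.flowMeasure :=
  isFiniteMeasure_withDensity_ofReal <| (D.continuous_density.integrable_of_hasCompactSupport
    (HasCompactSupport.of_compactSpace _)).2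

theorem measurePreserving_flow (s : ℝ) :
    MeasurePreserving (D.flow s) D.flowMeasure D.flowMeasure := by
  refine measurePreserving_of_forall_integral_comp_eq
    (D.flow.continuous continuous_const continuous_id) fun g hg => ?_
  rw [integral_flowMeasure, integral_flowMeasure, D.integral_flow_mul_density hg]

theorem hasDerivAt_add_shift (x b : ℝ) :
    HasDerivAt (fun b : ℝ => b + D.shift (torusProj (x, b))) (D.density (torusProj (x, b))) b := by
  simp only [shift, density, phase_torusProj, circleSin_coe, circleCos_coe]
  have hterm (k : ℕ) (b : ℝ) :
      HasDerivAt
        (fun b => -(D.amp k / (2 * π * D.r k)) * Real.sin (2 * π * (D.q k * x - D.r k * b)))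
        (D.amp k * Real.cos (2 * π * (D.q k * x - D.r k * b))) b := by
    have hr : (D.r k : ℝ) ≠ 0 := (one_pos.trans_le (D.one_le_r k)).ne'
    have hphase : HasDerivAt (fun b => 2 * π * (D.q k * x - D.r k * b)) (2 * π * -D.r k) b := by
      have hlinear := ((hasDerivAt_id b).const_mul (D.r k : ℝ)).const_sub (D.q k * x)
      simpa using hlinear.const_mul (2 * π)
    refine (hphase.sin.const_mul _).congr_deriv ?_
    field_simp
  have hsummable := D.summable_shift (torusProj (x, 0))
  simp only [phase_torusProj, circleSin_coe] at hsummable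
  refine (hasDerivAt_id b).add (hasDerivAt_tsum D.summable_amp hterm (fun k b => ?_) hsummable b)
  rw [← circleCos_coe]
  exact D.abs_amp_mul_circleCos_le k _

theorem integral_shear_mul_density {g : Torus2 → ℝ} (hg : Continuous g) :
    ∫ p, g (D.shear p) * D.density p = ∫ p, g p := by
  have hshear : Continuous fun p => g (D.shear p) * D.density p :=
    (hg.comp D.shear.continuous).mul D.continuous_density
  have hintegrable {h : Torus2 → ℝ} (hh : Continuous h) :
      Integrable h ((volume : Measure Torus1).prod volume) :=
    hh.integrable_of_hasCompactSupport (HasCompactSupport.of_compactSpace _)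
  rw [Measure.volume_eq_prod, integral_prod _ (hintegrable hshear),
    integral_prod _ (hintegrable hg)]
  congr 1 with X
  obtain ⟨x, rfl⟩ := QuotientAddGroup.mk_surjective X
  have hproj : Continuous fun b : ℝ => torusProj (x, b) := by
    unfold torusProj
    fun_prop
  have hsubst := intervalIntegral.integral_comp_mul_deriv (a := 0) (b := 0 + 1)
    (g := fun σ => g (torusProj (x, σ))) (fun b _ => D.hasDerivAt_add_shift x b)
    (D.continuous_density.comp hproj).continuousOn (hg.comp hproj)
  have hperiod : torusProj (x, 0 + 1) = torusProj (x, 0) := by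
    rw [torusProj, torusProj, AddCircle.coe_add_period]
  rw [← AddCircle.intervalIntegral_preimage 1 0,
    ← AddCircle.intervalIntegral_preimage 1 (0 + D.shift (torusProj (x, 0)))]
  rw [hperiod, add_right_comm] at hsubst
  refine Eq.trans ?_ hsubst
  congr 1 with b
  change g (torusProj (x, b) + vert _) * _ = _
  rw [torusProj_add_vert, Prod.mk_add_mk, add_zero]
  rfl

theorem measurePreserving_shear : MeasurePreserving D.shear D.flowMeasure volume := by
  refine measurePreserving_of_forall_integral_comp_eq D.shear.continuous fun g hg => ?_
  rw [integral_flowMeasure, D.integral_shear_mul_density hg]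

theorem measurePreserving_haarFlow (s : ℝ) : MeasurePreserving (D.haarFlow s) volume volume :=
  D.measurePreserving_shear.comp <| (D.measurePreserving_flow s).comp <|
    MeasurePreserving.symm D.shear.toMeasurableEquiv D.measurePreserving_shear

end LiouvilleData

/-! ### Displacement of nearby orbits -/

namespace LiouvilleData

variable {t : ℝ} (D : LiouvilleData t)

theorem abs_tsum_sub_apply_le {h A : ℕ → ℝ} {B : ℝ} {k : ℕ} (hh : Summable h)
    (hA : ∀ j < k, |h j| ≤ A j) (hB0 : 0 ≤ B) (hB : ∀ j, k < j → |h j| ≤ D.amp j * B) :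
    |∑' j, h j - h k| ≤ ∑ j ∈ Finset.range k, A j + B * D.freq k ^ 2 := by
  have hsplit : ∑' j, h j - h k = ∑ j ∈ Finset.range k, h j + ∑' j, h (j + (k + 1)) := by
    rw [← hh.sum_add_tsum_nat_add (k + 1), Finset.sum_range_succ]
    ring
  have hamp : Summable fun j => D.amp (j + (k + 1)) :=
    (summable_nat_add_iff (k + 1)).2 D.summable_amp
  have hhead : |∑ j ∈ Finset.range k, h j| ≤ ∑ j ∈ Finset.range k, A j :=
    (Finset.abs_sum_le_sum_abs _ _).trans
      (Finset.sum_le_sum fun j hj => hA j (Finset.mem_range.1 hj))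
  have htail : |∑' j, h (j + (k + 1))| ≤ B * D.freq k ^ 2 :=
    calc ‖∑' j, h (j + (k + 1))‖ ≤ ∑' j, D.amp (j + (k + 1)) * B :=
          tsum_of_norm_bounded (hamp.mul_right B).hasSum fun j => hB _ (by omega)
      _ ≤ B * D.freq k ^ 2 := by
          rw [tsum_mul_right, mul_comm]
          exact mul_le_mul_of_nonneg_left (D.tsum_amp_tail_le k) hB0
  rw [hsplit]
  exact (abs_add_le _ _).trans (add_le_add hhead htail)

theorem abs_cocycle_sub_sub_cocycleTerm_le (k : ℕ) (p : Torus2) (τ : ℝ) :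
    |D.cocycle p τ - τ - D.cocycleTerm k p τ| ≤
      ∑ j ∈ Finset.range k, D.amp j / D.freq j + |τ| * D.freq k ^ 2 := by
  rw [cocycle, add_sub_cancel_left]
  exact D.abs_tsum_sub_apply_le (D.summable_cocycleTerm p τ)
    (fun j _ => D.abs_cocycleTerm_le_amp_div_freq j p τ) (abs_nonneg τ)
    fun j _ => D.abs_cocycleTerm_le j p τ

theorem abs_cocycleTerm_sub_mul_cos_le (k : ℕ) (p : Torus2) (τ : ℝ) :
    |D.cocycleTerm k p τ - D.amp k * τ * circleCos (D.phase k p)| ≤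
      8 * D.amp k * D.freq k * τ ^ 2 := by
  have hfreq := D.freq_pos k
  have hamp := D.amp_pos k
  have hcoef := D.amp_div_two_pi_mul_freq_pos k
  have hfactor : D.cocycleTerm k p τ - D.amp k * τ * circleCos (D.phase k p) =
      D.amp k / (2 * π * D.freq k) * (circleSin (D.phase k p + (D.freq k * τ : ℝ)) -
        circleSin (D.phase k p) - 2 * π * (D.freq k * τ) * circleCos (D.phase k p)) := by
    rw [cocycleTerm]
    field_simp
  rw [hfactor, abs_mul, abs_of_pos hcoef]
  calc _ ≤ D.amp k / (2 * π * D.freq k) * (2 * π * (D.freq k * τ)) ^ 2 := by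
        gcongr
        exact abs_circleSin_add_sub_sub_mul_circleCos_le _ _
    _ = 2 * π * D.amp k * D.freq k * τ ^ 2 := by field_simp
    _ ≤ _ := by
        gcongr
        linarith [Real.pi_lt_four]

/-- The horizontal translation by half a period of the `k`-th phase. It changes the sign of the
`k`-th term of the cocycle and hardly affects the earlier ones. -/
def halfStep (k : ℕ) : Torus2 := horiz (1 / (2 * D.q k))

theorem phase_halfStep (j k : ℕ) :
    D.phase j (D.halfStep k) = ((D.q j / (2 * D.q k) : ℝ) : Torus1) := by
  rw [halfStep, phase_horiz, mul_one_div]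

theorem cocycleTerm_add_halfStep_self (k : ℕ) (p : Torus2) (τ : ℝ) :
    D.cocycleTerm k (p + D.halfStep k) τ = -D.cocycleTerm k p τ := by
  have hhalf : (D.q k : ℝ) / (2 * D.q k) = 1 / 2 := by
    have := D.q_pos k
    field_simp
  simp only [cocycleTerm, map_add, phase_halfStep, hhalf, add_right_comm _ ((1 / 2 : ℝ) : Torus1),
    circleSin_add_half]
  ring

theorem abs_cocycleTerm_add_halfStep_sub_le (j k : ℕ) (p : Torus2) (τ : ℝ) :
    |D.cocycleTerm j (p + D.halfStep k) τ - D.cocycleTerm j p τ| ≤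
      D.amp j / D.freq j * D.q j / D.q k := by
  have hq := D.q_pos k
  have hfreq := D.freq_pos j
  have hcoef := D.amp_div_two_pi_mul_freq_pos j
  have hsin (θ : Torus1) :
      |circleSin (θ + ((D.q j / (2 * D.q k) : ℝ) : Torus1)) - circleSin θ| ≤
        π * D.q j / D.q k := by
    have h := abs_circleSin_add_sub_le θ (D.q j / (2 * D.q k)) 0
    rw [AddCircle.coe_zero, add_zero, sub_zero,
      abs_of_nonneg (by positivity : (0 : ℝ) ≤ D.q j / (2 * D.q k))] at h
    refine h.trans_eq ?_
    field_simp
  have h1 := abs_le.1 (hsin (D.phase j p + (D.freq j * τ : ℝ)))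
  have h2 := abs_le.1 (hsin (D.phase j p))
  simp only [cocycleTerm, map_add, phase_halfStep]
  rw [← mul_sub, abs_mul, abs_of_pos hcoef, add_right_comm]
  calc _ ≤ D.amp j / (2 * π * D.freq j) * (2 * (π * D.q j / D.q k)) := by
        gcongr
        rw [abs_le]
        constructor <;> linarith [h1.1, h1.2, h2.1, h2.2]
    _ = _ := by field_simp

theorem abs_cocycle_add_halfStep_sub_add_le (k : ℕ) (p : Torus2) (τ : ℝ) :
    |D.cocycle (p + D.halfStep k) τ - D.cocycle p τ + 2 * D.cocycleTerm k p τ| ≤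
      (∑ j ∈ Finset.range k, D.amp j / D.freq j * D.q j) / D.q k + 2 * |τ| * D.freq k ^ 2 := by
  have hs := D.summable_cocycleTerm (p + D.halfStep k) τ
  have hs' := D.summable_cocycleTerm p τ
  have heq : D.cocycle (p + D.halfStep k) τ - D.cocycle p τ + 2 * D.cocycleTerm k p τ =
      ∑' j, (D.cocycleTerm j (p + D.halfStep k) τ - D.cocycleTerm j p τ) -
        (D.cocycleTerm k (p + D.halfStep k) τ - D.cocycleTerm k p τ) := by
    rw [cocycle, cocycle, hs.tsum_sub hs', cocycleTerm_add_halfStep_self]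
    ring
  rw [heq, Finset.sum_div]
  refine D.abs_tsum_sub_apply_le (hs.sub hs')
    (fun j _ => D.abs_cocycleTerm_add_halfStep_sub_le j k p τ) (by positivity) fun j _ => ?_
  refine (abs_sub _ _).trans ?_
  linarith [D.abs_cocycleTerm_le j (p + D.halfStep k) τ, D.abs_cocycleTerm_le j p τ]

/-- The time `⌊1 / c⌋`, with `c = D.amp k`, after which the reparametrised orbits of two points
differing by `D.halfStep k` are displaced against each other by a distance of order one. -/
def mixTime (k : ℕ) : ℕ := ⌊1 / D.amp k⌋₊

theorem amp_mul_mixTime_mem_Icc (k : ℕ) :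
    D.amp k * D.mixTime k ∈ Icc (1 - D.amp k) 1 := by
  have hamp := D.amp_pos k
  have hle : (D.mixTime k : ℝ) ≤ 1 / D.amp k := Nat.floor_le (by positivity)
  have hlt : 1 / D.amp k < D.mixTime k + 1 := Nat.lt_floor_add_one _
  rw [le_div_iff₀ hamp] at hle
  rw [div_lt_iff₀ hamp] at hlt
  constructor <;> linarith

theorem time_mixTime_nonneg (k : ℕ) (p : Torus2) : 0 ≤ D.time p (D.mixTime k) :=
  (by positivity : (0 : ℝ) ≤ 10 / 11 * D.mixTime k).trans
    (D.time_mem_Icc p (Nat.cast_nonneg _)).1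

theorem amp_mul_time_mixTime_le (k : ℕ) (p : Torus2) :
    D.amp k * D.time p (D.mixTime k) ≤ 10 / 9 := by
  have h := (D.time_mem_Icc p (Nat.cast_nonneg (D.mixTime k))).2
  have := mul_le_mul_of_nonneg_left h (D.amp_pos k).le
  linarith [(D.amp_mul_mixTime_mem_Icc k).2]

theorem abs_amp_mul_time_mixTime_sub_one_le (k : ℕ) (p : Torus2) :
    |D.amp k * D.time p (D.mixTime k) - 1| ≤
      D.amp k * (∑ j ∈ Finset.range k, D.amp j / D.freq j) + 10 / 9 * D.freq k ^ 2 +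
        3 * D.amp k := by
  set τ := D.time p (D.mixTime k) with hτ
  have hamp := D.amp_pos k
  have hmain := D.abs_cocycle_sub_sub_cocycleTerm_le k p τ
  have hterm := D.abs_cocycleTerm_le k p τ
  rw [abs_of_nonneg (D.time_mixTime_nonneg k p)] at hmain hterm
  rw [hτ, cocycle_time, ← hτ] at hmain
  have hdiff : |D.mixTime k - τ| ≤ (∑ j ∈ Finset.range k, D.amp j / D.freq j) +
      τ * D.freq k ^ 2 + D.amp k * τ := by
    rw [abs_le] at hmain hterm ⊢
    constructor <;> linarith [hmain.1, hmain.2, hterm.1, hterm.2]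
  have hle := D.amp_mul_time_mixTime_le k p
  have hscaled : |D.amp k * D.mixTime k - D.amp k * τ| ≤
      D.amp k * (∑ j ∈ Finset.range k, D.amp j / D.freq j) + 10 / 9 * D.freq k ^ 2 +
        10 / 9 * D.amp k := by
    rw [← mul_sub, abs_mul, abs_of_pos hamp]
    nlinarith [mul_le_mul_of_nonneg_left hdiff hamp.le,
      mul_le_mul_of_nonneg_right hle (sq_nonneg (D.freq k)),
      mul_le_mul_of_nonneg_right hle hamp.le]
  have hmix := D.amp_mul_mixTime_mem_Icc k
  rw [abs_le] at hscaled ⊢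
  constructor <;> linarith [hscaled.1, hscaled.2, hmix.1, hmix.2]

/-- The difference between the times at which the reparametrised flow started from
`p + D.halfStep k` and from `p` reaches the linear parameter that the orbit of `p` attains at
time `D.mixTime k`. -/
def drift (k : ℕ) (p : Torus2) : ℝ :=
  D.cocycle (p + D.halfStep k) (D.time p (D.mixTime k)) -
    D.cocycle p (D.time p (D.mixTime k))

theorem flow_neg_flow_mixTime_add_halfStep (k : ℕ) (p : Torus2) :
    D.flow (-D.mixTime k) (D.flow (D.mixTime k) p + D.halfStep k) =
      D.flow (D.drift k p) (p + D.halfStep k) := by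
  have h : D.flow (D.mixTime k) p + D.halfStep k =
      D.flow (D.cocycle (p + D.halfStep k) (D.time p (D.mixTime k))) (p + D.halfStep k) := by
    rw [flow_cocycle, flow_apply, add_right_comm]
  rw [h, ← Flow.map_add, drift, cocycle_time, sub_eq_neg_add]

theorem abs_drift_add_le (k : ℕ) (p : Torus2) :
    |D.drift k p + 2 * circleCos (D.phase k p)| ≤
      (∑ j ∈ Finset.range k, D.amp j / D.freq j * D.q j) / D.q k +
        30 * (D.freq k / D.amp k) +
        2 * (D.amp k * (∑ j ∈ Finset.range k, D.amp j / D.freq j) + 10 / 9 * D.freq k ^ 2 +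
          3 * D.amp k) := by
  set τ := D.time p (D.mixTime k) with hτ
  have hτ0 : 0 ≤ τ := D.time_mixTime_nonneg k p
  have hle : D.amp k * τ ≤ 10 / 9 := D.amp_mul_time_mixTime_le k p
  have hamp := D.amp_pos k
  have hfreq := D.freq_pos k
  have hdrift := D.abs_cocycle_add_halfStep_sub_add_le k p τ
  have htaylor := D.abs_cocycleTerm_sub_mul_cos_le k p τ
  have hcos : |D.amp k * τ * circleCos (D.phase k p) - circleCos (D.phase k p)| ≤
      |D.amp k * τ - 1| := by
    rw [← sub_one_mul, abs_mul]
    exact mul_le_of_le_one_right (abs_nonneg _) (abs_circleCos_le_one _)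
  have htime := hcos.trans (D.abs_amp_mul_time_mixTime_sub_one_le k p)
  have herr : 8 * D.amp k * D.freq k * τ ^ 2 ≤ 10 * (D.freq k / D.amp k) :=
    calc _ = 8 * (D.freq k / D.amp k) * (D.amp k * τ) ^ 2 := by field_simp
      _ ≤ 8 * (D.freq k / D.amp k) * (10 / 9) ^ 2 := by gcongr
      _ ≤ _ := by linarith [div_pos hfreq hamp]
  have htail : 2 * |τ| * D.freq k ^ 2 ≤ 10 * (D.freq k / D.amp k) :=
    calc _ = 2 * (D.amp k * τ) * (D.freq k / D.amp k) * D.freq k := by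
          rw [abs_of_nonneg hτ0]
          field_simp
      _ ≤ 2 * (10 / 9) * (D.freq k / D.amp k) * 1 := by
          gcongr
          exact D.freq_le_one k
      _ ≤ _ := by linarith [div_pos hfreq hamp]
  have h1 := abs_le.1 (hdrift.trans (by gcongr))
  have h2 := abs_le.1 (htaylor.trans herr)
  have h3 := abs_le.1 htime
  rw [drift, ← hτ, abs_le]
  constructor <;> linarith [h1.1, h1.2, h2.1, h2.2, h3.1, h3.2]

theorem exists_tendsto_zero_forall_abs_drift_add_le : ∃ e : ℕ → ℝ, Tendsto e atTop (𝓝 0) ∧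
    ∀ k p, |D.drift k p + 2 * circleCos (D.phase k p)| ≤ e k := by
  refine ⟨_, ?_, D.abs_drift_add_le⟩
  simpa using (D.tendsto_sum_amp_div_freq_mul_q_div.add (D.tendsto_freq_div_amp.const_mul 30)).add
    (((D.tendsto_amp_mul_sum_amp_div_freq.add ((D.tendsto_freq.pow 2).const_mul (10 / 9))).add
      (D.tendsto_amp.const_mul 3)).const_mul 2)

end LiouvilleData

/-! ### Perturbing a map of bounded density -/

/-- `φ` maps `ν` to a measure whose density with respect to `μ` is at most `C`. This quantitative
form of quasi-invariance is what survives uniform limits. -/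
structure MapDensityLE {α β : Type*} [MeasurableSpace α] [MeasurableSpace β] (φ : α → β)
    (ν : Measure α) (μ : Measure β) (C : ℝ≥0) : Prop where
  measurable : Measurable φ
  map_le : ν.map φ ≤ C • μ

namespace MapDensityLE

variable {α β γ : Type*} [MeasurableSpace α] [MeasurableSpace β] [MeasurableSpace γ]
  {ν : Measure α} {μ : Measure β} {ρ : Measure γ} {C C' : ℝ≥0}

theorem measure_preimage_le {φ : α → β} (h : MapDensityLE φ ν μ C) {s : Set β}
    (hs : MeasurableSet s) : ν (φ ⁻¹' s) ≤ C * μ s := by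
  rw [← Measure.map_apply h.measurable hs]
  exact h.map_le s

theorem of_forall_measure_preimage_le {φ : α → β} (hφ : Measurable φ)
    (h : ∀ s, MeasurableSet s → ν (φ ⁻¹' s) ≤ C * μ s) : MapDensityLE φ ν μ C :=
  ⟨hφ, Measure.le_iff.2 fun s hs => (Measure.map_apply hφ hs).trans_le (h s hs)⟩

theorem of_measurePreserving {φ : α → β} (h : MeasurePreserving φ ν μ) : MapDensityLE φ ν μ 1 :=
  ⟨h.measurable, by rw [one_smul, h.map_eq]⟩

theorem comp_measurePreserving {φ : β → γ} {ψ : α → β} (hφ : MapDensityLE φ μ ρ C)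
    (hψ : MeasurePreserving ψ ν μ) : MapDensityLE (φ ∘ ψ) ν ρ C :=
  ⟨hφ.measurable.comp hψ.measurable, by
    rw [← Measure.map_map hφ.measurable hψ.measurable, hψ.map_eq]
    exact hφ.map_le⟩

theorem comp {φ : β → γ} {ψ : α → β} (hφ : MapDensityLE φ μ ρ C) (hψ : MapDensityLE ψ ν μ C') :
    MapDensityLE (φ ∘ ψ) ν ρ (C' * C) :=
  .of_forall_measure_preimage_le (hφ.measurable.comp hψ.measurable) fun s hs =>
    calc ν (ψ ⁻¹' (φ ⁻¹' s)) ≤ C' * μ (φ ⁻¹' s) := hψ.measure_preimage_le (hφ.measurable hs)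
      _ ≤ C' * (C * ρ s) := by gcongr; exact hφ.measure_preimage_le hs
      _ = _ := by rw [ENNReal.coe_mul, mul_assoc]

theorem prodMap_id [SFinite ν] [SFinite μ] [SFinite ρ] {φ : α → β} (h : MapDensityLE φ ν μ C) :
    MapDensityLE (Prod.map φ id) (ν.prod ρ) (μ.prod ρ) C where
  measurable := h.measurable.prodMap measurable_id
  map_le := by
    rw [← Measure.map_prod_map _ _ h.measurable measurable_id, Measure.map_id]
    calc (ν.map φ).prod ρ ≤ (C • μ).prod ρ := Measure.prod_mono h.map_le le_rfl
      _ = C • μ.prod ρ := Measure.prod_smul_left C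

theorem of_forall_section [SFinite ν] [IsProbabilityMeasure ρ] {φ : α × γ → β}
    (hφ : Measurable φ) (h : ∀ c, MapDensityLE (fun a => φ (a, c)) ν μ C) :
    MapDensityLE φ (ν.prod ρ) μ C :=
  .of_forall_measure_preimage_le hφ fun s hs =>
    calc ν.prod ρ (φ ⁻¹' s) = ∫⁻ c, ν ((fun a => φ (a, c)) ⁻¹' s) ∂ρ :=
          Measure.prod_apply_symm (hφ hs)
      _ ≤ ∫⁻ _, C * μ s ∂ρ := lintegral_mono fun c => (h c).measure_preimage_le hs
      _ = C * μ s := by simp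

/-- If `K ⊆ A ⊆ U` with `K` compact and `U` open, a small displacement cannot lead from `K` out of
`U`, so the preimages can only differ where one of the maps takes values in `U \ K`. -/
theorem tendsto_measure_symmDiff_preimage {X : Type*} [PseudoMetricSpace X]
    [MeasurableSpace X] [BorelSpace X] {μ : Measure X} [IsFiniteMeasure μ] [μ.Regular]
    {φ ψ : ℕ → α → X}
    (hφ : ∀ k, MapDensityLE (φ k) ν μ C) (hψ : ∀ k, MapDensityLE (ψ k) ν μ C')
    (hclose : ∀ δ > 0, ∀ᶠ k in atTop, ∀ a, dist (φ k a) (ψ k a) < δ) {A : Set X}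
    (hA : MeasurableSet A) :
    Tendsto (fun k => ν (symmDiff (φ k ⁻¹' A) (ψ k ⁻¹' A))) atTop (𝓝 0) := by
  suffices key : ∀ ε : ℝ≥0∞, ε ≠ 0 → ∀ᶠ k in atTop,
      ν (symmDiff (φ k ⁻¹' A) (ψ k ⁻¹' A)) ≤ (C + C') * (ε + ε) by
    refine ENNReal.tendsto_nhds_zero.2 fun ε hε => ?_
    have hC : (2 * (C + C') : ℝ≥0∞) ≠ ⊤ := by finiteness
    filter_upwards [key (ε / (2 * (C + C'))) (ENNReal.div_ne_zero.2 ⟨hε.ne', hC⟩)] with k hk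
    refine hk.trans ?_
    rw [← two_mul, ← mul_assoc, mul_comm _ (2 : ℝ≥0∞)]
    exact ENNReal.mul_div_le
  intro ε hε
  obtain ⟨K, hKA, hKcomp, hK, hKε⟩ :=
    hA.exists_isCompact_isClosed_sdiff_lt (measure_ne_top μ A) hε
  obtain ⟨U, hAU, hU, -, hUε⟩ := hA.exists_isOpen_sdiff_lt (measure_ne_top μ A) hε
  have hUK : MeasurableSet (U \ K) := hU.measurableSet.diff hK.measurableSet
  have hUKε : μ (U \ K) ≤ ε + ε :=
    calc μ (U \ K) ≤ μ (U \ A ∪ A \ K) := measure_mono (sdiff_triangle U A K)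
      _ ≤ ε + ε := (measure_union_le _ _).trans (add_le_add hUε.le hKε.le)
  obtain ⟨δ, hδ, hKU⟩ := hKcomp.exists_thickening_subset_open hU (hKA.trans hAU)
  filter_upwards [hclose δ hδ] with k hk
  have mem_U : ∀ {x y}, x ∈ K → dist x y < δ → y ∈ U := fun hx hxy =>
    hKU (Metric.mem_thickening_iff.2 ⟨_, hx, by rwa [dist_comm]⟩)
  have hsub : symmDiff (φ k ⁻¹' A) (ψ k ⁻¹' A) ⊆ φ k ⁻¹' (U \ K) ∪ ψ k ⁻¹' (U \ K) := by
    rintro a (⟨hφA, hψA⟩ | ⟨hψA, hφA⟩)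
    · by_cases hφK : φ k a ∈ K
      · exact .inr ⟨mem_U hφK (hk a), fun h => hψA (hKA h)⟩
      · exact .inl ⟨hAU hφA, hφK⟩
    · by_cases hψK : ψ k a ∈ K
      · exact .inl ⟨mem_U hψK (by rw [dist_comm]; exact hk a), fun h => hφA (hKA h)⟩
      · exact .inr ⟨hAU hψA, hψK⟩
  calc _ ≤ ν (φ k ⁻¹' (U \ K)) + ν (ψ k ⁻¹' (U \ K)) :=
        (measure_mono hsub).trans (measure_union_le _ _)
    _ ≤ C * μ (U \ K) + C' * μ (U \ K) :=
        add_le_add ((hφ k).measure_preimage_le hUK) ((hψ k).measure_preimage_le hUK)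
    _ ≤ (C + C') * (ε + ε) := by rw [← add_mul]; gcongr

end MapDensityLE

theorem forall_preimage_ae_eq_of_ae {X Z : Type*} [TopologicalSpace X] [MeasurableSpace X]
    [BorelSpace X] [R1Space X] {μ : Measure X} [μ.InnerRegularCompactLTTop] [IsFiniteMeasure μ]
    [TopologicalSpace Z] [MeasurableSpace Z] {ρ : Measure Z} [ρ.IsOpenPosMeasure]
    {φ : Z → X → X} (hφ : Continuous fun p : Z × X => φ p.1 p.2)
    (hmp : ∀ z, MeasurePreserving (φ z) μ μ) {A : Set X} (hA : MeasurableSet A)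
    (h : ∀ᵐ z ∂ρ, φ z ⁻¹' A =ᵐ[μ] A) (z : Z) : φ z ⁻¹' A =ᵐ[μ] A := by
  let f : C(Z, C(X, X)) := ContinuousMap.curry ⟨fun p : Z × X => φ p.1 p.2, hφ⟩
  have hclosed : IsClosed {z | f z ⁻¹' A =ᵐ[μ] A} :=
    isClosed_setOfPred_preimage_ae_eq f.continuous hmp A hA.nullMeasurableSet (measure_ne_top μ A)
  have hdense : Dense {z | f z ⁻¹' A =ᵐ[μ] A} := Measure.dense_of_ae h
  exact hclosed.closure_subset (hdense z)

-- Without this shortcut, instance search fails on `(Torus2 × Torus2) × Torus1`.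
instance : BorelSpace (Torus2 × Torus2) := inferInstance

/-! ### Invariant sets of the doubled flow -/

namespace LiouvilleData

variable {t : ℝ} (D : LiouvilleData t)

theorem mapDensityLE_add_flowMeasure (e : Torus2) :
    MapDensityLE (· + e) D.flowMeasure D.flowMeasure 2 := by
  refine .of_forall_measure_preimage_le (measurable_add_const e) fun s hs => ?_
  have hle : ∀ p, ((D.density p).toNNReal : ℝ≥0∞) ≤ 2 * ((D.density (p + e)).toNNReal : ℝ≥0∞) := by
    intro p
    have h1 := abs_le.1 (D.abs_density_sub_one_le p)
    have h2 := abs_le.1 (D.abs_density_sub_one_le (p + e))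
    rw [← ENNReal.coe_ofNat, ← ENNReal.coe_mul, ENNReal.coe_le_coe, ← NNReal.coe_le_coe,
      NNReal.coe_mul, Real.coe_toNNReal _ (D.density_pos _).le,
      Real.coe_toNNReal _ (D.density_pos _).le]
    push_cast
    linarith
  rw [flowMeasure, withDensity_apply _ hs, withDensity_apply _ (measurable_add_const e hs)]
  calc ∫⁻ p in (· + e) ⁻¹' s, ((D.density p).toNNReal : ℝ≥0∞)
      ≤ ∫⁻ p in (· + e) ⁻¹' s, 2 * ((D.density (p + e)).toNNReal : ℝ≥0∞) :=
        lintegral_mono fun p => hle p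
    _ = ∫⁻ p in s, 2 * ((D.density p).toNNReal : ℝ≥0∞) :=
        (measurePreserving_add_right volume e).setLIntegral_comp_preimage hs
          (D.measurable_coe_toNNReal_density.const_mul 2)
    _ = _ := lintegral_const_mul _ D.measurable_coe_toNNReal_density

/-- The product of the invariant measure of `D.flow` with itself. -/
def flowMeasureSq : Measure (Torus2 × Torus2) := D.flowMeasure.prod D.flowMeasure

instance : IsFiniteMeasure D.flowMeasureSq :=
  inferInstanceAs (IsFiniteMeasure (D.flowMeasure.prod D.flowMeasure))

theorem measurePreserving_flow_prodMap_id (s : ℝ) :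
    MeasurePreserving (Prod.map (D.flow s) id) D.flowMeasureSq D.flowMeasureSq :=
  (D.measurePreserving_flow s).prod (.id _)

theorem measurePreserving_flow_prodMap_flow (s : ℝ) :
    MeasurePreserving (Prod.map (D.flow s) (D.flow s)) D.flowMeasureSq D.flowMeasureSq :=
  (D.measurePreserving_flow s).prod (D.measurePreserving_flow s)

theorem mapDensityLE_add_prodMap_id (e : Torus2) :
    MapDensityLE (Prod.map (· + e) id) D.flowMeasureSq D.flowMeasureSq 2 :=
  (D.mapDensityLE_add_flowMeasure e).prodMap_id

/-- The translation by less than one period of the `k`-th phase that moves this phase by `θ`. -/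
def phaseStep (k : ℕ) (θ : Torus1) : Torus2 :=
  horiz (AddCircle.equivIco 1 0 θ / D.q k)

theorem measurable_phaseStep (k : ℕ) : Measurable (D.phaseStep k) := by
  have h : Measurable fun θ : Torus1 => (AddCircle.equivIco 1 0 θ : ℝ) :=
    measurable_subtype_coe.comp (AddCircle.measurableEquivIco 1 0).measurable
  exact continuous_horiz.measurable.comp (h.div_const _)

theorem phase_phaseStep (k : ℕ) (θ : Torus1) : D.phase k (D.phaseStep k θ) = θ := by
  rw [phaseStep, phase_horiz, mul_div_cancel₀ _ (D.q_pos k).ne', AddCircle.coe_equivIco]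

theorem norm_phaseStep_le (k : ℕ) (θ : Torus1) : ‖D.phaseStep k θ‖ ≤ 1 / D.q k := by
  obtain ⟨h0, h1⟩ := (AddCircle.equivIco 1 0 θ).2
  refine (norm_horiz_le _).trans ?_
  rw [abs_div, Nat.abs_cast, abs_of_nonneg h0]
  gcongr
  linarith

theorem norm_halfStep_le (k : ℕ) : ‖D.halfStep k‖ ≤ 1 / D.q k := by
  refine (norm_horiz_le _).trans ?_
  have hq : 0 < (D.q k : ℝ) := D.q_pos k
  rw [abs_of_nonneg (by positivity)]
  gcongr
  linarith

theorem tendsto_one_div_q : Tendsto (fun k => 1 / (D.q k : ℝ)) atTop (𝓝 0) := by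
  simpa only [one_div] using! D.tendsto_q.inv_tendsto_atTop

/-- Translates the first point so that its `k`-th phase becomes `θ`. -/
def setPhase (k : ℕ) (y : (Torus2 × Torus2) × Torus1) : Torus2 × Torus2 :=
  (y.1.1 + D.phaseStep k (y.2 - D.phase k y.1.1), y.1.2)

theorem phase_setPhase (k : ℕ) (y : (Torus2 × Torus2) × Torus1) :
    D.phase k (D.setPhase k y).1 = y.2 := by
  rw [setPhase, map_add, phase_phaseStep, add_sub_cancel]

theorem dist_setPhase_le (k : ℕ) (y : (Torus2 × Torus2) × Torus1) :
    dist (D.setPhase k y) y.1 ≤ 1 / D.q k := by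
  rw [setPhase, Prod.dist_eq, dist_self, dist_self_add_left, max_eq_left (norm_nonneg _)]
  exact D.norm_phaseStep_le k _

/-- Subtracting the phase from the angle preserves the product measure, and for a fixed difference
`D.setPhase` is a translation. -/
theorem mapDensityLE_setPhase (k : ℕ) :
    MapDensityLE (D.setPhase k) (D.flowMeasureSq.prod volume) D.flowMeasureSq 2 := by
  have hskew : MeasurePreserving
      (fun y : (Torus2 × Torus2) × Torus1 => (y.1, y.2 - D.phase k y.1.1))
      (D.flowMeasureSq.prod volume) (D.flowMeasureSq.prod volume) :=
    (MeasurePreserving.id D.flowMeasureSq).skew_product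
      (g := fun x θ => θ - D.phase k x.1) (by fun_prop)
      (.of_forall fun x => (measurePreserving_sub_right volume _).map_eq)
  have hstep := D.measurable_phaseStep k
  have hfam : MapDensityLE
      (fun y : (Torus2 × Torus2) × Torus1 => (y.1.1 + D.phaseStep k y.2, y.1.2))
      (D.flowMeasureSq.prod volume) D.flowMeasureSq 2 :=
    .of_forall_section (by fun_prop) fun θ => D.mapDensityLE_add_prodMap_id (D.phaseStep k θ)
  exact hfam.comp_measurePreserving hskew

/-- Translates the first point by `D.halfStep k` along the orbit of its forward image at time
`D.mixTime k`, see `D.displace_eq`. -/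
def displace (k : ℕ) (x : Torus2 × Torus2) : Torus2 × Torus2 :=
  (D.flow (D.drift k x.1) (x.1 + D.halfStep k), x.2)

theorem displace_eq (k : ℕ) : D.displace k =
    Prod.map (D.flow (-D.mixTime k)) id ∘ Prod.map (· + D.halfStep k) id ∘
      Prod.map (D.flow (D.mixTime k)) id := by
  ext1 x
  rw [displace, ← flow_neg_flow_mixTime_add_halfStep]
  rfl

theorem mapDensityLE_displace (k : ℕ) :
    MapDensityLE (D.displace k) D.flowMeasureSq D.flowMeasureSq 2 := by
  have h := (MapDensityLE.of_measurePreserving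
    (D.measurePreserving_flow_prodMap_id (-D.mixTime k))).comp
    ((D.mapDensityLE_add_prodMap_id (D.halfStep k)).comp_measurePreserving
      (D.measurePreserving_flow_prodMap_id (D.mixTime k)))
  rwa [mul_one, ← displace_eq] at h

/-- The uniform limit of `D.displace k ∘ D.setPhase k`. -/
def cosFlow (y : (Torus2 × Torus2) × Torus1) : Torus2 × Torus2 :=
  (D.flow (-(2 * circleCos y.2)) y.1.1, y.1.2)

theorem continuous_cosFlow : Continuous D.cosFlow := by
  have htime : Continuous fun y : (Torus2 × Torus2) × Torus1 => -(2 * circleCos y.2) := by fun_prop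
  exact (D.flow.continuous htime (continuous_fst.comp continuous_fst)).prodMk (by fun_prop)

theorem mapDensityLE_cosFlow :
    MapDensityLE D.cosFlow (D.flowMeasureSq.prod volume) D.flowMeasureSq 1 :=
  have hsection (θ : Torus1) :
      MapDensityLE (fun x => D.cosFlow (x, θ)) D.flowMeasureSq D.flowMeasureSq 1 :=
    .of_measurePreserving (D.measurePreserving_flow_prodMap_id (-(2 * circleCos θ)))
  .of_forall_section D.continuous_cosFlow.measurable hsection

theorem eventually_dist_displace_setPhase_lt {δ : ℝ} (hδ : 0 < δ) :
    ∀ᶠ k in atTop, ∀ y, dist (D.displace k (D.setPhase k y)) (D.cosFlow y) < δ := by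
  have huc : UniformContinuousOn (fun z : ℝ × Torus2 => D.flow z.1 z.2) (Icc (-3) 3 ×ˢ univ) :=
    (isCompact_Icc.prod isCompact_univ).uniformContinuousOn_of_continuous
      (D.flow.continuous continuous_fst continuous_snd).continuousOn
  obtain ⟨η, hη, hflow⟩ := Metric.uniformContinuousOn_iff.1 huc δ hδ
  obtain ⟨e, he, hdrift⟩ := D.exists_tendsto_zero_forall_abs_drift_add_le
  filter_upwards [he.eventually_lt_const (lt_min hη one_pos),
    D.tendsto_one_div_q.eventually_lt_const (half_pos hη)] with k hek hqk y
  obtain ⟨hcos_ge, hcos_le⟩ := abs_le.1 (abs_circleCos_le_one y.2)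
  obtain ⟨heη, he1⟩ := lt_min_iff.1 hek
  have htime : |D.drift k (D.setPhase k y).1 - -(2 * circleCos y.2)| ≤ e k := by
    have h := hdrift k (D.setPhase k y).1
    rwa [phase_setPhase, ← sub_neg_eq_add] at h
  have hpoint : dist ((D.setPhase k y).1 + D.halfStep k) y.1.1 < η :=
    calc _ ≤ dist ((D.setPhase k y).1 + D.halfStep k) (D.setPhase k y).1 +
          dist (D.setPhase k y).1 y.1.1 := dist_triangle _ _ _
      _ ≤ 1 / D.q k + 1 / D.q k := by
          gcongr
          · rw [dist_self_add_left]
            exact D.norm_halfStep_le k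
          · exact (le_max_left _ _).trans (D.dist_setPhase_le k y)
      _ < η := by linarith
  have hmem : D.drift k (D.setPhase k y).1 ∈ Icc (-3) 3 := by
    have := abs_le.1 htime
    constructor <;> linarith
  refine max_lt ?_ ((dist_self y.1.2).trans_lt hδ)
  exact hflow (D.drift k (D.setPhase k y).1, (D.setPhase k y).1 + D.halfStep k)
    ⟨hmem, mem_univ _⟩ (-(2 * circleCos y.2), y.1.1)
    ⟨⟨by linarith, by linarith⟩, mem_univ _⟩ (max_lt (htime.trans_lt heη) hpoint)

theorem flow_mixTime_displace (k : ℕ) :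
    Prod.map (D.flow (D.mixTime k)) (D.flow (D.mixTime k)) ∘ D.displace k =
      Prod.map (· + D.halfStep k) id ∘ Prod.map (D.flow (D.mixTime k)) (D.flow (D.mixTime k)) := by
  rw [displace_eq]
  refine funext fun x => Prod.ext ?_ rfl
  simp only [Function.comp_apply, Prod.map_fst, ← Flow.map_add, add_neg_cancel,
    Flow.map_zero_apply]

theorem measure_symmDiff_cosFlow_le {A : Set (Torus2 × Torus2)} (hA : MeasurableSet A) (k : ℕ) :
    (D.flowMeasureSq.prod volume) (symmDiff (D.cosFlow ⁻¹' A) (Prod.fst ⁻¹' A)) ≤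
      (D.flowMeasureSq.prod volume)
          (symmDiff ((D.displace k ∘ D.setPhase k) ⁻¹' A) (D.cosFlow ⁻¹' A)) +
        (2 * D.flowMeasureSq (symmDiff (D.displace k ⁻¹' A) A) +
          (D.flowMeasureSq.prod volume) (symmDiff (D.setPhase k ⁻¹' A) (Prod.fst ⁻¹' A))) := by
  have hmid : (D.flowMeasureSq.prod volume)
      (symmDiff ((D.displace k ∘ D.setPhase k) ⁻¹' A) (D.setPhase k ⁻¹' A)) ≤
        2 * D.flowMeasureSq (symmDiff (D.displace k ⁻¹' A) A) :=
    (D.mapDensityLE_setPhase k).measure_preimage_le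
      (((D.mapDensityLE_displace k).measurable hA).symmDiff hA)
  refine (measure_symmDiff_le _ ((D.displace k ∘ D.setPhase k) ⁻¹' A) _).trans ?_
  rw [symmDiff_comm (D.cosFlow ⁻¹' A)]
  gcongr
  exact (measure_symmDiff_le _ (D.setPhase k ⁻¹' A) _).trans (by gcongr)

section InvariantSets

variable {A : Set (Torus2 × Torus2)} (hA : MeasurableSet A)
  (hinv : ∀ n : ℕ, Prod.map (D.flow n) (D.flow n) ⁻¹' A = A)

include hA hinv

theorem tendsto_flowMeasureSq_symmDiff_displace :
    Tendsto (fun k => D.flowMeasureSq (symmDiff (D.displace k ⁻¹' A) A)) atTop (𝓝 0) := by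
  have hid : MapDensityLE id D.flowMeasureSq D.flowMeasureSq 1 := .of_measurePreserving (.id _)
  have hclose : ∀ δ > 0, ∀ᶠ k in atTop, ∀ x : Torus2 × Torus2,
      dist (Prod.map (· + D.halfStep k) id x) (id x) < δ := by
    intro δ hδ
    filter_upwards [D.tendsto_one_div_q.eventually_lt_const hδ] with k hk x
    refine max_lt (lt_of_le_of_lt ?_ hk) ((dist_self x.2).trans_lt hδ)
    rw [Prod.map_fst, id_eq, dist_self_add_left]
    exact D.norm_halfStep_le k
  refine (MapDensityLE.tendsto_measure_symmDiff_preimage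
    (fun k => D.mapDensityLE_add_prodMap_id (D.halfStep k)) (fun _ => hid) hclose hA).congr
    fun k => ?_
  have hstep : MeasurableSet (Prod.map (· + D.halfStep k) id ⁻¹' A) :=
    (D.mapDensityLE_add_prodMap_id (D.halfStep k)).measurable hA
  rw [preimage_id, ← (D.measurePreserving_flow_prodMap_flow (D.mixTime k)).measure_preimage
    (hstep.symmDiff hA).nullMeasurableSet, preimage_symmDiff, ← preimage_comp,
    ← flow_mixTime_displace, preimage_comp, hinv]

theorem ae_preimage_flow_cos_ae_eq : ∀ᵐ θ : Torus1,
    Prod.map (D.flow (-(2 * circleCos θ))) id ⁻¹' A =ᵐ[D.flowMeasureSq] A := by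
  set ν := D.flowMeasureSq.prod (volume : Measure Torus1)
  have hfst : MapDensityLE Prod.fst ν D.flowMeasureSq 1 :=
    .of_measurePreserving measurePreserving_fst
  have hlim : Tendsto (fun k => ν (symmDiff ((D.displace k ∘ D.setPhase k) ⁻¹' A)
      (D.cosFlow ⁻¹' A))) atTop (𝓝 0) :=
    MapDensityLE.tendsto_measure_symmDiff_preimage
      (fun k => (D.mapDensityLE_displace k).comp (D.mapDensityLE_setPhase k))
      (fun _ => D.mapDensityLE_cosFlow)
      (fun δ hδ => D.eventually_dist_displace_setPhase_lt hδ) hA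
  have hset : Tendsto (fun k => ν (symmDiff (D.setPhase k ⁻¹' A) (Prod.fst ⁻¹' A)))
      atTop (𝓝 0) := by
    refine MapDensityLE.tendsto_measure_symmDiff_preimage D.mapDensityLE_setPhase
      (fun _ => hfst) (fun δ hδ => ?_) hA
    filter_upwards [D.tendsto_one_div_q.eventually_lt_const hδ] with k hk y
    exact (D.dist_setPhase_le k y).trans_lt hk
  have hdisp : Tendsto (fun k => 2 * D.flowMeasureSq (symmDiff (D.displace k ⁻¹' A) A))
      atTop (𝓝 0) := by
    simpa only [mul_zero] using! ENNReal.Tendsto.const_mul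
      (D.tendsto_flowMeasureSq_symmDiff_displace hA hinv) (.inr ENNReal.ofNat_ne_top)
  have hzero : ν (symmDiff (D.cosFlow ⁻¹' A) (Prod.fst ⁻¹' A)) = 0 :=
    le_antisymm (ge_of_tendsto' (by simpa only [add_zero] using! hlim.add (hdisp.add hset))
      (D.measure_symmDiff_cosFlow_le hA))
      zero_le
  have hae := (Measure.measurePreserving_swap (μ := (volume : Measure Torus1))
    (ν := D.flowMeasureSq)).quasiMeasurePreserving.ae
    (eventuallyEq_set.1 (measure_symmDiff_eq_zero_iff.1 hzero))
  filter_upwards [Measure.ae_ae_of_ae_prod hae] with θ hθ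
  exact eventuallyEq_set.2 hθ

end InvariantSets

end LiouvilleData

theorem exists_circleCos_eq {x : ℝ} (hx : x ∈ Icc (-1 : ℝ) 1) : ∃ θ : Torus1, circleCos θ = x := by
  refine ⟨(Real.arccos x / (2 * π) : ℝ), ?_⟩
  rw [circleCos_coe, mul_div_cancel₀ _ Real.two_pi_pos.ne', Real.cos_arccos hx.1 hx.2]

theorem NearId.quasiMeasurePreserving {c : ℝ} {g : ℝ → ℝ} (hg : NearId c g) (hc : c < 1) :
    Measure.QuasiMeasurePreserving g volume volume := by
  refine ⟨hg.continuous.measurable, .mk fun s hs h0 => ?_⟩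
  have hanti : AntilipschitzWith (1 - c)⁻¹.toNNReal g := by
    refine .of_le_mul_dist fun a b => ?_
    rw [Real.coe_toNNReal _ (by rw [inv_nonneg]; linarith), Real.dist_eq, Real.dist_eq,
      le_inv_mul_iff₀ (by linarith)]
    exact hg.mul_abs_sub_le a b
  have h := hanti.hausdorffMeasure_preimage_le (d := 1) zero_le_one s
  rw [Measure.map_apply hg.continuous.measurable hs]
  rwa [hausdorffMeasure_real, h0, mul_zero, nonpos_iff_eq_zero] at h

theorem eventuallyConst_of_dense_preimage_add_ae_eq {G : Type*} [AddCommGroup G]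
    [TopologicalSpace G] [IsTopologicalAddGroup G] [MeasurableSpace G] [BorelSpace G]
    [SecondCountableTopology G] [R1Space G] {μ : Measure G} [IsFiniteMeasure μ] [μ.InnerRegular]
    [μ.IsAddLeftInvariant] {s : Set G} (hs : MeasurableSet s)
    (hdense : Dense {g : G | (· + g) ⁻¹' s =ᵐ[μ] s}) : EventuallyConst s (ae μ) :=
  aeconst_of_dense_setOfPred_preimage_vadd_ae (M := G) hs.nullMeasurableSet <| by
    simpa only [vadd_eq_add, add_comm] using hdense

instance : (volume : Measure (Torus2 × Torus2)).IsAddLeftInvariant :=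
  Measure.prod.instIsAddLeftInvariant

namespace LiouvilleData

variable {t : ℝ} (D : LiouvilleData t)

theorem line_intCast (n : ℤ) : D.line n = (n • (D.slope : Torus1), 0) := by
  rw [line_apply, ← AddCircle.coe_zsmul, zsmul_eq_mul, mul_comm (n : ℝ)]
  exact Prod.ext rfl ((AddCircle.coe_eq_zero_iff 1).2 ⟨n, by simp⟩)

theorem denseRange_line : DenseRange D.line := by
  have hdense : DenseRange fun n : ℤ => n • (D.slope : Torus1) :=
    AddCircle.denseRange_zsmul_coe_iff.2 (by simpa only [div_one] using D.irrational_slope)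
  rintro ⟨x, y⟩
  obtain ⟨y, rfl⟩ := QuotientAddGroup.mk_surjective y
  let f (z : Torus1) : Torus2 := (z, 0) + D.line y
  have hf : Continuous f := by fun_prop
  have hrange : range (f ∘ fun n : ℤ => n • (D.slope : Torus1)) ⊆ range D.line := by
    rintro _ ⟨n, rfl⟩
    exact ⟨n + y, by rw [map_add, line_intCast]; rfl⟩
  have hx : f (x - (D.slope * y : ℝ)) = (x, (y : Torus1)) := by simp [f, line_apply]
  rw [← hx]
  refine closure_mono hrange ?_
  rw [range_comp]
  exact image_closure_subset_closure_image hf ⟨_, hdense _, rfl⟩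

theorem volume_absolutelyContinuous_flowMeasureSq :
    (volume : Measure (Torus2 × Torus2)) ≪ D.flowMeasureSq := by
  have h : (volume : Measure Torus2) ≪ D.flowMeasure :=
    withDensity_absolutelyContinuous' D.measurable_coe_toNNReal_density.aemeasurable <|
      .of_forall fun p => by simpa using D.density_pos p
  exact h.prod h

section InvariantSets

variable {A : Set (Torus2 × Torus2)} (hA : MeasurableSet A)
  (hinv : ∀ n : ℕ, Prod.map (D.flow n) (D.flow n) ⁻¹' A = A)

include hA hinv

theorem preimage_flow_prodMap_id_ae_eq (s : ℝ) :
    Prod.map (D.flow s) id ⁻¹' A =ᵐ[D.flowMeasureSq] A := by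
  obtain ⟨n, hn⟩ := exists_nat_gt |s|
  have hn0 : (0 : ℝ) < n := (abs_nonneg s).trans_lt hn
  obtain ⟨hs1, hs2⟩ := abs_lt.1 hn
  obtain ⟨θ, hθ⟩ := exists_circleCos_eq (x := -(s / n) / 2)
    ⟨by rw [le_div_iff₀ two_pos, le_neg, div_le_iff₀ hn0]; linarith,
      by rw [div_le_iff₀ two_pos, neg_le, le_div_iff₀ hn0]; linarith⟩
  have hcont : Continuous fun z : Torus1 × (Torus2 × Torus2) =>
      Prod.map (D.flow (-(2 * circleCos z.1))) id z.2 := by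
    have h := D.continuous_cosFlow.comp (continuous_swap (X := Torus1) (Y := Torus2 × Torus2))
    exact h
  have hroot := forall_preimage_ae_eq_of_ae hcont
    (fun θ => D.measurePreserving_flow_prodMap_id _) hA (D.ae_preimage_flow_cos_ae_eq hA hinv) θ
  have hiter := (D.measurePreserving_flow_prodMap_id
    (-(2 * circleCos θ))).quasiMeasurePreserving.preimage_iterate_ae_eq n hroot
  rwa [Prod.map_iterate, iterate_flow, Function.iterate_id, hθ,
    show (n : ℝ) * -(2 * (-(s / n) / 2)) = s by field_simp] at hiter

theorem preimage_add_line_prodMap_id_ae_eq (a : ℝ) :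
    Prod.map (· + D.line a) id ⁻¹' A =ᵐ[volume] A := by
  have hflow_cont : Continuous fun z : ℝ × (Torus2 × Torus2) => (D.flow z.1 z.2.1, z.2.2) :=
    (D.flow.continuous continuous_fst (by fun_prop)).prodMk (by fun_prop)
  have hline_cont : Continuous fun z : ℝ × (Torus2 × Torus2) => (z.2.1 + D.line z.1, z.2.2) := by
    have := D.continuous_line
    fun_prop
  have hswap {φ : ℝ × (Torus2 × Torus2) → Torus2 × Torus2} (hφ : Continuous φ) :
      MeasurableSet {z | φ z ∈ A ↔ z.2 ∈ A} :=
    .iff (hφ.measurable hA) (measurable_snd hA)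
  have hflow : ∀ᵐ x ∂D.flowMeasureSq, ∀ᵐ s : ℝ, (D.flow s x.1, x.2) ∈ A ↔ x ∈ A :=
    (Measure.ae_ae_comm (hswap hflow_cont)).1
      (.of_forall fun s => eventuallyEq_set.1 (D.preimage_flow_prodMap_id_ae_eq hA hinv s))
  have hline : ∀ᵐ x ∂D.flowMeasureSq, ∀ᵐ b : ℝ, (x.1 + D.line b, x.2) ∈ A ↔ x ∈ A := by
    filter_upwards [hflow] with x hx
    filter_upwards [((D.nearId_cocycle x.1).quasiMeasurePreserving (by norm_num)).ae hx] with b hb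
    rwa [flow_cocycle] at hb
  refine forall_preimage_ae_eq_of_ae (ρ := (volume : Measure ℝ))
    (φ := fun b => Prod.map (· + D.line b) id) hline_cont
    (fun b => (measurePreserving_add_right volume (D.line b)).prod (.id _)) hA ?_ a
  filter_upwards [(Measure.ae_ae_comm (hswap hline_cont)).2 hline] with b hb
  exact D.volume_absolutelyContinuous_flowMeasureSq.ae_eq (eventuallyEq_set.2 hb)

end InvariantSets

theorem eventuallyConst_of_flow_invariant {A : Set (Torus2 × Torus2)} (hA : MeasurableSet A)
    (hinv : ∀ n : ℕ, Prod.map (D.flow n) (D.flow n) ⁻¹' A = A) :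
    EventuallyConst A (ae volume) := by
  have hfst (a : ℝ) : Prod.map (· + D.line a) id ⁻¹' A =ᵐ[volume] A :=
    D.preimage_add_line_prodMap_id_ae_eq hA hinv a
  have hsnd (b : ℝ) : Prod.map id (· + D.line b) ⁻¹' A =ᵐ[volume] A := by
    have hinv_swap (n : ℕ) :
        Prod.map (D.flow n) (D.flow n) ⁻¹' (Prod.swap ⁻¹' A) = Prod.swap ⁻¹' A := by
      conv_rhs => rw [← hinv n]
      rfl
    exact (Measure.measurePreserving_swap (μ := (volume : Measure Torus2))
      (ν := (volume : Measure Torus2))).quasiMeasurePreserving.preimage_ae_eq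
      (D.preimage_add_line_prodMap_id_ae_eq (measurable_swap hA) hinv_swap b)
  refine eventuallyConst_of_dense_preimage_add_ae_eq hA
    ((D.denseRange_line.prodMap D.denseRange_line).mono ?_)
  rintro _ ⟨⟨a, b⟩, rfl⟩
  have hqmp := (((MeasurePreserving.id (volume : Measure Torus2)).prod
    (measurePreserving_add_right (volume : Measure Torus2) (D.line b)))).quasiMeasurePreserving
  exact (hqmp.preimage_ae_eq (hfst a)).trans (hsnd b)

theorem quasiMeasurePreserving_shear_symm_prodMap :
    Measure.QuasiMeasurePreserving (Prod.map D.shear.symm D.shear.symm)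
      (volume : Measure (Torus2 × Torus2)) volume := by
  have hmp : MeasurePreserving D.shear.symm volume D.flowMeasure :=
    MeasurePreserving.symm D.shear.toMeasurableEquiv D.measurePreserving_shear
  have hac : D.flowMeasure ≪ volume := withDensity_absolutelyContinuous _ _
  exact (hmp.prod hmp).quasiMeasurePreserving.mono_right (hac.prod hac)

theorem weaklyMixing_haarFlow_one : WeaklyMixing (D.haarFlow 1) volume := by
  refine ⟨(D.measurePreserving_haarFlow 1).prod (D.measurePreserving_haarFlow 1),
    ⟨fun {B} hB hBinv => ?_⟩⟩
  have hiter (n : ℕ) : Prod.map (D.haarFlow n) (D.haarFlow n) ⁻¹' B = B := by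
    have hn : D.haarFlow n = (D.haarFlow 1)^[n] := by rw [iterate_flow, mul_one]
    rw [hn, ← Prod.map_iterate, preimage_iterate_eq]
    exact Function.iterate_fixed hBinv n
  have hconst := D.eventuallyConst_of_flow_invariant (A := Prod.map D.shear D.shear ⁻¹' B)
    (hB.preimage (by fun_prop)) fun n => ?_
  · have hpre : Prod.map D.shear.symm D.shear.symm ⁻¹' (Prod.map D.shear D.shear ⁻¹' B) = B := by
      ext ⟨p, p'⟩
      simp only [mem_preimage, Prod.map_apply, Homeomorph.apply_symm_apply]
    rw [← hpre]
    exact hconst.comp_tendsto D.quasiMeasurePreserving_shear_symm_prodMap.tendsto_ae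
  · conv_rhs => rw [← hiter n]
    ext ⟨p, p'⟩
    simp only [mem_preimage, Prod.map_apply, haarFlow_apply, Homeomorph.symm_apply_apply]

end LiouvilleData

/-! ### Slow entropy of polynomial growth -/

theorem isLittleO_natCast_rpow {u v : ℝ} (huv : u < v) :
    (fun n : ℕ => (n : ℝ) ^ u) =o[atTop] fun n => (n : ℝ) ^ v := by
  have hquot := (tendsto_rpow_neg_atTop (sub_pos.2 huv)).comp tendsto_natCast_atTop_atTop
  have hpos : ∀ᶠ n : ℕ in atTop, (0 : ℝ) < n := (eventually_gt_atTop 0).mono (by simp)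
  refine (Asymptotics.isLittleO_iff_tendsto' ?_).2 (hquot.congr' ?_)
  · filter_upwards [hpos] with n hn h0
    exact absurd h0 (Real.rpow_pos_of_pos hn v).ne'
  · filter_upwards [hpos] with n hn
    rw [Function.comp_apply, neg_sub, Real.rpow_sub hn]

section SlowEntropy

variable {X : Type*} [PseudoMetricSpace X] {T : X → X} {n : ℕ} {ε : ℝ}

theorem bowenDist_lt_iff {x y : X} (hε : 0 < ε) :
    bowenDist T n x y < ε ↔ ∀ i < n, dist (T^[i] x) (T^[i] y) < ε := by
  lift ε to ℝ≥0 using hε.le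
  rw [bowenDist, NNReal.coe_lt_coe, Finset.sup_lt_iff (NNReal.coe_pos.1 hε)]
  simp only [Finset.mem_range, ← NNReal.coe_lt_coe, coe_nndist]

theorem bowenCoverNum_le_card {F : Finset X} (hF : ∀ y, ∃ x ∈ F, bowenDist T n x y < ε) :
    bowenCoverNum T n ε ≤ F.card :=
  Nat.sInf_le ⟨F, rfl, hF⟩

theorem exists_card_eq_bowenCoverNum [CompactSpace X] (hT : Continuous T) (hε : 0 < ε) :
    ∃ F : Finset X, F.card = bowenCoverNum T n ε ∧ ∀ y, ∃ x ∈ F, bowenDist T n x y < ε := by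
  have hopen (x : X) : IsOpen {y | bowenDist T n x y < ε} := by
    simp only [bowenDist_lt_iff hε, ofPred_forall]
    exact (finite_Iio n).isOpen_biInter fun i _ =>
      isOpen_lt (continuous_const.dist (hT.iterate i)) continuous_const
  have hself (x : X) : bowenDist T n x x < ε := (bowenDist_lt_iff hε).2 fun i _ => by simpa
  obtain ⟨F, hF⟩ := isCompact_univ.elim_finite_subcover _ hopen
    fun x _ => mem_iUnion.2 ⟨x, hself x⟩
  have hne : {N : ℕ | ∃ F : Finset X, F.card = N ∧
      ∀ y, ∃ x ∈ F, bowenDist T n x y < ε}.Nonempty :=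
    ⟨F.card, F, rfl, fun y => by simpa using hF (mem_univ y)⟩
  exact Nat.sInf_mem hne

theorem card_le_bowenCoverNum [CompactSpace X] (hT : Continuous T) (hε : 0 < ε) {ι : Type*}
    {s : Finset ι} {x : ι → X}
    (hx : ∀ i ∈ s, ∀ j ∈ s, ∀ y, bowenDist T n y (x i) < ε → bowenDist T n y (x j) < ε → i = j) :
    s.card ≤ bowenCoverNum T n ε := by
  obtain ⟨F, hcard, hF⟩ := exists_card_eq_bowenCoverNum (n := n) hT hε
  choose center hmem hcenter using fun i => hF (x i)
  rw [← hcard]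
  exact Finset.card_le_card_of_injOn center (fun i _ => hmem i) fun i hi j hj hij =>
    hx i hi j hj _ (hcenter i) (hij ▸ hcenter j)

theorem limsup_bowenCoverNum_div_polScale_eq_zero {u v : ℝ} (huv : u < v)
    (h : (fun n => (bowenCoverNum T n ε : ℝ)) =O[atTop] fun n : ℕ => (n : ℝ) ^ u) :
    atTop.limsup (fun n => (bowenCoverNum T n ε : ℝ≥0∞) / ENNReal.ofReal (polScale n v)) = 0 := by
  have hlim : Tendsto (fun n => ENNReal.ofReal (bowenCoverNum T n ε / polScale n v))
      atTop (𝓝 (ENNReal.ofReal 0)) :=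
    ENNReal.tendsto_ofReal (h.trans_isLittleO (isLittleO_natCast_rpow huv)).tendsto_div_nhds_zero
  rw [ENNReal.ofReal_zero] at hlim
  refine (hlim.congr' ?_).limsup_eq
  filter_upwards [eventually_gt_atTop 0] with n hn
  have hpos : 0 < polScale n v := Real.rpow_pos_of_pos (Nat.cast_pos.2 hn) v
  rw [ENNReal.ofReal_div_of_pos hpos, ENNReal.ofReal_natCast]

theorem limsup_bowenCoverNum_div_polScale_pos {c v : ℝ} (hc : 0 < c)
    (h : ∃ᶠ n : ℕ in atTop, c * (n : ℝ) ^ v ≤ bowenCoverNum T n ε) :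
    0 < atTop.limsup fun n =>
      (bowenCoverNum T n ε : ℝ≥0∞) / ENNReal.ofReal (polScale n v) := by
  refine (ENNReal.ofReal_pos.2 hc).trans_le (le_limsup_of_frequently_le ?_)
  refine (h.and_eventually (eventually_gt_atTop 0)).mono fun n ⟨hle, hn⟩ => ?_
  have hpos : 0 < polScale n v := Real.rpow_pos_of_pos (Nat.cast_pos.2 hn) v
  rw [← ENNReal.ofReal_natCast, ← ENNReal.ofReal_div_of_pos hpos]
  exact ENNReal.ofReal_le_ofReal ((le_div_iff₀ hpos).2 hle)

theorem hasUpperTopSlowEntropy_polScale {E : ℝ} (hE : 0 < E)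
    (hupper : ∀ᶠ u in 𝓝[>] E, ∀ ε > 0,
      (fun n => (bowenCoverNum T n ε : ℝ)) =O[atTop] fun n : ℕ => (n : ℝ) ^ u)
    {c : ℝ} (hc : 0 < c)
    (hlower : ∀ᶠ ε in 𝓝[>] 0, ∃ᶠ n : ℕ in atTop, c * (n : ℝ) ^ E ≤ bowenCoverNum T n ε) :
    HasUpperTopSlowEntropy T polScale E := by
  refine tendsto_const_nhds.congr' ?_
  filter_upwards [hlower, self_mem_nhdsWithin] with ε hε hε0
  have hgreatest : IsGreatest {v : ℝ | 0 < v ∧ 0 < atTop.limsup fun n =>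
      (bowenCoverNum T n ε : ℝ≥0∞) / ENNReal.ofReal (polScale n v)} E := by
    refine ⟨⟨hE, limsup_bowenCoverNum_div_polScale_pos hc hε⟩, fun v hv => ?_⟩
    by_contra! hlt
    obtain ⟨u, hu, -, huv⟩ := (hupper.and (Ioo_mem_nhdsGT hlt)).exists
    exact hv.2.ne' (limsup_bowenCoverNum_div_polScale_eq_zero huv (hu ε hε0))
  exact hgreatest.csSup_eq.symm

end SlowEntropy

/-! ### Upper bound for the Bowen covering numbers -/

theorem min_le_rpow_mul_rpow {a b s : ℝ} (ha : 0 ≤ a) (hb : 0 ≤ b) (hs₀ : 0 ≤ s) (hs₁ : s ≤ 1) :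
    min a b ≤ a ^ s * b ^ (1 - s) := by
  have hmin : 0 ≤ min a b := le_min ha hb
  have hs₁' : 0 ≤ 1 - s := sub_nonneg.2 hs₁
  calc min a b = min a b ^ s * min a b ^ (1 - s) := by
        rw [← Real.rpow_add_of_nonneg hmin hs₀ hs₁', add_sub_cancel, Real.rpow_one]
    _ ≤ _ := by
        gcongr
        exacts [min_le_left a b, min_le_right a b]

theorem exists_mem_Ico_coe_eq (θ : Torus1) : ∃ x ∈ Ico (0 : ℝ) 1, (x : Torus1) = θ :=
  ⟨AddCircle.equivIco 1 0 θ, by simpa using (AddCircle.equivIco 1 0 θ).2,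
    (AddCircle.equivIco 1 0).symm_apply_apply θ⟩

theorem exists_natCast_div_le_abs_sub_le {x : ℝ} (hx : 0 ≤ x) {J : ℕ} (hJ : 0 < J) :
    ∃ j : ℕ, (j / J : ℝ) ≤ x ∧ |x - j / J| ≤ 1 / J := by
  have hJ' : (0 : ℝ) < J := Nat.cast_pos.2 hJ
  have hle : (⌊x * J⌋₊ / J : ℝ) ≤ x := (div_le_iff₀ hJ').2 (Nat.floor_le (by positivity))
  refine ⟨⌊x * J⌋₊, hle, ?_⟩
  rw [abs_of_nonneg (sub_nonneg.2 hle), sub_le_iff_le_add, ← add_div, le_div_iff₀ hJ', add_comm]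
  exact (Nat.lt_floor_add_one _).le

namespace LiouvilleData

variable {t : ℝ} (D : LiouvilleData t)

theorem abs_cocycleTerm_add_horiz_sub_le (k : ℕ) (p : Torus2) (h : ℝ) {τ : ℝ} (hτ : 0 ≤ τ) :
    |D.cocycleTerm k (p + horiz h) τ - D.cocycleTerm k p τ| ≤
      7 * (D.amp k * D.q k * |h|) * min τ (1 / D.freq k) := by
  have hamp := D.amp_pos k
  have hfreq := D.freq_pos k
  have hcoef := D.amp_div_two_pi_mul_freq_pos k
  have hdiff := abs_circleSin_second_diff_le (D.phase k p) (D.freq k * τ) (D.q k * h)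
  have hsin (θ : Torus1) : |circleSin (θ + (D.q k * h : ℝ)) - circleSin θ| ≤
      2 * π * (D.q k * |h|) := by
    simpa [abs_mul] using abs_circleSin_add_sub_le θ (D.q k * h) 0
  simp only [cocycleTerm, map_add, phase_horiz]
  rw [← mul_sub, abs_mul, abs_of_pos hcoef, mul_min_of_nonneg _ _ (by positivity)]
  rw [abs_mul, abs_mul, abs_of_pos hfreq, abs_of_nonneg hτ, Nat.abs_cast] at hdiff
  refine le_min ((mul_le_mul_of_nonneg_left hdiff hcoef.le).trans ?_) ?_
  · calc _ = 2 * π * (D.amp k * D.q k * |h| * τ) := by field_simp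
      _ ≤ 7 * (D.amp k * D.q k * |h| * τ) := by
          gcongr
          linarith [Real.pi_lt_d2]
      _ = _ := by ring
  · rw [add_right_comm, sub_sub_sub_comm]
    refine (mul_le_mul_of_nonneg_left ((abs_sub _ _).trans
      (add_le_add (hsin _) (hsin _))) hcoef.le).trans ?_
    calc _ = 2 * (D.amp k * D.q k * |h| * (1 / D.freq k)) := by
          field_simp
          ring
      _ ≤ 7 * (D.amp k * D.q k * |h| * (1 / D.freq k)) := by
          gcongr
          norm_num
      _ = _ := by ring

theorem amp_mul_min_le {u : ℝ} (hu₀ : 0 ≤ u) (hu₁ : u ≤ 1) (k : ℕ) {τ : ℝ} (hτ : 0 ≤ τ) :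
    D.amp k * min τ (1 / D.freq k) ≤ τ ^ u * D.freq k ^ (u - t) := by
  have hfreq := D.freq_pos k
  have hamp := D.amp_pos k
  calc _ ≤ D.amp k * (τ ^ u * (1 / D.freq k) ^ (1 - u)) := by
        gcongr
        exact min_le_rpow_mul_rpow hτ (by positivity) hu₀ hu₁
    _ = τ ^ u * (D.freq k ^ (1 - t) * D.freq k ^ (u - 1)) := by
        rw [amp, one_div, Real.inv_rpow hfreq.le, ← Real.rpow_neg hfreq.le, neg_sub]
        ring
    _ = _ := by
        rw [← Real.rpow_add hfreq]
        ring_nf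

/-- A constant controlling the growth, at the polynomial rate `u > t`, of the dependence of the
cocycle on the base point. -/
def distortion (u : ℝ) : ℝ := ∑' k, (D.q k : ℝ) * D.freq k ^ (u - t)

theorem distortion_nonneg (u : ℝ) : 0 ≤ D.distortion u :=
  tsum_nonneg fun k => mul_nonneg (Nat.cast_nonneg _) (Real.rpow_nonneg (D.freq_pos k).le _)

theorem abs_cocycle_add_horiz_sub_le {u : ℝ} (hu : u ∈ Ioc t 1) (p : Torus2) (h : ℝ) {τ : ℝ}
    (hτ : 0 ≤ τ) :
    |D.cocycle (p + horiz h) τ - D.cocycle p τ| ≤ 7 * |h| * τ ^ u * D.distortion u := by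
  have hsum : Summable fun k => (D.q k : ℝ) * D.freq k ^ (u - t) := by
    simpa using D.summable_q_pow_mul_freq_rpow 1 (sub_pos.2 hu.1)
  have heq : D.cocycle (p + horiz h) τ - D.cocycle p τ =
      ∑' k, (D.cocycleTerm k (p + horiz h) τ - D.cocycleTerm k p τ) := by
    rw [(D.summable_cocycleTerm _ τ).tsum_sub (D.summable_cocycleTerm p τ), cocycle, cocycle]
    ring
  rw [heq, ← Real.norm_eq_abs, distortion, ← tsum_mul_left]
  refine tsum_of_norm_bounded (hsum.mul_left _).hasSum fun k => ?_
  calc _ ≤ 7 * (D.amp k * D.q k * |h|) * min τ (1 / D.freq k) :=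
        D.abs_cocycleTerm_add_horiz_sub_le k p h hτ
    _ = 7 * |h| * D.q k * (D.amp k * min τ (1 / D.freq k)) := by ring
    _ ≤ 7 * |h| * D.q k * (τ ^ u * D.freq k ^ (u - t)) := by
        refine mul_le_mul_of_nonneg_left ?_ (by positivity)
        exact D.amp_mul_min_le (D.exponent_pos.le.trans hu.1.le) hu.2 k hτ
    _ = _ := by ring

theorem exists_flow_horiz_eq (p : Torus2) :
    ∃ z ∈ Ico (0 : ℝ) 1, ∃ s ∈ Ico (0 : ℝ) 2, D.flow s (horiz z) = p := by
  obtain ⟨y, ⟨hy₀, hy₁⟩, hy⟩ := exists_mem_Ico_coe_eq p.2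
  obtain ⟨z, hz, hzp⟩ := exists_mem_Ico_coe_eq (p.1 - ((D.slope * y : ℝ) : Torus1))
  have hnear := D.nearId_cocycle (horiz z) y 0
  rw [cocycle_zero, sub_zero, sub_zero, abs_of_nonneg hy₀, abs_le] at hnear
  refine ⟨z, hz, D.cocycle (horiz z) y, ⟨by linarith, by linarith⟩, ?_⟩
  rw [flow_cocycle, horiz_apply, line_apply, hzp, hy]
  ext <;> simp

theorem norm_flow_add_horiz_sub_flow_le {u : ℝ} (hu : u ∈ Ioc t 1) (p : Torus2) (h s : ℝ)
    {s' : ℝ} (hs' : 0 ≤ s') :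
    ‖D.flow s (p + horiz h) - D.flow s' p‖ ≤
      |h| + 3 * |s - s'| + 18 * |h| * s' ^ u * D.distortion u := by
  have hdist := D.distortion_nonneg u
  have hu₀ : 0 ≤ u := D.exponent_pos.le.trans hu.1.le
  obtain ⟨hτ₁, hτ₂⟩ := D.time_mem_Icc p hs'
  have hτ : 0 ≤ D.time p s' := le_trans (by positivity) hτ₁
  have hpow : D.time p s' ^ u ≤ 10 / 9 * s' ^ u :=
    calc _ ≤ (10 / 9 * s') ^ u := by gcongr
      _ = (10 / 9) ^ u * s' ^ u := Real.mul_rpow (by norm_num) hs'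
      _ ≤ (10 / 9) ^ (1 : ℝ) * s' ^ u := by
          gcongr
          exacts [by norm_num, hu.2]
      _ = _ := by rw [Real.rpow_one]
  have heq : D.flow s (p + horiz h) - D.flow s' p =
      horiz h + D.line (D.time (p + horiz h) s - D.time p s') := by
    rw [flow_apply, flow_apply, map_sub]
    abel
  have htime := D.abs_time_sub_le (p + horiz h) p s s'
  have hcocycle := D.abs_cocycle_add_horiz_sub_le hu p h hτ
  have hmul : 7 * |h| * D.time p s' ^ u * D.distortion u ≤
      7 * |h| * (10 / 9 * s' ^ u) * D.distortion u := by gcongr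
  have hnonneg : 0 ≤ |h| * s' ^ u * D.distortion u := by positivity
  calc _ ≤ |h| + 2 * |D.time (p + horiz h) s - D.time p s'| := by
        rw [heq]
        exact (norm_add_le _ _).trans (add_le_add (norm_horiz_le h) (D.norm_line_le _))
    _ ≤ _ := by linarith [abs_nonneg (s - s')]

theorem norm_flow_flow_horiz_sub_le {u : ℝ} (hu : u ∈ Ioc t 1) (z z' s : ℝ) {s' : ℝ}
    (hs' : s' ∈ Icc 0 2) {i n : ℕ} (hin : i < n) :
    ‖D.flow i (D.flow s (horiz z)) - D.flow i (D.flow s' (horiz z'))‖ ≤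
      3 * |s - s'| + (1 + 36 * D.distortion u) * (n : ℝ) ^ u * |z - z'| := by
  have hdist := D.distortion_nonneg u
  have hu₀ : 0 ≤ u := D.exponent_pos.le.trans hu.1.le
  have hi : (i : ℝ) + 1 ≤ n := by exact_mod_cast hin
  have his' : 0 ≤ i + s' := add_nonneg (Nat.cast_nonneg i) hs'.1
  have hpow : (i + s' : ℝ) ^ u ≤ 2 * (n : ℝ) ^ u :=
    calc _ ≤ (2 * n : ℝ) ^ u := by
          gcongr
          linarith [hs'.2, i.cast_nonneg (α := ℝ)]
      _ = 2 ^ u * (n : ℝ) ^ u := Real.mul_rpow zero_le_two n.cast_nonneg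
      _ ≤ 2 ^ (1 : ℝ) * (n : ℝ) ^ u := by
          gcongr
          exacts [one_le_two, hu.2]
      _ = _ := by rw [Real.rpow_one]
  have hone : 1 ≤ (n : ℝ) ^ u :=
    Real.one_le_rpow (le_add_of_nonneg_left i.cast_nonneg |>.trans hi) hu₀
  have h := D.norm_flow_add_horiz_sub_flow_le hu (horiz z') (z - z') (i + s) his'
  rw [← map_add, add_sub_cancel, D.flow.map_add, D.flow.map_add, add_sub_add_left_eq_sub] at h
  calc _ ≤ _ := h
    _ ≤ |z - z'| * (n : ℝ) ^ u + 3 * |s - s'| +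
          18 * |z - z'| * (2 * (n : ℝ) ^ u) * D.distortion u := by
        gcongr
        exact le_mul_of_one_le_right (abs_nonneg _) hone
    _ = _ := by ring

theorem iterate_haarFlow_one (n : ℕ) (p : Torus2) :
    (D.haarFlow 1)^[n] p = D.shear (D.flow n (D.shear.symm p)) := by
  rw [iterate_flow, mul_one, haarFlow_apply]

theorem bowenCoverNum_haarFlow_le {u : ℝ} (hu : u ∈ Ioc t 1) {K : ℝ≥0}
    (hK : LipschitzWith K D.shear) {ε : ℝ} (hε : 0 < ε) {M J n : ℕ} (hM : 0 < M) (hJ : 0 < J)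
    (hMJ : K * (3 / M + (1 + 36 * D.distortion u) * (n : ℝ) ^ u / J) < ε) :
    bowenCoverNum (D.haarFlow 1) n ε ≤ (2 * M + 1) * J := by
  classical
  have hM' : (0 : ℝ) < M := Nat.cast_pos.2 hM
  have hJ' : (0 : ℝ) < J := Nat.cast_pos.2 hJ
  refine (bowenCoverNum_le_card (F := (Finset.range (2 * M + 1) ×ˢ Finset.range J).image
    fun ab => D.shear (D.flow (ab.1 / M) (horiz (ab.2 / J)))) fun y => ?_).trans
    (Finset.card_image_le.trans_eq (by simp))
  obtain ⟨z, ⟨hz₀, hz₁⟩, s, ⟨hs₀, hs₁⟩, hy⟩ := D.exists_flow_horiz_eq (D.shear.symm y)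
  obtain ⟨a, ha, has⟩ := exists_natCast_div_le_abs_sub_le hs₀ hM
  obtain ⟨b, hb, hbz⟩ := exists_natCast_div_le_abs_sub_le hz₀ hJ
  have haM : a < 2 * M + 1 := by
    have : (a : ℝ) < 2 * M := (div_lt_iff₀ hM').1 (ha.trans_lt hs₁)
    exact_mod_cast this.trans (lt_add_one _)
  have hbJ : b < J := by
    have : (b : ℝ) < 1 * J := (div_lt_iff₀ hJ').1 (hb.trans_lt hz₁)
    exact_mod_cast this.trans_eq (one_mul _)
  refine ⟨_, Finset.mem_image_of_mem _ (Finset.mk_mem_product (Finset.mem_range.2 haM)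
    (Finset.mem_range.2 hbJ)), (bowenDist_lt_iff hε).2 fun i hi => ?_⟩
  have hflow := D.norm_flow_flow_horiz_sub_le hu z (b / J) s
    ⟨by positivity, (ha.trans hs₁.le)⟩ hi
  rw [iterate_haarFlow_one, iterate_haarFlow_one, Homeomorph.symm_apply_apply, ← hy, dist_comm]
  refine (hK.dist_le_mul _ _).trans_lt (lt_of_le_of_lt ?_ hMJ)
  rw [dist_eq_norm]
  gcongr
  have hdist := D.distortion_nonneg u
  calc _ ≤ _ := hflow
    _ ≤ 3 * (1 / M) + (1 + 36 * D.distortion u) * (n : ℝ) ^ u * (1 / J) := by gcongr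
    _ = _ := by ring

theorem isBigO_bowenCoverNum_haarFlow {u : ℝ} (hu : u ∈ Ioc t 1) {ε : ℝ} (hε : 0 < ε) :
    (fun n => (bowenCoverNum (D.haarFlow 1) n ε : ℝ)) =O[atTop] fun n : ℕ => (n : ℝ) ^ u := by
  obtain ⟨K, hK⟩ := D.exists_lipschitzWith_shear
  have hdist := D.distortion_nonneg u
  have hu₀ : 0 ≤ u := D.exponent_pos.le.trans hu.1.le
  obtain ⟨M, hM⟩ := exists_nat_gt (6 * K / ε)
  have hM₀ : (0 : ℝ) < M := lt_of_le_of_lt (by positivity) hM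
  set B := 2 * K * (1 + 36 * D.distortion u) / ε with hB
  have hB₀ : 0 ≤ B := by positivity
  refine Asymptotics.IsBigO.of_bound ((2 * M + 1) * (B + 2))
    ((eventually_ge_atTop 1).mono fun n hn => ?_)
  have hW : 1 ≤ (n : ℝ) ^ u := Real.one_le_rpow (by exact_mod_cast hn) hu₀
  set W := (n : ℝ) ^ u
  set J := ⌊B * W⌋₊ + 1 with hJ
  have hJB : B * W < J := by exact_mod_cast Nat.lt_floor_add_one (B * W)
  have hJ₀ : (0 : ℝ) < J := lt_of_le_of_lt (by positivity) hJB
  have hle : (J : ℝ) ≤ (B + 2) * W := by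
    have := Nat.floor_le (a := B * W) (by positivity)
    rw [hJ]
    push_cast
    linarith
  have hMJ : K * (3 / M + (1 + 36 * D.distortion u) * W / J) < ε := by
    rw [div_lt_iff₀ hε] at hM
    have h₁ : K * (3 / M) < ε / 2 := by
      rw [mul_div_assoc', div_lt_iff₀ hM₀]
      linarith
    have h₂ : K * ((1 + 36 * D.distortion u) * W / J) < ε / 2 := by
      rw [hB, div_mul_eq_mul_div, div_lt_iff₀ hε] at hJB
      rw [mul_div_assoc', div_lt_iff₀ hJ₀]
      linarith
    linarith
  have hcard := D.bowenCoverNum_haarFlow_le hu hK hε (Nat.cast_pos.1 hM₀) (Nat.cast_pos.1 hJ₀) hMJ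
  rw [Real.norm_natCast, Real.norm_of_nonneg (zero_le_one.trans hW), mul_assoc]
  calc (bowenCoverNum (D.haarFlow 1) n ε : ℝ) ≤ (2 * M + 1) * J := by exact_mod_cast hcard
    _ ≤ _ := by gcongr

end LiouvilleData

/-! ### Lower bound for the Bowen covering numbers -/

theorem one_half_le_sin_two_pi_mul {x : ℝ} (hx : x ∈ Icc (1 / 12) (5 / 12)) :
    1 / 2 ≤ Real.sin (2 * π * x) := by
  obtain ⟨hx₀, hx₁⟩ := hx
  have hπ := Real.pi_pos
  rw [← Real.cos_pi_div_two_sub, ← Real.cos_abs, ← Real.cos_pi_div_three]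
  refine Real.cos_le_cos_of_nonneg_of_le_pi (abs_nonneg _) (by linarith) (abs_le.2 ⟨?_, ?_⟩) <;>
    nlinarith

namespace LiouvilleData

variable {t : ℝ} (D : LiouvilleData t)

theorem le_cocycleTerm_zero {k : ℕ} {τ : ℝ} (hτ : D.freq k * τ ∈ Icc (1 / 12) (5 / 12)) :
    0.07 * (D.amp k / D.freq k) ≤ D.cocycleTerm k 0 τ := by
  have hfreq := D.freq_pos k
  have hamp := D.amp_pos k
  have hsin : cocycleTerm D k 0 τ =
      D.amp k / (2 * π * D.freq k) * Real.sin (2 * π * (D.freq k * τ)) := by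
    have h₀ := circleSin_coe 0
    rw [AddCircle.coe_zero, mul_zero, Real.sin_zero] at h₀
    rw [cocycleTerm, map_zero, zero_add, h₀, sub_zero, circleSin_coe]
  have hπ : 0.07 ≤ 1 / (4 * π) := by
    rw [le_div_iff₀ (by positivity)]
    linarith [Real.pi_lt_d2]
  calc 0.07 * (D.amp k / D.freq k) ≤ 1 / (4 * π) * (D.amp k / D.freq k) := by gcongr
    _ = D.amp k / (2 * π * D.freq k) * (1 / 2) := by field_simp; norm_num
    _ ≤ D.cocycleTerm k 0 τ := by
        rw [hsin]
        exact mul_le_mul_of_nonneg_left (one_half_le_sin_two_pi_mul hτ)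
          (D.amp_div_two_pi_mul_freq_pos k).le

/-- A time, about a quarter of the period of the `k`-th term of the cocycle, at which the orbits
of `0` and of `D.halfStep k` have drifted apart. -/
def spreadTime (k : ℕ) : ℕ := ⌊1 / (4 * D.freq k)⌋₊

theorem freq_mul_spreadTime_le (k : ℕ) : D.freq k * D.spreadTime k ≤ 1 / 4 := by
  have h : (D.spreadTime k : ℝ) ≤ 1 / (4 * D.freq k) :=
    Nat.floor_le (one_div_nonneg.2 (by linarith [D.freq_pos k]))
  rw [le_div_iff₀ (by linarith [D.freq_pos k])] at h
  linarith

theorem le_freq_mul_spreadTime_add_one (k : ℕ) : 1 / 4 ≤ D.freq k * (D.spreadTime k + 1) := by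
  have h : 1 / (4 * D.freq k) < D.spreadTime k + 1 := Nat.lt_floor_add_one _
  rw [div_lt_iff₀ (by linarith [D.freq_pos k])] at h
  linarith

theorem tendsto_spreadTime : Tendsto D.spreadTime atTop atTop := by
  have hfreq : Tendsto D.freq atTop (𝓝[>] 0) :=
    tendsto_nhdsWithin_iff.2 ⟨D.tendsto_freq, Eventually.of_forall D.freq_pos⟩
  refine tendsto_nat_floor_atTop.comp ?_
  simp only [one_div, mul_inv]
  exact (tendsto_inv_nhdsGT_zero.comp hfreq).const_mul_atTop (by norm_num)

theorem spreadTime_add_one_rpow_le (k : ℕ) :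
    ((D.spreadTime k + 1 : ℕ) : ℝ) ^ t ≤ D.amp k / D.freq k := by
  have hfreq := D.freq_pos k
  rw [amp_div_freq, Real.rpow_neg hfreq.le, ← Real.inv_rpow hfreq.le]
  refine Real.rpow_le_rpow (Nat.cast_nonneg _) ?_ D.exponent_pos.le
  rw [Nat.cast_succ, ← one_div, le_div_iff₀' hfreq]
  linarith [D.freq_mul_spreadTime_le k, D.freq_le_one_div_hundred k]

theorem freq_mul_time_spreadTime_mem_Icc (k : ℕ) (p : Torus2) :
    D.freq k * D.time p (D.spreadTime k) ∈ Icc (1 / 12) (5 / 12) := by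
  obtain ⟨h₀, h₁⟩ := D.time_mem_Icc p (Nat.cast_nonneg (D.spreadTime k))
  have h₂ := mul_le_mul_of_nonneg_left h₀ (D.freq_pos k).le
  have h₃ := mul_le_mul_of_nonneg_left h₁ (D.freq_pos k).le
  constructor <;>
    linarith [D.freq_mul_spreadTime_le k, D.le_freq_mul_spreadTime_add_one k,
      D.freq_le_one_div_hundred k]

theorem one_le_amp_div_freq (k : ℕ) : 1 ≤ D.amp k / D.freq k := by
  rw [amp_div_freq, Real.rpow_neg (D.freq_pos k).le]
  exact (one_le_inv₀ (Real.rpow_pos_of_pos (D.freq_pos k) t)).2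
    (Real.rpow_le_one (D.freq_pos k).le (D.freq_le_one k) D.exponent_pos.le)

theorem eventually_abs_spreadTime_sub_le :
    ∀ᶠ k in atTop, ∀ p, |D.spreadTime k - D.time p (D.spreadTime k) -
      D.cocycleTerm k p (D.time p (D.spreadTime k))| ≤ 0.01 * (D.amp k / D.freq k) := by
  filter_upwards [D.tendsto_sum_amp_div_freq_div.eventually_le_const
    (show (0 : ℝ) < 0.005 by norm_num)] with k hsum p
  have hone := D.one_le_amp_div_freq k
  rw [div_le_iff₀ (by linarith)] at hsum
  have hcocycle := D.abs_cocycle_sub_sub_cocycleTerm_le k p (D.time p (D.spreadTime k))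
  have htime : 0 ≤ D.time p (D.spreadTime k) :=
    le_trans (by positivity) (D.time_mem_Icc p (Nat.cast_nonneg _)).1
  rw [cocycle_time, abs_of_nonneg htime] at hcocycle
  have hsq : D.time p (D.spreadTime k) * D.freq k ^ 2 ≤ 5 / 12 * (1 / 100) := by
    calc _ = D.freq k * D.time p (D.spreadTime k) * D.freq k := by ring
      _ ≤ _ := mul_le_mul (D.freq_mul_time_spreadTime_mem_Icc k p).2
        (D.freq_le_one_div_hundred k) (D.freq_pos k).le (by norm_num)
  linarith

theorem eventually_le_time_halfStep_sub_time_zero :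
    ∀ᶠ k in atTop, 1 / 10 * ((D.spreadTime k + 1 : ℕ) : ℝ) ^ t ≤
      D.time (D.halfStep k) (D.spreadTime k) - D.time 0 (D.spreadTime k) := by
  filter_upwards [D.eventually_abs_spreadTime_sub_le] with k hk
  have h₀ := D.le_cocycleTerm_zero (D.freq_mul_time_spreadTime_mem_Icc k 0)
  have h₁ := D.le_cocycleTerm_zero (D.freq_mul_time_spreadTime_mem_Icc k (D.halfStep k))
  have hneg := D.cocycleTerm_add_halfStep_self k 0 (D.time (D.halfStep k) (D.spreadTime k))
  have hclose₀ := (abs_le.1 (hk 0)).1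
  have hclose₁ := (abs_le.1 (hk (D.halfStep k))).2
  rw [zero_add] at hneg
  linarith [D.spreadTime_add_one_rpow_le k, D.one_le_amp_div_freq k]

theorem abs_time_horiz_sub_le_of_bowenDist_lt {K : ℝ≥0} (hK : LipschitzWith K D.shear.symm)
    {ε : ℝ} (hε : 0 < ε) (hKε : K * (2 * ε) ≤ 1 / 10) {n : ℕ} {y : Torus2} {z z' : ℝ}
    (hz : bowenDist (D.haarFlow 1) n y (D.shear (horiz z)) < ε)
    (hz' : bowenDist (D.haarFlow 1) n y (D.shear (horiz z')) < ε) {i : ℕ} (hi : i < n) :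
    |D.time (horiz z) i - D.time (horiz z') i| ≤ 1 / 10 := by
  rw [bowenDist_lt_iff hε] at hz hz'
  have hcircle {j : ℕ} (hj : j < n) :
      ‖((D.time (horiz z) j - D.time (horiz z') j : ℝ) : Torus1)‖ ≤ 1 / 10 := by
    calc _ = ‖(D.flow j (horiz z) - D.flow j (horiz z')).2‖ := by
          simp [flow_apply, line_apply, horiz_apply]
      _ ≤ dist (D.flow j (horiz z)) (D.flow j (horiz z')) := by
          rw [dist_eq_norm]
          exact norm_snd_le _
      _ ≤ K * dist ((D.haarFlow 1)^[j] (D.shear (horiz z)))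
            ((D.haarFlow 1)^[j] (D.shear (horiz z'))) := by
          simpa [iterate_haarFlow_one] using hK.dist_le_mul (D.shear (D.flow j (horiz z)))
            (D.shear (D.flow j (horiz z')))
      _ ≤ K * (2 * ε) := by
          gcongr
          linarith [dist_triangle_left ((D.haarFlow 1)^[j] (D.shear (horiz z)))
            ((D.haarFlow 1)^[j] (D.shear (horiz z'))) ((D.haarFlow 1)^[j] y), hz j hj, hz' j hj]
      _ ≤ _ := hKε
  -- The real difference starts at `0` and moves by less than `2 / 5` in each step, so it cannot
  -- leave the interval `[-1 / 2, 1 / 2]`, where it is determined by its class in the circle.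
  induction i with
  | zero => simp
  | succ i ih =>
    have hprev := abs_le.1 (ih ((Nat.lt_succ_self i).trans hi))
    have hstep := D.time_mem_Icc (D.flow i (horiz z)) zero_le_one
    have hstep' := D.time_mem_Icc (D.flow i (horiz z')) zero_le_one
    refine ((AddCircle.norm_coe_eq_abs_iff 1 one_ne_zero).2 ?_).symm.trans_le (hcircle hi)
    rw [Nat.cast_succ, time_add, time_add, ← flow_apply, ← flow_apply, abs_le, abs_one]
    constructor <;> linarith [hstep.1, hstep.2, hstep'.1, hstep'.2]

theorem exists_time_horiz_eq {k n : ℕ} {τ : ℝ} (hτ₀ : D.time 0 n ≤ τ)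
    (hτ₁ : τ ≤ D.time (D.halfStep k) n) : ∃ z, D.time (horiz z) n = τ := by
  have hcont : Continuous fun z => D.time (horiz z) n := by fun_prop
  have hτ : τ ∈ Icc (D.time (horiz 0) n) (D.time (horiz (1 / (2 * D.q k))) n) :=
    ⟨by rwa [map_zero], hτ₁⟩
  exact intermediate_value_univ _ _ hcont hτ

theorem le_bowenCoverNum_haarFlow {K : ℝ≥0} (hK : LipschitzWith K D.shear.symm) {ε : ℝ}
    (hε : 0 < ε) (hKε : K * (2 * ε) ≤ 1 / 10) {k m : ℕ} {ℓ : ℝ} (hℓ : 0 ≤ ℓ)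
    (hspread : ℓ ≤ D.time (D.halfStep k) m - D.time 0 m) :
    5 * ℓ ≤ bowenCoverNum (D.haarFlow 1) (m + 1) ε := by
  have hmem (j : ℕ) (hj : j ∈ Finset.range (⌊5 * ℓ⌋₊ + 1)) :
      ∃ z, D.time (horiz z) m = D.time 0 m + j / 5 := by
    have hjℓ : (j : ℝ) ≤ 5 * ℓ := (Nat.cast_le.2 (Finset.mem_range_succ_iff.1 hj)).trans
      (Nat.floor_le (by positivity))
    exact D.exists_time_horiz_eq (k := k) (le_add_of_nonneg_right (by positivity)) (by linarith)
  choose! z hz using hmem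
  have hcard := card_le_bowenCoverNum (T := D.haarFlow 1) (n := m + 1)
    (D.haarFlow.toHomeomorph 1).continuous hε (s := Finset.range (⌊5 * ℓ⌋₊ + 1))
    (x := fun j => D.shear (horiz (z j))) fun i hi j hj y hyi hyj => by
      have hclose := D.abs_time_horiz_sub_le_of_bowenDist_lt hK hε hKε hyi hyj m.lt_succ_self
      rw [hz i hi, hz j hj, add_sub_add_left_eq_sub, ← sub_div, abs_div,
        abs_of_pos (by norm_num : (0 : ℝ) < 5), div_le_iff₀ (by norm_num)] at hclose
      have hlt : |(i : ℤ) - j| < 1 := by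
        exact_mod_cast (hclose.trans_lt (by norm_num) : |(i : ℝ) - j| < 1)
      rwa [Int.abs_lt_one_iff, sub_eq_zero, Nat.cast_inj] at hlt
  rw [Finset.card_range] at hcard
  exact (Nat.lt_floor_add_one (5 * ℓ)).le.trans (by exact_mod_cast hcard)

theorem eventually_frequently_le_bowenCoverNum_haarFlow :
    ∀ᶠ ε in 𝓝[>] (0 : ℝ), ∃ᶠ n : ℕ in atTop,
      1 / 2 * (n : ℝ) ^ t ≤ bowenCoverNum (D.haarFlow 1) n ε := by
  obtain ⟨K, hK⟩ := D.exists_lipschitzWith_shear_symm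
  have hlim : Tendsto (fun ε : ℝ => K * (2 * ε)) (𝓝[>] 0) (𝓝 0) :=
    (Continuous.tendsto' (by fun_prop) 0 0 (by simp)).mono_left nhdsWithin_le_nhds
  filter_upwards [hlim.eventually_le_const (by norm_num : (0 : ℝ) < 1 / 10), self_mem_nhdsWithin]
    with ε hKε hε
  refine ((tendsto_add_atTop_nat 1).comp D.tendsto_spreadTime).frequently
    (Eventually.frequently ?_)
  filter_upwards [D.eventually_le_time_halfStep_sub_time_zero] with k hk
  calc _ = 5 * (1 / 10 * ((D.spreadTime k + 1 : ℕ) : ℝ) ^ t) := by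
        rw [← mul_assoc]
        norm_num
    _ ≤ _ := D.le_bowenCoverNum_haarFlow hK hε hKε (by positivity) hk

theorem hasUpperTopSlowEntropy_haarFlow_one {t : ℝ} (D : LiouvilleData t) :
    HasUpperTopSlowEntropy (D.haarFlow 1) polScale t := by
  refine hasUpperTopSlowEntropy_polScale D.exponent_pos ?_ one_half_pos
    D.eventually_frequently_le_bowenCoverNum_haarFlow
  filter_upwards [Ioc_mem_nhdsGT D.exponent_lt_one] with u hu ε hε
  exact D.isBigO_bowenCoverNum_haarFlow hu hε

end LiouvilleData

end

theorem IsCkTorusDiffeo.mono {k l : ℕ∞} (hkl : k ≤ l) {T : Torus2 → Torus2}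
    (hT : IsCkTorusDiffeo l T) : IsCkTorusDiffeo k T := by
  obtain ⟨hbij, ⟨F, hF, hFT⟩, G, hG, hGT⟩ := hT
  exact ⟨hbij, ⟨F, hF.of_le (by exact_mod_cast hkl), hFT⟩, G, hG.of_le (by exact_mod_cast hkl), hGT⟩

theorem stmt2_general (t : ℝ) (ht0 : 0 < t) (ht1 : t < 1) :
    ∃ T : Torus2 → Torus2, IsCkTorusDiffeo ⊤ T ∧ MeasurePreserving T volume volume ∧
      WeaklyMixing T volume ∧ HasUpperTopSlowEntropy T polScale t := by
  obtain ⟨D⟩ := nonempty_liouvilleData ht0 ht1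
  exact ⟨D.haarFlow 1, D.isCkTorusDiffeo_haarFlow 1, D.measurePreserving_haarFlow 1,
    D.weaklyMixing_haarFlow_one, D.hasUpperTopSlowEntropy_haarFlow_one⟩

/-- For every integer `K > 1` there exists a weakly mixing `C^K`
volume-preserving diffeomorphism `T` of `𝕋²` whose upper topological slow entropy `E`
with respect to the polynomial scaling family `a^{pol}_m(t) = m^t` satisfies
`1/K⁵ ≤ E < 1/(K⁵ - 2)`. -/
theorem stmt2 (K : ℕ) (hK : 1 < K) :
    ∃ T : Torus2 → Torus2,
      IsCkTorusDiffeo (K : ℕ∞) T ∧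
      MeasurePreserving T (volume : Measure Torus2) volume ∧
      WeaklyMixing T (volume : Measure Torus2) ∧
      ∃ E : ℝ,
        Filter.Tendsto (topSlowEntFun T polScale) (𝓝[>] (0 : ℝ)) (𝓝 E) ∧
        1 / (K : ℝ) ^ 5 ≤ E ∧ E < 1 / ((K : ℝ) ^ 5 - 2) := by
  have hpow : (2 : ℝ) ^ 5 ≤ (K : ℝ) ^ 5 := by gcongr; exact_mod_cast hK
  obtain ⟨T, hdiffeo, hpres, hmix, hent⟩ := stmt2_general (1 / (K : ℝ) ^ 5) (by positivity)
    ((div_lt_one (by positivity)).2 (by linarith))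
  exact ⟨T, hdiffeo.mono le_top, hpres, hmix, _, hent, le_rfl,
    one_div_lt_one_div_of_lt (by linarith) (by linarith)⟩
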